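/- In every web Γ = (D, A, B) there exists a strongly maximal A–B-warp: an A–B-warp Y such that for every A–B-warp U the cardinality of Y \ U is at least the cardinality of U \ Y. -/

import Mathlib

/-!
The proof goes through the Erdős–Menger property of webs (the theorem of Aharoni and Berger):
`exists_orthogonal` provides disjoint `A`–`B` paths and a set `S` separating `A` from `B` such that
each path contains exactly one vertex of `S` and every vertex of `S` lies on one of the paths. The
set `Y` of these paths is strongly maximal: a path `p ∈ U \ Y` contains a vertex `s ∈ S`, and the
path of `Y` through `s` is not in `U`, since the paths of `U` are disjoint and `p` is the one
through `s`. Distinct `p` give distinct `s`, so this is an injection from `U \ Y` into `Y \ U`.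

**Waves.** A wave is encoded by a region `R` missing `B`, together with a system of disjoint paths
(a vertex set `D` with a predecessor map `π`) starting in `A`, running inside `R`, and ending in
every vertex of the boundary `bd R`; see `IsLk`. A web is hindered (`Hind`) if some wave leaves a
source of its region unused. There is a largest wave region `Rm Γ`, and the quotient of `Γ` by it is
unhindered (`quot_Rm_unhind`). With `S = bd (Rm Γ)` it remains to link all sources of an unhindered
web to its targets (`exists_link`) and to glue this linkage to the maximal wave.

**One source.** In an unhindered web every source `a` is joined to `B` by a finite path whose
deletion leaves the web unhindered (`exists_path_unhind`). Starting with `a`, one deletes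
out-neighbours of deleted vertices that lie outside the largest wave of what is left (`Leg`); such
deletions never create a hindrance. If `B` could not be reached in this way, a maximal set of
deleted vertices, obtained from Zorn's lemma for a suitable order `Ext`, would turn the largest wave
of the remaining web into a hindrance of `Γ` (`not_stuck`).

**Infinitely many sources.** A position (`Pos`) is a set `N` of removed vertices with a wave of
`Γ - N`; refining it means removing further whole paths and extending the wave. It misses a source
if that source lies in the region but no path from it ends on the boundary. Alternating walks from
the missed source reach some of the removed vertices (`Pos.β`), as otherwise the web would be
hindered. By `assembly`, no nonempty class of small positions with a missed source can be such that
each reached vertex `b` stays reachable within the class below every small refinement: otherwise the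
waves of a long decreasing sequence of positions, switched along alternating walks, fit together
into a hindrance of `Γ`. Hence the missed positions carry an ordinal rank (`rk`), and a position at
which the rank is stabilised at every removed vertex (`Full`) misses no source and leaves an
unhindered quotient (`Full.good`). For uncountable regular `λ`, full positions with fewer than `λ`
removed vertices can be found below any such position and are closed under limits shorter than `λ`.

Finally, every vertex set lies in the removed set of a good position inside which all sources are
linked to `B` (`Cov`). This is proved by induction on the size of the set (`covLt_succ`): finite sets
come from the one-source step, for regular sizes one runs through a decreasing chain of linked
positions while a chain of full positions for the successor cardinal ensures that the limit is good,
and for singular sizes countably many rounds of covers of smaller size are interleaved. The whole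
vertex set gives `exists_link`.
-/

namespace ErdosMenger

variable {V : Type*}

/-- A finite path in a digraph with edge relation `E`: a nonempty list of
distinct vertices, each consecutive pair of which is a directed edge. -/
def IsFinPath (E : V → V → Prop) (p : List V) : Prop :=
  p ≠ [] ∧ p.Nodup ∧ p.Chain' E

/-- An `X`–`Y` path: a finite path starting in `X` and ending in `Y`. -/
def IsXYPath (E : V → V → Prop) (X Y : Set V) (p : List V) : Prop :=
  IsFinPath E p ∧ (∃ x ∈ X, p.head? = some x) ∧ (∃ y ∈ Y, p.getLast? = some y)

/-- `S` is `X`–`Y`-separating: every `X`–`Y` path contains a vertex of `S`. -/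
def Separates (E : V → V → Prop) (X Y S : Set V) : Prop :=
  ∀ p : List V, IsXYPath E X Y p → ∃ s ∈ S, s ∈ p


/-- A path in a digraph: either finite (a list of vertices) or infinite
(a sequence of vertices). -/
inductive GPath (V : Type*) where
  | fin : List V → GPath V
  | inf : (ℕ → V) → GPath V

namespace GPath

variable {V : Type*}

/-- The predicate that a `GPath` really is a path of the digraph with edge
relation `E`: finite paths are nonempty lists of distinct vertices whose
consecutive pairs are edges; infinite paths are injective sequences whose
consecutive pairs are edges. -/
def IsPath (E : V → V → Prop) : GPath V → Prop
  | .fin l => l ≠ [] ∧ l.Nodup ∧ l.Chain' E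
  | .inf f => Function.Injective f ∧ ∀ n, E (f n) (f (n + 1))

/-- The vertex set of a path. -/
def verts : GPath V → Set V
  | .fin l => {v | v ∈ l}
  | .inf f => Set.range f

/-- The initial vertex of a path. -/
def initv : GPath V → Option V
  | .fin l => l.head?
  | .inf f => some (f 0)

/-- The terminal vertex of a (finite) path. -/
def terv : GPath V → Option V
  | .fin l => l.getLast?
  | .inf _ => none

/-- The edge set of a path. -/
def edges : GPath V → Set (V × V)
  | .fin l => {e | e ∈ l.zip l.tail}
  | .inf f => {e | ∃ n, e = (f n, f (n + 1))}

end GPath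

variable {V : Type*}

/-- `in[W]`: the set of initial vertices of the paths of `W`. -/
def warpIn (W : Set (GPath V)) : Set V := {v | ∃ P ∈ W, P.initv = some v}

/-- `ter[W]`: the set of terminal vertices of the finite paths of `W`. -/
def warpTer (W : Set (GPath V)) : Set V := {v | ∃ P ∈ W, P.terv = some v}

/-- `V[W]`: the set of vertices appearing on paths of `W`. -/
def warpVerts (W : Set (GPath V)) : Set V := {v | ∃ P ∈ W, v ∈ P.verts}

/-- `E[W]`: the set of edges appearing on paths of `W`. -/
def warpEdges (W : Set (GPath V)) : Set (V × V) := {e | ∃ P ∈ W, e ∈ P.edges}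

/-- A web `Γ = (D, A, B)`: a digraph together with vertex sets `A` and `B`,
such that no edge enters `A` and no edge leaves `B`. -/
structure Web (V : Type*) where
  Adj : V → V → Prop
  A : Set V
  B : Set V
  not_into_A : ∀ u v, Adj u v → v ∉ A
  not_from_B : ∀ u v, Adj u v → u ∉ B

namespace Web

variable (Γ : Web V)

/-- A warp: a set of pairwise vertex-disjoint paths of the web. -/
def IsWarp (W : Set (GPath V)) : Prop :=
  (∀ P ∈ W, P.IsPath Γ.Adj) ∧
    ∀ P ∈ W, ∀ Q ∈ W, P ≠ Q → ∀ v, v ∈ P.verts → v ∉ Q.verts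

/-- A wave: an `A`-starting warp `W` such that `ter[W]` is `A`–`B`-separating. -/
def IsWave (W : Set (GPath V)) : Prop :=
  Γ.IsWarp W ∧ warpIn W ⊆ Γ.A ∧ Separates Γ.Adj Γ.A Γ.B (warpTer W)

/-- A hindrance: a wave with `in[W] ≠ A`. -/
def IsHindrance (W : Set (GPath V)) : Prop :=
  Γ.IsWave W ∧ warpIn W ≠ Γ.A

/-- A web is hindered if it contains a hindrance. -/
def Hindered : Prop := ∃ W, Γ.IsHindrance W

/-- An `A`–`B`-warp: a set of pairwise disjoint finite `A`–`B` paths, each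
meeting `A ∪ B` only at its endpoints. -/
def IsABWarp (𝒲 : Set (List V)) : Prop :=
  (∀ p ∈ 𝒲, IsXYPath Γ.Adj Γ.A Γ.B p) ∧
    (∀ p ∈ 𝒲, ∀ v ∈ p, v ∈ Γ.A ∪ Γ.B → p.head? = some v ∨ p.getLast? = some v) ∧
    ∀ p ∈ 𝒲, ∀ q ∈ 𝒲, p ≠ q → ∀ v, v ∈ p → v ∉ q

/-- A linkage of `Γ`: an `A`–`B`-warp whose set of initial vertices is all of `A`. -/
def IsLinkage (𝒲 : Set (List V)) : Prop :=
  Γ.IsABWarp 𝒲 ∧ {v | ∃ p ∈ 𝒲, p.head? = some v} = Γ.A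

/-- A web is linkable if it has a linkage. -/
def Linkable : Prop := ∃ 𝒲, Γ.IsLinkage 𝒲

/-- The web `Γ − X` obtained by deleting the vertices of `X`. -/
def delete (X : Set V) : Web V where
  Adj u v := Γ.Adj u v ∧ u ∉ X ∧ v ∉ X
  A := Γ.A \ X
  B := Γ.B \ X
  not_into_A := fun u v h hv => Γ.not_into_A u v h.1 hv.1
  not_from_B := fun u v h hu => Γ.not_from_B u v h.1 hu.1

end Web


section

universe u
open Cardinal

/-! ### Waves as path systems with a region -/

section

namespace Web
variable {V : Type*}

/-- The vertex boundary of a region `R`: the sources and out-neighbours of `R` lying outside `R`. -/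
def bd (Γ : Web V) (R : Set V) : Set V := {v | (v ∈ Γ.A ∨ ∃ u ∈ R, Γ.Adj u v) ∧ v ∉ R}

/-- A system of disjoint finite paths starting in `A`, encoded by its vertex set `D` and its
predecessor map `π`. -/
structure Sys (Γ : Web V) (D : Set V) (π : V → V) : Prop where
  src : ∀ a ∈ D, a ∈ Γ.A → π a = a
  cl : ∀ v ∈ D, v ∉ Γ.A → π v ∈ D
  adj : ∀ v ∈ D, v ∉ Γ.A → Γ.Adj (π v) v
  inj : ∀ v ∈ D, ∀ w ∈ D, v ∉ Γ.A → w ∉ Γ.A → π v = π w → v = w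
  fin : ∀ v ∈ D, ∃ n, π^[n] v ∈ Γ.A

/-- A wave, encoded by the region `R` it cuts off and a path system `(D, π)` inside
`R ∪ bd R` which covers the boundary of `R` by its terminal vertices. -/
structure IsLk (Γ : Web V) (R D : Set V) (π : V → V) : Prop extends Sys Γ D π where
  avoid : ∀ v ∈ R, v ∉ Γ.B
  pred : ∀ v ∈ D, v ∉ Γ.A → π v ∈ R
  bdD : ∀ v ∈ Γ.bd R, v ∈ D
  sub : ∀ v ∈ D, v ∈ R ∨ v ∈ Γ.bd R

/-- The web is hindered: some wave leaves a source of its region unused. -/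
def Hind (Γ : Web V) : Prop :=
  ∃ R D π h, IsLk Γ R D π ∧ h ∈ Γ.A ∧ h ∈ R ∧ h ∉ D

/-- The quotient of a web by a region: the region is deleted, and its boundary becomes the new
set of sources. -/
def quot (Γ : Web V) (R : Set V) : Web V where
  Adj u v := Γ.Adj u v ∧ u ∉ R ∧ v ∉ R ∧ v ∉ Γ.bd R
  A := Γ.bd R
  B := Γ.B \ R
  not_into_A := fun _ _ h => h.2.2.2
  not_from_B := fun u v h hu => Γ.not_from_B u v h.1 hu.1

variable {Γ : Web V}

theorem mem_bd {R : Set V} {v : V} :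
    v ∈ Γ.bd R ↔ (v ∈ Γ.A ∨ ∃ u ∈ R, Γ.Adj u v) ∧ v ∉ R := Iff.rfl

theorem Sys.cl' {D : Set V} {π : V → V} (h : Sys Γ D π) {v : V} (hv : v ∈ D) : π v ∈ D := by
  by_cases ha : v ∈ Γ.A
  · rw [h.src v hv ha]; exact hv
  · exact h.cl v hv ha

theorem Sys.iter {D : Set V} {π : V → V} (h : Sys Γ D π) {v : V} (hv : v ∈ D) (n : ℕ) :
    π^[n] v ∈ D := by
  induction n with
  | zero => exact hv
  | succ n ih => rw [Function.iterate_succ_apply']; exact h.cl' ih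

theorem Sys.iterA {D : Set V} {π : V → V} (h : Sys Γ D π) {v : V} (hv : v ∈ D) (ha : v ∈ Γ.A)
    (n : ℕ) : π^[n] v = v := by
  induction n with
  | zero => rfl
  | succ n ih => rw [Function.iterate_succ_apply', ih, h.src v hv ha]

theorem reach_step {S : Set V} {π : V → V} {v : V} (h : ∃ n, π^[n] (π v) ∈ S) :
    ∃ n, π^[n] v ∈ S := by
  obtain ⟨n, hn⟩ := h
  exact ⟨n + 1, by rwa [Function.iterate_succ_apply]⟩

/-- Induction along a path system, from the sources outwards. -/
theorem Sys.ind {D : Set V} {π : V → V} (h : Sys Γ D π) {P : V → Prop}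
    (base : ∀ a ∈ D, a ∈ Γ.A → P a) (step : ∀ v ∈ D, v ∉ Γ.A → P (π v) → P v) :
    ∀ v ∈ D, P v := by
  intro v hv
  obtain ⟨n, hn⟩ := h.fin v hv
  induction n generalizing v with
  | zero => exact base v hv hn
  | succ n ih =>
    rw [Function.iterate_succ_apply] at hn
    by_cases ha : v ∈ Γ.A
    · exact base v hv ha
    · exact step v hv ha (ih _ (h.cl v hv ha) hn)

/-- Induction towards a set `C` which every iteration of `π` reaches. -/
theorem reach_ind {C D : Set V} {π : V → V} {P : V → Prop}
    (fin : ∀ v ∈ D, ∃ n, π^[n] v ∈ C)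
    (base : ∀ v ∈ D, v ∈ C → P v) (step : ∀ v ∈ D, v ∉ C → π v ∈ D ∧ (P (π v) → P v)) :
    ∀ v ∈ D, P v := by
  intro v hv
  obtain ⟨n, hn⟩ := fin v hv
  induction n generalizing v with
  | zero => exact base v hv hn
  | succ n ih =>
    rw [Function.iterate_succ_apply] at hn
    by_cases ha : v ∈ C
    · exact base v hv ha
    · exact (step v hv ha).2 (ih _ (step v hv ha).1 hn)

open Classical in
/-- The source of the path of a system through a given vertex. -/
noncomputable def root (A : Set V) (π : V → V) (v : V) : V :=
  if h : ∃ n, π^[n] v ∈ A then π^[Nat.find h] v else v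

theorem root_of_mem {A : Set V} {π : V → V} {v : V} (h : v ∈ A) : root A π v = v := by
  classical
  have h' : ∃ n, π^[n] v ∈ A := ⟨0, h⟩
  have : Nat.find h' = 0 := by rw [Nat.find_eq_zero]; exact h
  simp [root, h', this]

theorem root_step {A : Set V} {π : V → V} {v : V} (hv : v ∉ A) (hr : ∃ n, π^[n] v ∈ A) :
    root A π v = root A π (π v) := by
  classical
  obtain ⟨n, hn⟩ := hr
  have h1 : ∃ n, π^[n] v ∈ A := ⟨n, hn⟩
  have h2 : ∃ n, π^[n] (π v) ∈ A := by
    cases n with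
    | zero => exact absurd hn hv
    | succ n => exact ⟨n, by rwa [Function.iterate_succ_apply] at hn⟩
  have h3 : Nat.find h1 = Nat.find h2 + 1 := by
    rw [Nat.find_comp_succ h1 (by simpa [Function.iterate_succ_apply] using h2) (by simpa using hv)]
    rfl
  simp only [root, h1, h2, dif_pos, h3, Function.iterate_succ_apply]

theorem Sys.root_pred {D : Set V} {π : V → V} (h : Sys Γ D π) {v : V} (hv : v ∈ D) :
    root Γ.A π (π v) = root Γ.A π v := by
  by_cases ha : v ∈ Γ.A
  · rw [h.src v hv ha]
  · exact (root_step ha (h.fin v hv)).symm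

theorem Sys.root_mem {D : Set V} {π : V → V} (h : Sys Γ D π) {v : V} (hv : v ∈ D) :
    root Γ.A π v ∈ Γ.A ∧ root Γ.A π v ∈ D := by
  refine h.ind (P := fun v => root Γ.A π v ∈ Γ.A ∧ root Γ.A π v ∈ D) ?_ ?_ v hv
  · intro a ha haA; rw [root_of_mem haA]; exact ⟨haA, ha⟩
  · intro v hv ha ih; rwa [h.root_pred hv] at ih

theorem Sys.root_iter {D : Set V} {π : V → V} (h : Sys Γ D π) {v : V} (hv : v ∈ D) (n : ℕ) :
    root Γ.A π (π^[n] v) = root Γ.A π v := by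
  induction n with
  | zero => rfl
  | succ n ih => rw [Function.iterate_succ_apply', h.root_pred (h.iter hv n), ih]

theorem Sys.exists_root {D : Set V} {π : V → V} (h : Sys Γ D π) {v : V} (hv : v ∈ D) :
    ∃ n, π^[n] v = root Γ.A π v := by
  obtain ⟨n, hn⟩ := h.fin v hv
  exact ⟨n, by rw [← h.root_iter hv n, root_of_mem hn]⟩

theorem Sys.root_eq_iff {D : Set V} {π : V → V} (h : Sys Γ D π) {v a : V} (hv : v ∈ D)
    (ha : a ∈ Γ.A) : root Γ.A π v = a ↔ ∃ n, π^[n] v = a := by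
  constructor
  · rintro rfl; exact h.exists_root hv
  · rintro ⟨n, rfl⟩; rw [← h.root_iter hv n, root_of_mem ha]

/-- Two vertices of a path system with the same source lie on one path. -/
theorem Sys.comparable {D : Set V} {π : V → V} (h : Sys Γ D π) {v w : V} (hv : v ∈ D)
    (hw : w ∈ D) (e : root Γ.A π v = root Γ.A π w) :
    (∃ n, π^[n] v = w) ∨ ∃ n, π^[n] w = v := by
  revert w
  refine h.ind (P := fun v => ∀ {w}, w ∈ D → root Γ.A π v = root Γ.A π w →
    (∃ n, π^[n] v = w) ∨ ∃ n, π^[n] w = v) ?_ ?_ v hv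
  · intro a ha haA w hw e
    right
    rw [root_of_mem haA] at e
    rw [e]; exact h.exists_root hw
  · intro v hv hvA ih w hw e
    rw [← h.root_pred hv] at e
    rcases ih hw e with ⟨n, hn⟩ | ⟨n, hn⟩
    · left; exact ⟨n + 1, by rwa [Function.iterate_succ_apply]⟩
    · cases n with
      | zero => left; exact ⟨1, by simpa using hn.symm⟩
      | succ n =>
        rw [Function.iterate_succ_apply'] at hn
        by_cases hA : π^[n] w ∈ Γ.A
        · rw [h.src _ (h.iter hw n) hA] at hn
          have : root Γ.A π w = π^[n] w := by rw [← h.root_iter hw n, root_of_mem hA]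
          -- `π v` is a source, namely the source of `w`
          have hvr : π v ∈ Γ.A := hn ▸ hA
          by_cases hwA : w ∈ Γ.A
          · refine Or.inl ⟨1, ?_⟩
            have := h.iterA hw hwA n
            simp only [Function.iterate_one]; rw [← hn, this]
          · -- walk up from the source: compare first positions where iteration meets it
            classical
            have h1 : ∃ k, π^[k] w ∈ Γ.A := ⟨n, hA⟩
            have hk := Nat.find_spec h1
            have hk0 : Nat.find h1 ≠ 0 := by
              intro h0; rw [h0] at hk; exact hwA hk
            obtain ⟨k, hkk⟩ := Nat.exists_eq_succ_of_ne_zero hk0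
            have hk' : π^[k] w ∉ Γ.A := Nat.find_min h1 (by omega)
            have e1 : π (π^[k] w) = π v := by
              rw [← Function.iterate_succ_apply' π k w, ← hkk, ← hn, ← this,
                ← h.root_iter hw (Nat.find h1), root_of_mem hk]
            exact Or.inr ⟨k, h.inj _ (h.iter hw k) _ hv hk' hvA e1⟩
        · right; exact ⟨n, h.inj _ (h.iter hw n) _ hv hA hvA hn⟩

theorem IsLk.anc {R D : Set V} {π : V → V} (h : IsLk Γ R D π) {v : V} (hv : v ∈ D) (n : ℕ) :
    π^[n] v = v ∨ π^[n] v ∈ R := by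
  induction n with
  | zero => exact Or.inl rfl
  | succ n ih =>
    rw [Function.iterate_succ_apply']
    have h1 := h.toSys.iter hv n
    by_cases hA : π^[n] v ∈ Γ.A
    · rw [h.src _ h1 hA]; exact ih
    · exact Or.inr (h.pred _ h1 hA)

/-- Distinct boundary vertices lie on distinct paths of a wave. -/
theorem IsLk.bd_root_inj {R D : Set V} {π : V → V} (h : IsLk Γ R D π) {v w : V}
    (hv : v ∈ Γ.bd R) (hw : w ∈ Γ.bd R) (e : root Γ.A π v = root Γ.A π w) : v = w := by
  rcases h.toSys.comparable (h.bdD v hv) (h.bdD w hw) e with ⟨n, hn⟩ | ⟨n, hn⟩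
  · rcases h.anc (h.bdD v hv) n with h1 | h1
    · rw [← hn, h1]
    · rw [hn] at h1; exact absurd h1 hw.2
  · rcases h.anc (h.bdD w hw) n with h1 | h1
    · rw [← hn, h1]
    · rw [hn] at h1; exact absurd h1 hv.2

/-- Removing the path of a source from a path system. -/
theorem Sys.drop {D : Set V} {π : V → V} (h : Sys Γ D π) (X : Set V) :
    Sys Γ {v | v ∈ D ∧ root Γ.A π v ∉ X} π where
  src := fun a ha => h.src a ha.1
  cl := fun v hv hA => ⟨h.cl v hv.1 hA, by rw [h.root_pred hv.1]; exact hv.2⟩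
  adj := fun v hv => h.adj v hv.1
  inj := fun v hv w hw => h.inj v hv.1 w hw.1
  fin := fun v hv => h.fin v hv.1

theorem IsLk.drop {R D : Set V} {π : V → V} (h : IsLk Γ R D π) (X : Set V)
    (hX : ∀ v ∈ Γ.bd R, root Γ.A π v ∉ X) :
    IsLk Γ R {v | v ∈ D ∧ root Γ.A π v ∉ X} π where
  toSys := h.toSys.drop X
  avoid := h.avoid
  pred := fun v hv => h.pred v hv.1
  bdD := fun v hv => ⟨h.bdD v hv, hX v hv⟩
  sub := fun v hv => h.sub v hv.1

/-- A wave one of whose sources is not the source of a boundary vertex yields a hindrance. -/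
theorem hind_of_miss {R D : Set V} {π : V → V} (h : IsLk Γ R D π) {a : V} (ha : a ∈ Γ.A)
    (haR : a ∈ R) (hm : ∀ v ∈ Γ.bd R, root Γ.A π v ≠ a) : Hind Γ := by
  refine ⟨R, _, π, a, h.drop {a} (by simpa using hm), ha, haR, ?_⟩
  rintro ⟨-, h2⟩
  exact h2 (root_of_mem ha)

open Classical in
/-- Gluing a further region `U`, with a path system coming out of `R₃ ∪ bd R₃`, to a wave. -/
theorem IsLk.glue {R₃ D₃ : Set V} {π₃ : V → V} (h : IsLk Γ R₃ D₃ π₃) {U E : Set V} {ρ : V → V}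
    (hU : ∀ v ∈ U, v ∉ Γ.B)
    (hbd : ∀ v ∈ Γ.bd (U ∪ R₃), v ∈ D₃ ∨ v ∈ E)
    (hst : ∀ v ∈ E, v ∉ R₃ → v ∉ Γ.bd R₃ → Γ.Adj (ρ v) v ∧ ρ v ∈ U ∧ ρ v ∈ E ∧ ρ v ∉ R₃)
    (hinj : ∀ v ∈ E, ∀ w ∈ E, v ∉ R₃ ∪ Γ.bd R₃ → w ∉ R₃ ∪ Γ.bd R₃ → ρ v = ρ w → v = w)
    (hfin : ∀ v ∈ E, ∃ n, ρ^[n] v ∈ R₃ ∪ Γ.bd R₃) :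
    IsLk Γ (U ∪ R₃) (D₃ ∪ (E \ (R₃ ∪ Γ.bd R₃)))
      (fun v => if v ∈ R₃ ∪ Γ.bd R₃ then π₃ v else ρ v) := by
  have hA : ∀ v ∈ Γ.A, v ∈ R₃ ∪ Γ.bd R₃ := by
    intro v hv
    by_cases h1 : v ∈ R₃
    · exact Or.inl h1
    · exact Or.inr ⟨Or.inl hv, h1⟩
  have hD : ∀ v ∈ D₃, v ∈ R₃ ∪ Γ.bd R₃ := h.sub
  set σ : V → V := fun v => if v ∈ R₃ ∪ Γ.bd R₃ then π₃ v else ρ v with hσ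
  have s1 : ∀ v ∈ R₃ ∪ Γ.bd R₃, σ v = π₃ v := fun v hv => by simp only [hσ, if_pos hv]
  have s2 : ∀ v ∉ R₃ ∪ Γ.bd R₃, σ v = ρ v := fun v hv => by simp only [hσ, if_neg hv]
  have hfin3 : ∀ v ∈ D₃, ∃ n, σ^[n] v ∈ Γ.A := by
    refine h.toSys.ind (fun a _ ha => ⟨0, ha⟩) ?_
    intro v hv hvA ih
    refine reach_step ?_
    rwa [s1 v (hD v hv)]
  have hst' : ∀ v ∈ E, v ∉ R₃ ∪ Γ.bd R₃ → Γ.Adj (ρ v) v ∧ ρ v ∈ U ∧ ρ v ∈ E ∧ ρ v ∉ R₃ :=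
    fun v hv hc => hst v hv (fun h => hc (Or.inl h)) (fun h => hc (Or.inr h))
  refine ⟨⟨?_, ?_, ?_, ?_, ?_⟩, ?_, ?_, ?_, ?_⟩
  · rintro a (ha | ha) haA
    · rw [s1 a (hA a haA)]; exact h.src a ha haA
    · exact absurd (hA a haA) ha.2
  · rintro v (hv | hv) hvA
    · rw [s1 v (hD v hv)]; exact Or.inl (h.cl v hv hvA)
    · rw [s2 v hv.2]
      obtain ⟨-, -, h3, h4⟩ := hst' v hv.1 hv.2
      by_cases hb : ρ v ∈ Γ.bd R₃
      · exact Or.inl (h.bdD _ hb)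
      · exact Or.inr ⟨h3, fun hc => hc.elim h4 hb⟩
  · rintro v (hv | hv) hvA
    · rw [s1 v (hD v hv)]; exact h.adj v hv hvA
    · rw [s2 v hv.2]; exact (hst' v hv.1 hv.2).1
  · rintro v (hv | hv) w (hw | hw) hvA hwA
    · rw [s1 v (hD v hv), s1 w (hD w hw)]; exact h.inj v hv w hw hvA hwA
    · rw [s1 v (hD v hv), s2 w hw.2]; intro e
      exact absurd (e ▸ h.pred v hv hvA) (hst' w hw.1 hw.2).2.2.2
    · rw [s1 w (hD w hw), s2 v hv.2]; intro e
      exact absurd (e ▸ h.pred w hw hwA) (hst' v hv.1 hv.2).2.2.2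
    · rw [s2 v hv.2, s2 w hw.2]; exact hinj v hv.1 w hw.1 hv.2 hw.2
  · rintro v (hv | hv)
    · exact hfin3 v hv
    · have := reach_ind (C := R₃ ∪ Γ.bd R₃) (D := E) (π := ρ)
        (P := fun v => v ∈ R₃ ∨ ∃ n, σ^[n] v ∈ Γ.A) hfin ?_ ?_ v hv.1
      · exact this.resolve_left fun h => hv.2 (Or.inl h)
      · rintro v - (h1 | h1)
        · exact Or.inl h1
        · exact Or.inr (hfin3 v (h.bdD v h1))
      · intro v hv hc
        obtain ⟨-, -, h3, h4⟩ := hst' v hv hc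
        refine ⟨h3, fun ih => Or.inr (reach_step ?_)⟩
        rw [s2 v hc]
        exact ih.resolve_left h4
  · rintro v (hv | hv)
    · exact hU v hv
    · exact h.avoid v hv
  · rintro v (hv | hv) hvA
    · rw [s1 v (hD v hv)]; exact Or.inr (h.pred v hv hvA)
    · rw [s2 v hv.2]; exact Or.inl (hst' v hv.1 hv.2).2.1
  · intro v hv
    rcases hbd v hv with h1 | h1
    · exact Or.inl h1
    · by_cases hc : v ∈ R₃ ∪ Γ.bd R₃
      · rcases hc with hc | hc
        · exact absurd (Or.inr hc) hv.2
        · exact Or.inl (h.bdD v hc)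
      · exact Or.inr ⟨h1, hc⟩
  · rintro v (hv | hv)
    · rcases h.sub v hv with h1 | h1
      · exact Or.inl (Or.inr h1)
      · by_cases hu : v ∈ U
        · exact Or.inl (Or.inl hu)
        · refine Or.inr ⟨h1.1.imp id fun ⟨u, hu, e⟩ => ⟨u, Or.inr hu, e⟩, ?_⟩
          rintro (h2 | h2)
          · exact hu h2
          · exact h1.2 h2
    · obtain ⟨h1, h2, -, -⟩ := hst' v hv.1 hv.2
      by_cases hu : v ∈ U
      · exact Or.inl (Or.inl hu)
      · refine Or.inr ⟨Or.inr ⟨ρ v, Or.inl h2, h1⟩, ?_⟩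
        rintro (h3 | h3)
        · exact hu h3
        · exact hv.2 (Or.inl h3)

end Web

end

/-! ### Positions, maximal waves and quotients -/

section

namespace Web
variable {V : Type*} {Γ : Web V}

theorem delete_empty : Γ.delete ∅ = Γ := by
  cases Γ; simp [delete]

theorem delete_delete (X Y : Set V) : (Γ.delete X).delete Y = Γ.delete (X ∪ Y) := by
  cases Γ
  simp only [delete, Web.mk.injEq, Set.sdiff_sdiff, and_true]
  funext u v
  simp only [Set.mem_union, eq_iff_iff]
  tauto

/-- `J` consists of isolated vertices that are neither sources nor targets; deletions and quotients
leave such vertices behind. -/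
def Iso (Γ : Web V) (J : Set V) : Prop :=
  ∀ v ∈ J, v ∉ Γ.A ∧ v ∉ Γ.B ∧ (∀ u, ¬ Γ.Adj u v) ∧ ∀ u, ¬ Γ.Adj v u

theorem iso_delete (N : Set V) : Iso (Γ.delete N) N := by
  intro v hv
  simp [delete, hv]

theorem iso_quot (R : Set V) : Iso (Γ.quot R) R := by
  intro v hv
  simp [quot, hv, bd]

theorem Iso.bd_diff {J R : Set V} (hJ : Iso Γ J) : Γ.bd (R \ J) = Γ.bd R := by
  ext v
  have := hJ v
  simp only [bd, Set.mem_sdiff, Set.mem_ofPred_eq]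
  constructor
  · rintro ⟨h1, h2⟩
    refine ⟨h1.imp id fun ⟨u, hu, e⟩ => ⟨u, hu.1, e⟩, fun h => h2 ⟨h, fun hj => ?_⟩⟩
    grind
  · rintro ⟨h1, h2⟩
    exact ⟨h1.imp id fun ⟨u, hu, e⟩ => ⟨u, ⟨hu, fun h => (hJ u h).2.2.2 _ e⟩, e⟩, fun h => h2 h.1⟩

theorem Iso.notMem {J D : Set V} {π : V → V} (hJ : Iso Γ J) (h : Sys Γ D π) {v : V} (hv : v ∈ D) :
    v ∉ J := fun hj => (hJ v hj).2.2.1 _ (h.adj v hv (hJ v hj).1)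

theorem IsLk.diff_iso {J R D : Set V} {π : V → V} (h : IsLk Γ R D π) (hJ : Iso Γ J) :
    IsLk Γ (R \ J) D π where
  toSys := h.toSys
  avoid := fun v hv => h.avoid v hv.1
  pred := fun v hv hA => ⟨h.pred v hv hA, hJ.notMem h.toSys (h.cl v hv hA)⟩
  bdD := by rw [hJ.bd_diff]; exact h.bdD
  sub := by
    rw [hJ.bd_diff]; intro v hv
    exact (h.sub v hv).imp (fun h1 => ⟨h1, hJ.notMem h.toSys hv⟩) id

/-- A position: a set `N` of removed vertices together with a wave in the remaining web. -/
structure Pos (Γ : Web V) where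
  N : Set V
  R : Set V
  D : Set V
  π : V → V
  lk : IsLk (Γ.delete N) R D π
  disj : ∀ v ∈ R, v ∉ N

namespace Pos

theorem notN (p : Pos Γ) {v : V} (hv : v ∈ p.D) : v ∉ p.N :=
  (iso_delete p.N).notMem p.lk.toSys hv

/-- `q` refines `p`: it removes a union of whole paths of `p` (and other vertices), and its wave
extends what is left of the wave of `p`. -/
protected structure Le (q p : Pos Γ) : Prop where
  N : ∀ v ∈ p.N, v ∈ q.N
  comp : ∀ v ∈ p.D, v ∈ q.N ↔ p.π v ∈ q.N
  R : ∀ v ∈ p.R, v ∉ q.N → v ∈ q.R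
  D : ∀ v ∈ p.D, v ∉ q.N → v ∈ q.D
  π : ∀ v ∈ p.D, v ∉ q.N → q.π v = p.π v
  back : ∀ v ∈ q.D, v ∈ p.R → v ∈ p.D

instance : Preorder (Pos Γ) where
  le := Pos.Le
  le_refl := fun p => ⟨fun _ h => h, fun v hv => ⟨fun h => absurd h (p.notN hv),
    fun h => absurd h (p.notN (p.lk.toSys.cl' hv))⟩, fun _ h _ => h, fun _ h _ => h, fun _ _ _ => rfl,
    fun _ h _ => h⟩
  le_trans := by
    intro r q p hrq hqp
    refine ⟨fun v h => hrq.N v (hqp.N v h), ?_, ?_, ?_, ?_, ?_⟩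
    · intro v hv
      by_cases h : v ∈ q.N
      · exact ⟨fun _ => hrq.N _ ((hqp.comp v hv).1 h), fun _ => hrq.N _ h⟩
      · have := hrq.comp v (hqp.D v hv h)
        rwa [hqp.π v hv h] at this
    · intro v hv h
      exact hrq.R v (hqp.R v hv fun h1 => h (hrq.N v h1)) h
    · intro v hv h
      exact hrq.D v (hqp.D v hv fun h1 => h (hrq.N v h1)) h
    · intro v hv h
      have h1 : v ∉ q.N := fun h1 => h (hrq.N v h1)
      rw [hrq.π v (hqp.D v hv h1) h, hqp.π v hv h1]
    · intro v hv h
      have h1 : v ∉ q.N := fun h1 => r.notN hv (hrq.N v h1)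
      exact hqp.back v (hrq.back v hv (hqp.R v h h1)) h

theorem le_def {q p : Pos Γ} : q ≤ p ↔ Pos.Le q p := Iff.rfl

theorem adjD (p : Pos Γ) {v : V} (hv : v ∈ p.D) (hA : v ∉ Γ.A) : Γ.Adj (p.π v) v :=
  (p.lk.adj v hv (fun h => hA h.1)).1

/-- Chains of positions have greatest lower bounds. -/
theorem exists_lim {ι : Type*} [Nonempty ι] (p : ι → Pos Γ) (hc : ∀ i j, p i ≤ p j ∨ p j ≤ p i) :
    ∃ q : Pos Γ, (∀ i, q ≤ p i) ∧ (∀ v, v ∈ q.N ↔ ∃ i, v ∈ (p i).N) ∧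
      (∀ v, v ∈ q.R ↔ (∃ i, v ∈ (p i).R) ∧ v ∉ q.N) ∧
      (∀ v, v ∈ q.D ↔ (∃ i, v ∈ (p i).D) ∧ v ∉ q.N) ∧
      ∀ r : Pos Γ, (∀ i, r ≤ p i) → r ≤ q := by
  classical
  set N : Set V := {v | ∃ i, v ∈ (p i).N} with hN
  set R : Set V := {v | (∃ i, v ∈ (p i).R) ∧ v ∉ N} with hR
  set D : Set V := {v | (∃ i, v ∈ (p i).D) ∧ v ∉ N} with hD
  let σ : V → V := fun v => if h : ∃ i, v ∈ (p i).D then (p h.choose).π v else v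
  have hpi : ∀ i v, v ∈ (p i).D → v ∉ N → σ v = (p i).π v := by
    intro i v hv hn
    have h : ∃ i, v ∈ (p i).D := ⟨i, hv⟩
    have hs : σ v = (p h.choose).π v := dif_pos h
    rw [hs]
    rcases hc h.choose i with h1 | h1
    · exact h1.π v hv fun h2 => hn ⟨_, h2⟩
    · exact (h1.π v h.choose_spec fun h2 => hn ⟨_, h2⟩).symm
  have hcomp : ∀ i v, v ∈ (p i).D → (v ∈ N ↔ (p i).π v ∈ N) := by
    intro i v hv
    constructor
    · rintro ⟨j, hj⟩
      rcases hc i j with h1 | h1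
      · exact absurd (h1.N v hj) ((p i).notN hv)
      · exact ⟨j, (h1.comp v hv).1 hj⟩
    · rintro ⟨j, hj⟩
      rcases hc i j with h1 | h1
      · exact absurd (h1.N _ hj) ((p i).notN ((p i).lk.toSys.cl' hv))
      · exact ⟨j, (h1.comp v hv).2 hj⟩
  have hcl : ∀ i v, v ∈ (p i).D → v ∉ N → v ∉ Γ.A → (p i).π v ∈ D := by
    intro i v hv hn hA
    exact ⟨⟨i, (p i).lk.toSys.cl' hv⟩, fun h => hn ((hcomp i v hv).2 h)⟩
  have hup : ∀ i v, v ∈ (p i).D → v ∉ N → ∀ j, p j ≤ p i → v ∈ (p j).D :=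
    fun i v hv hn j hj => hj.D v hv fun h => hn ⟨j, h⟩
  have lk : IsLk (Γ.delete N) R D σ := by
    refine ⟨⟨?_, ?_, ?_, ?_, ?_⟩, ?_, ?_, ?_, ?_⟩
    · rintro a ⟨⟨i, hi⟩, hn⟩ haA
      rw [hpi i a hi hn]
      exact (p i).lk.src a hi ⟨haA.1, fun h => hn ⟨i, h⟩⟩
    · rintro v ⟨⟨i, hi⟩, hn⟩ hvA
      rw [hpi i v hi hn]
      exact hcl i v hi hn fun h => hvA ⟨h, hn⟩
    · rintro v ⟨⟨i, hi⟩, hn⟩ hvA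
      rw [hpi i v hi hn]
      exact ⟨(p i).adjD hi fun h => hvA ⟨h, hn⟩, (hcl i v hi hn fun h => hvA ⟨h, hn⟩).2, hn⟩
    · rintro v ⟨⟨i, hi⟩, hn⟩ w ⟨⟨j, hj⟩, hm⟩ hvA hwA
      rcases hc i j with h1 | h1
      · have hj' := hup j w hj hm i h1
        rw [hpi i v hi hn, hpi i w hj' hm]
        exact (p i).lk.inj v hi w hj' (fun h => hvA ⟨h.1, hn⟩) (fun h => hwA ⟨h.1, hm⟩)
      · have hi' := hup i v hi hn j h1
        rw [hpi j v hi' hn, hpi j w hj hm]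
        exact (p j).lk.inj v hi' w hj (fun h => hvA ⟨h.1, hn⟩) (fun h => hwA ⟨h.1, hm⟩)
    · rintro v ⟨⟨i, hi⟩, hn⟩
      revert hn
      refine (p i).lk.toSys.ind (P := fun v => v ∉ N → ∃ n, σ^[n] v ∈ (Γ.delete N).A) ?_ ?_ v hi
      · intro a ha haA hn; exact ⟨0, haA.1, hn⟩
      · intro v hv hvA ih hn
        refine reach_step ?_
        rw [hpi i v hv hn]
        exact ih fun h => hn ((hcomp i v hv).2 h)
    · rintro v ⟨⟨i, hi⟩, hn⟩ hB
      exact (p i).lk.avoid v hi ⟨hB.1, fun h => hn ⟨i, h⟩⟩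
    · rintro v ⟨⟨i, hi⟩, hn⟩ hvA
      rw [hpi i v hi hn]
      exact ⟨⟨i, (p i).lk.pred v hi fun h => hvA ⟨h.1, hn⟩⟩, fun h => hn ((hcomp i v hi).2 h)⟩
    · rintro v ⟨hv, hvR⟩
      have hn : v ∉ N := by
        rcases hv with h | ⟨u, -, h⟩
        · exact h.2
        · exact h.2.2
      have hvi : ∀ i, v ∉ (p i).R := fun i h => hvR ⟨⟨i, h⟩, hn⟩
      have hni : ∀ i, v ∉ (p i).N := fun i h => hn ⟨i, h⟩
      refine ⟨?_, hn⟩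
      rcases hv with h | ⟨u, ⟨⟨i, hu⟩, hun⟩, h⟩
      · obtain ⟨i⟩ := ‹Nonempty ι›
        exact ⟨i, (p i).lk.bdD v ⟨Or.inl ⟨h.1, hni i⟩, hvi i⟩⟩
      · exact ⟨i, (p i).lk.bdD v
          ⟨Or.inr ⟨u, hu, h.1, fun h => hun ⟨i, h⟩, hni i⟩, hvi i⟩⟩
    · rintro v ⟨⟨i, hi⟩, hn⟩
      by_cases hvR : v ∈ R
      · exact Or.inl hvR
      · refine Or.inr ⟨?_, hvR⟩
        by_cases hA : v ∈ Γ.A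
        · exact Or.inl ⟨hA, hn⟩
        · have h1 := hcl i v hi hn hA
          refine Or.inr ⟨(p i).π v, ⟨⟨i, (p i).lk.pred v hi fun h => hA h.1⟩, h1.2⟩,
            (p i).adjD hi hA, h1.2, hn⟩
  refine ⟨⟨N, R, D, σ, lk, fun v h => h.2⟩, ?_, fun _ => Iff.rfl, fun _ => Iff.rfl,
    fun _ => Iff.rfl, ?_⟩
  · intro i
    refine ⟨fun v h => ⟨i, h⟩, hcomp i, fun v h hn => ⟨⟨i, h⟩, hn⟩, fun v h hn => ⟨⟨i, h⟩, hn⟩,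
      fun v h hn => hpi i v h hn, ?_⟩
    rintro v ⟨⟨j, hj⟩, hn⟩ hv
    rcases hc i j with h1 | h1
    · exact h1.D v hj fun h => hn ⟨i, h⟩
    · exact h1.back v hj hv
  · intro r hr
    have hNr : ∀ v ∈ N, v ∈ r.N := fun v ⟨i, hi⟩ => (hr i).N v hi
    refine ⟨hNr, ?_, ?_, ?_, ?_, ?_⟩
    · rintro v ⟨⟨i, hi⟩, hn⟩
      change _ ↔ σ v ∈ _
      rw [hpi i v hi hn]; exact (hr i).comp v hi
    · rintro v ⟨⟨i, hi⟩, hn⟩ h; exact (hr i).R v hi h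
    · rintro v ⟨⟨i, hi⟩, hn⟩ h; exact (hr i).D v hi h
    · rintro v ⟨⟨i, hi⟩, hn⟩ h
      change _ = σ v
      rw [hpi i v hi hn]; exact (hr i).π v hi h
    · rintro v hv ⟨⟨i, hi⟩, hn⟩; exact ⟨⟨i, (hr i).back v hv hi⟩, hn⟩

/-- The position with nothing removed and the trivial wave. -/
def top (Γ : Web V) : Pos Γ where
  N := ∅
  R := ∅
  D := Γ.A
  π := id
  lk := by
    rw [delete_empty]
    exact ⟨⟨fun _ _ _ => rfl, fun _ h h' => absurd h h', fun _ h h' => absurd h h',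
      fun _ h _ _ h' => absurd h h', fun v h => ⟨0, h⟩⟩, fun _ h => h.elim, fun _ h h' => absurd h h',
      fun v hv => by simpa [bd] using hv, fun v hv => Or.inr (by simpa [bd] using hv)⟩
  disj := fun _ h => h.elim

/-- A wave of the web as a position with nothing removed. -/
def ofLk {R D : Set V} {π : V → V} (h : IsLk Γ R D π) : Pos Γ :=
  ⟨∅, R, D, π, by rwa [delete_empty], fun _ _ h => h⟩

open Classical in
/-- The version of `IsLk.glue` for positions. -/
theorem glue (p : Pos Γ) {U E : Set V} {ρ : V → V}
    (hUN : ∀ v ∈ U, v ∉ p.N)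
    (hU : ∀ v ∈ U, v ∉ Γ.B)
    (hbd : ∀ v ∈ (Γ.delete p.N).bd (U ∪ p.R), v ∈ p.D ∨ v ∈ E)
    (hst : ∀ v ∈ E, v ∉ p.R → v ∉ (Γ.delete p.N).bd p.R →
      (Γ.delete p.N).Adj (ρ v) v ∧ ρ v ∈ U ∧ ρ v ∈ E ∧ ρ v ∉ p.R)
    (hinj : ∀ v ∈ E, ∀ w ∈ E, v ∉ p.R ∪ (Γ.delete p.N).bd p.R →
      w ∉ p.R ∪ (Γ.delete p.N).bd p.R → ρ v = ρ w → v = w)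
    (hfin : ∀ v ∈ E, ∃ n, ρ^[n] v ∈ p.R ∪ (Γ.delete p.N).bd p.R) :
    ∃ q ≤ p, q.N = p.N ∧ q.R = U ∪ p.R ∧
      q.D = p.D ∪ (E \ (p.R ∪ (Γ.delete p.N).bd p.R)) ∧
      q.π = fun v => if v ∈ p.R ∪ (Γ.delete p.N).bd p.R then p.π v else ρ v := by
  refine ⟨⟨p.N, _, _, _, p.lk.glue (fun v hv hB => hU v hv hB.1) hbd hst hinj hfin, ?_⟩, ?_, rfl, rfl,
    rfl, rfl⟩
  · rintro v (h | h)
    · exact hUN v h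
    · exact p.disj v h
  · refine ⟨fun _ h => h, (le_refl p : Pos.Le p p).comp, fun _ h _ => Or.inr h,
      fun _ h _ => Or.inl h, ?_, ?_⟩
    · intro v hv _
      exact if_pos (p.lk.sub v hv)
    · rintro v (h | h) hv
      · exact h
      · exact absurd (Or.inl hv) h.2

end Pos

/-- The union of all wave regions. -/
def Rm (Γ : Web V) : Set V := {v | ∃ R D π, IsLk Γ R D π ∧ v ∈ R}

/-- Waves can be merged: the region of the union is the union of the regions. -/
theorem IsLk.union {R D R' D' : Set V} {π π' : V → V} (h : IsLk Γ R D π) (h' : IsLk Γ R' D' π') :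
    ∃ q ≤ Pos.ofLk h, q.N = ∅ ∧ q.R = R' ∪ R := by
  have hde : Γ.delete (Pos.ofLk h).N = Γ := delete_empty
  have hc : ∀ v ∈ Γ.A, v ∈ R ∪ Γ.bd R := by
    intro v hv
    by_cases h1 : v ∈ R
    · exact Or.inl h1
    · exact Or.inr ⟨Or.inl hv, h1⟩
  obtain ⟨q, h1, h2, h3, -⟩ := (Pos.ofLk h).glue (U := R') (E := D') (ρ := π') (fun _ _ h => h)
    h'.avoid (by
      rw [hde]
      rintro v ⟨hv, hn⟩
      by_cases hD : v ∈ D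
      · exact Or.inl hD
      · right
        have h2 : v ∉ R' := fun h => hn (Or.inl h)
        have h3 : v ∉ R := fun h => hn (Or.inr h)
        rcases hv with hv | ⟨u, hu | hu, e⟩
        · exact h'.bdD v ⟨Or.inl hv, h2⟩
        · exact h'.bdD v ⟨Or.inr ⟨u, hu, e⟩, h2⟩
        · exact absurd (h.bdD v ⟨Or.inr ⟨u, hu, e⟩, h3⟩) hD) (by
      rw [hde]
      intro v hv hvR hvb
      have hA : v ∉ Γ.A := fun hA => hvb ⟨Or.inl hA, hvR⟩
      exact ⟨h'.adj v hv hA, h'.pred v hv hA, h'.cl v hv hA,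
        fun h3 => hvb ⟨Or.inr ⟨_, h3, h'.adj v hv hA⟩, hvR⟩⟩) (by
      rw [hde]
      intro v hv w hw hvc hwc
      exact h'.inj v hv w hw (fun h => hvc (hc v h)) (fun h => hwc (hc w h))) (by
      rw [hde]
      intro v hv
      obtain ⟨n, hn⟩ := h'.fin v hv
      exact ⟨n, hc _ hn⟩)
  exact ⟨q, h1, h2, h3⟩

/-- There is a wave whose region is the largest possible one. -/
theorem exists_Rm (Γ : Web V) : ∃ D π, IsLk Γ Γ.Rm D π := by
  obtain ⟨m, hm⟩ := exists_maximal_of_chains_bounded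
    (r := fun p q : {p : Pos Γ // p.N = ∅} => q.1 ≤ p.1) (by
      intro c hc
      rcases c.eq_empty_or_nonempty with rfl | ⟨x, hx⟩
      · exact ⟨⟨Pos.top Γ, rfl⟩, by simp⟩
      · have : Nonempty c := ⟨⟨x, hx⟩⟩
        obtain ⟨q, h1, h2, -⟩ := Pos.exists_lim (fun i : c => i.1.1) (by
          intro i j
          by_cases e : i = j
          · subst e; exact Or.inl le_rfl
          · rcases hc i.2 j.2 (fun h => e (Subtype.ext h)) with h | h
            · exact Or.inr h
            · exact Or.inl h)
        refine ⟨⟨q, ?_⟩, fun a ha => h1 ⟨a, ha⟩⟩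
        ext v
        rw [h2]
        simp only [Set.mem_empty_iff_false, iff_false]
        rintro ⟨i, hi⟩
        rw [i.1.2] at hi; exact hi) (fun h1 h2 => le_trans h2 h1)
  obtain ⟨m, hN⟩ := m
  have lk' : IsLk Γ m.R m.D m.π := by
    have := m.lk
    rwa [hN, delete_empty] at this
  have e : Pos.ofLk lk' = m := by
    clear hm
    cases m; subst hN; rfl
  have : Γ.Rm = m.R := by
    ext v
    refine ⟨?_, fun h => ⟨_, _, _, lk', h⟩⟩
    rintro ⟨R', D', π', h', hv⟩
    obtain ⟨q, h1, h2, h3⟩ := lk'.union h'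
    rw [e] at h1
    exact (hm ⟨q, h2⟩ h1).R v (by rw [h3]; exact Or.inl hv) (by simp [hN])
  rw [this]
  exact ⟨_, _, lk'⟩

theorem IsLk.subset_Rm {R D : Set V} {π : V → V} (h : IsLk Γ R D π) {v : V} (hv : v ∈ R) :
    v ∈ Γ.Rm := ⟨_, _, _, h, hv⟩

theorem mem_Rm_of_iso {J : Set V} (hJ : Iso Γ J) {v : V} (hv : v ∈ J) : v ∈ Γ.Rm := by
  refine ⟨J, Γ.A, id, ⟨⟨fun _ _ _ => rfl, fun _ h h' => absurd h h', fun _ h h' => absurd h h',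
      fun _ h _ _ h' => absurd h h', fun v h => ⟨0, h⟩⟩, fun v h => (hJ v h).2.1,
      fun _ h h' => absurd h h', ?_, ?_⟩, hv⟩
  · rintro v ⟨h | ⟨u, hu, e⟩, -⟩
    · exact h
    · exact absurd e ((hJ u hu).2.2.2 v)
  · intro v h
    exact Or.inr ⟨Or.inl h, fun hj => (hJ v hj).1 h⟩

theorem A_sub (Γ : Web V) (R : Set V) {v : V} (hv : v ∈ Γ.A) : v ∈ R ∪ Γ.bd R := by
  by_cases h1 : v ∈ R
  · exact Or.inl h1
  · exact Or.inr ⟨Or.inl hv, h1⟩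

theorem adj_sub (Γ : Web V) (R : Set V) {u v : V} (hu : u ∈ R) (e : Γ.Adj u v) :
    v ∈ R ∪ Γ.bd R := by
  by_cases h1 : v ∈ R
  · exact Or.inl h1
  · exact Or.inr ⟨Or.inr ⟨u, hu, e⟩, h1⟩

open Classical in
/-- A wave of a quotient composes with the wave defining the quotient. -/
theorem Pos.compose (p : Pos Γ) {U E : Set V} {ρ : V → V}
    (h : IsLk ((Γ.delete p.N).quot p.R) U E ρ) :
    ∃ q ≤ p, q.N = p.N ∧ q.R = (U \ (p.N ∪ p.R)) ∪ p.R ∧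
      q.D = p.D ∪ (E \ (p.R ∪ (Γ.delete p.N).bd p.R)) ∧
      q.π = fun v => if v ∈ p.R ∪ (Γ.delete p.N).bd p.R then p.π v else ρ v := by
  have hJ : Iso ((Γ.delete p.N).quot p.R) (p.N ∪ p.R) := by
    rintro v (hv | hv)
    · simp [quot, delete, bd, hv]
    · exact iso_quot p.R v hv
  have h' := h.diff_iso hJ
  have hE : ∀ v ∈ E, v ∉ p.N ∪ p.R := fun v hv => hJ.notMem h.toSys hv
  refine p.glue (U := U \ (p.N ∪ p.R)) (E := E) (ρ := ρ) (fun v hv hN => hv.2 (Or.inl hN)) ?_ ?_ ?_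
    ?_ ?_
  · intro v hv hB
    exact h.avoid v hv.1 ⟨⟨hB, fun hN => hv.2 (Or.inl hN)⟩, fun hR => hv.2 (Or.inr hR)⟩
  · rintro v hv
    by_cases hc : v ∈ p.R ∪ (Γ.delete p.N).bd p.R
    · rcases hc with hc | hc
      · exact absurd (Or.inr hc) hv.2
      · exact Or.inl (p.lk.bdD v hc)
    · right
      apply h'.bdD
      refine ⟨?_, fun h => hv.2 (Or.inl h)⟩
      rcases hv.1 with hA | ⟨u, hu | hu, e⟩
      · exact absurd (A_sub _ _ hA) hc
      · exact Or.inr ⟨u, hu, e, fun h => hu.2 (Or.inr h), fun h => hc (Or.inl h),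
          fun h => hc (Or.inr h)⟩
      · exact absurd (adj_sub _ _ hu e) hc
  · intro v hv hvR hvb
    have := h'.adj v hv hvb
    exact ⟨this.1, h'.pred v hv hvb, h'.cl v hv hvb, this.2.1⟩
  · intro v hv w hw hvc hwc
    exact h.inj v hv w hw (fun h => hvc (Or.inr h)) (fun h => hwc (Or.inr h))
  · intro v hv
    obtain ⟨n, hn⟩ := h.fin v hv
    exact ⟨n, Or.inr hn⟩

/-- `h` is a source in the region of the position whose path does not lead to the boundary. -/
def Pos.Miss (p : Pos Γ) (h : V) : Prop :=
  h ∈ Γ.A ∧ h ∈ p.R ∧ ∀ v ∈ (Γ.delete p.N).bd p.R, root (Γ.delete p.N).A p.π v ≠ h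

/-- A hindrance of the quotient web lets one extend the position to one missing a source. -/
theorem Pos.extend_of_hind (p : Pos Γ) (h : Hind ((Γ.delete p.N).quot p.R)) :
    ∃ q ≤ p, q.N = p.N ∧ ∃ a, q.Miss a := by
  classical
  obtain ⟨U, E, ρ, t, lk, ht, htU, htE⟩ := h
  obtain ⟨q, hqp, hN, hR, hD, hπ⟩ := p.compose lk
  refine ⟨q, hqp, hN, ?_⟩
  have htb : t ∈ (Γ.delete p.N).bd p.R := ht
  have htD := p.lk.bdD t htb
  have htN : t ∉ p.N := p.notN htD
  have hqs := q.lk.toSys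
  have hps := p.lk.toSys
  -- roots agree on the old paths
  have hroot : ∀ v ∈ p.D, root (Γ.delete p.N).A q.π v = root (Γ.delete p.N).A p.π v := by
    refine hps.ind (fun a _ ha => ?_) ?_
    · have ha' : a ∈ (Γ.delete p.N).A := ha
      rw [root_of_mem ha', root_of_mem ha']
    · intro v hv hvA ih
      have h1 := hqs.root_pred (hqp.D v hv (hN ▸ p.notN hv))
      have h2 := hps.root_pred hv
      have h3 := hqp.π v hv (hN ▸ p.notN hv)
      rw [hN, h3] at h1
      rw [← h1, ← h2]; exact ih
  -- every boundary vertex of the extension descends from an old boundary vertex other than `t`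
  have key : ∀ v ∈ E, ∃ s ∈ (Γ.delete p.N).bd p.R, s ≠ t ∧
      root (Γ.delete p.N).A q.π v = root (Γ.delete p.N).A q.π s := by
    refine lk.toSys.ind ?_ ?_
    · intro a ha haA
      exact ⟨a, haA, fun h => htE (h ▸ ha), rfl⟩
    · intro v hv hvA ⟨s, h1, h2, h3⟩
      refine ⟨s, h1, h2, ?_⟩
      have hvc : v ∉ p.R ∪ (Γ.delete p.N).bd p.R := by
        rintro (h | h)
        · exact (iso_quot p.R).notMem lk.toSys hv h
        · exact hvA h
      have h4 : q.π v = ρ v := by rw [hπ]; simp only [if_neg hvc]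
      have h5 := hqs.root_pred (v := v) (by rw [hD]; exact Or.inr ⟨hv, hvc⟩)
      rw [hN, h4] at h5
      rw [← h5]; exact h3
  have htR : t ∈ q.R := by
    rw [hR]; exact Or.inl ⟨htU, fun h => h.elim htN htb.2⟩
  have htroot := hqs.root_mem (hqp.D t htD (hN ▸ htN))
  have hex : ∀ v ∈ (Γ.delete q.N).bd q.R, root (Γ.delete p.N).A q.π v ≠ root (Γ.delete p.N).A q.π t := by
    intro v hv e
    have hvD := q.lk.bdD v hv
    rw [hD] at hvD
    have : ∃ s ∈ (Γ.delete p.N).bd p.R, s ≠ t ∧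
        root (Γ.delete p.N).A q.π v = root (Γ.delete p.N).A q.π s := by
      rcases hvD with hvD | hvD
      · rcases p.lk.sub v hvD with h | h
        · exact absurd (by rw [hR]; exact Or.inr h) hv.2
        · exact ⟨v, h, fun h => hv.2 (h ▸ htR), rfl⟩
      · exact key v hvD.1
    obtain ⟨s, h1, h2, h3⟩ := this
    rw [e, hroot t htD, hroot s (p.lk.bdD s h1)] at h3
    exact h2 (p.lk.bd_root_inj htb h1 h3).symm
  refine ⟨root (Γ.delete p.N).A q.π t, ?_, ?_, by rw [hN] at hex ⊢; exact hex⟩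
  · rw [hN] at htroot; exact htroot.1.1
  · by_contra hc
    have h1 : root (Γ.delete p.N).A q.π t ∈ (Γ.delete q.N).bd q.R := by
      refine ⟨Or.inl ?_, hc⟩
      rw [hN] at htroot ⊢; exact htroot.1
    refine hex _ h1 ?_
    rw [hN] at htroot
    exact root_of_mem htroot.1

theorem Pos.hind_of_Miss (p : Pos Γ) {h : V} (hm : p.Miss h) : Hind (Γ.delete p.N) :=
  hind_of_miss p.lk (a := h) ⟨hm.1, p.disj h hm.2.1⟩ hm.2.1 hm.2.2

/-- Quotients of unhindered webs by waves are unhindered. -/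
theorem quot_unhind {R D : Set V} {π : V → V} (h : IsLk Γ R D π) (hΓ : ¬ Hind Γ) :
    ¬ Hind (Γ.quot R) := by
  intro hq
  have e : Γ.delete (Pos.ofLk h).N = Γ := delete_empty
  obtain ⟨q, -, hN, a, ha⟩ := (Pos.ofLk h).extend_of_hind (by rw [e]; exact hq)
  have := q.hind_of_Miss ha
  rw [hN, e] at this
  exact hΓ this

theorem quot_Rm_sub {U E : Set V} {ρ : V → V} (h : IsLk (Γ.quot Γ.Rm) U E ρ) {v : V} (hv : v ∈ U) :
    v ∈ Γ.Rm := by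
  obtain ⟨D, π, lk⟩ := Γ.exists_Rm
  have e : Γ.delete (Pos.ofLk lk).N = Γ := delete_empty
  obtain ⟨q, h1, h2, h3, -⟩ := (Pos.ofLk lk).compose (U := U) (E := E) (ρ := ρ) (by rw [e]; exact h)
  by_contra hc
  have := q.lk
  rw [h2, e] at this
  refine hc (this.subset_Rm (v := v) ?_)
  rw [h3]
  refine Or.inl ⟨hv, ?_⟩
  rintro (h | h)
  · exact h
  · exact hc h

/-- The quotient of any web by its largest wave is unhindered. -/
theorem quot_Rm_unhind (Γ : Web V) : ¬ Hind (Γ.quot Γ.Rm) := by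
  rintro ⟨U, E, ρ, t, lk, ht, htU, -⟩
  exact ht.2 (quot_Rm_sub lk htU)

end Web

end

/-! ### Alternating walks and augmentation -/

section

namespace Web
variable {V : Type*} {Γ : Web V}

/-- The vertices at which alternating walks of length at most `n` from the unused source `h` can
continue outside the path system `(D, π)`. -/
def lvl (Γ : Web V) (D : Set V) (π : V → V) (h : V) : ℕ → Set V
  | 0 => {h}
  | n + 1 => {w | w ∈ lvl Γ D π h n ∨ (w ∉ D ∧ ∃ u ∈ lvl Γ D π h n, Γ.Adj u w) ∨
      (∃ v ∈ D, π v = w ∧ ∃ u ∈ lvl Γ D π h n, Γ.Adj u v) ∨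
      ∃ u ∈ lvl Γ D π h n, u ∈ D ∧ π u = w}

/-- The vertices reachable from `h` by alternating walks. -/
def alt (Γ : Web V) (D : Set V) (π : V → V) (h : V) : Set V := {w | ∃ n, w ∈ lvl Γ D π h n}

section alt
variable {R D : Set V} {π : V → V} {h : V}

theorem mem_alt_self : h ∈ alt Γ D π h := ⟨0, rfl⟩

theorem alt_out {u v : V} (hu : u ∈ alt Γ D π h) (e : Γ.Adj u v) (hv : v ∉ D) :
    v ∈ alt Γ D π h := by
  obtain ⟨n, hn⟩ := hu
  exact ⟨n + 1, Or.inr (Or.inl ⟨hv, u, hn, e⟩)⟩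

theorem alt_jump {u v : V} (hu : u ∈ alt Γ D π h) (e : Γ.Adj u v) (hv : v ∈ D) :
    π v ∈ alt Γ D π h := by
  obtain ⟨n, hn⟩ := hu
  exact ⟨n + 1, Or.inr (Or.inr (Or.inl ⟨v, hv, rfl, u, hn, e⟩))⟩

theorem alt_back {u : V} (hu : u ∈ alt Γ D π h) (hD : u ∈ D) : π u ∈ alt Γ D π h := by
  obtain ⟨n, hn⟩ := hu
  exact ⟨n + 1, Or.inr (Or.inr (Or.inr ⟨u, hn, hD, rfl⟩))⟩

theorem lvl_mono {m n : ℕ} (hmn : m ≤ n) {v : V} (hv : v ∈ lvl Γ D π h m) :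
    v ∈ lvl Γ D π h n := by
  induction hmn with
  | refl => exact hv
  | step _ ih => exact Or.inl ih

theorem alt_ind {P : V → Prop} (h0 : P h) (h1 : ∀ u v, P u → Γ.Adj u v → v ∉ D → P v)
    (h2 : ∀ u v, P u → Γ.Adj u v → v ∈ D → P (π v)) (h3 : ∀ u, P u → u ∈ D → P (π u)) :
    ∀ v ∈ alt Γ D π h, P v := by
  rintro v ⟨n, hn⟩
  induction n generalizing v with
  | zero => rw [show v = h from hn]; exact h0
  | succ n ih =>
    rcases hn with hn | ⟨hv, u, hu, e⟩ | ⟨w, hw, rfl, u, hu, e⟩ | ⟨u, hu, hD, rfl⟩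
    · exact ih _ hn
    · exact h1 u v (ih u hu) e hv
    · exact h2 u w (ih u hu) e hw
    · exact h3 u (ih u hu) hD

theorem IsLk.alt_sub (lk : IsLk Γ R D π) (hR : h ∈ R) : ∀ v ∈ alt Γ D π h, v ∈ R := by
  refine alt_ind hR ?_ ?_ ?_
  · intro u v hu e hv
    by_contra hc
    exact hv (lk.bdD v ⟨Or.inr ⟨u, hu, e⟩, hc⟩)
  · intro u v _ e hv
    exact lk.pred v hv (Γ.not_into_A u v e)
  · intro u hu hD
    by_cases hA : u ∈ Γ.A
    · rwa [lk.src u hD hA]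
    · exact lk.pred u hD hA

open Classical in
/-- A hindrance can be shrunk to the set of vertices reachable from the unused source by
alternating walks. -/
theorem IsLk.shrink (lk : IsLk Γ R D π) (hR : h ∈ R) :
    IsLk Γ (alt Γ D π h) {v | (v ∈ D ∧ π v ∈ alt Γ D π h) ∨ (v ∈ Γ.A ∧ v ∉ alt Γ D π h)}
      (fun v => if v ∈ Γ.A then v else π v) := by
  refine ⟨⟨?_, ?_, ?_, ?_, ?_⟩, ?_, ?_, ?_, ?_⟩
  · intro a _ ha; simp [ha]
  · rintro v (⟨h1, h2⟩ | ⟨h1, h2⟩) hA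
    · simp only [if_neg hA]
      exact Or.inl ⟨lk.cl v h1 hA, alt_back h2 (lk.cl v h1 hA)⟩
    · exact absurd h1 hA
  · rintro v (⟨h1, h2⟩ | ⟨h1, h2⟩) hA
    · simp only [if_neg hA]; exact lk.adj v h1 hA
    · exact absurd h1 hA
  · rintro v (⟨h1, -⟩ | ⟨h1, -⟩) w (⟨h2, -⟩ | ⟨h2, -⟩) hA hA'
    · simp only [if_neg hA, if_neg hA']; exact lk.inj v h1 w h2 hA hA'
    · exact absurd h2 hA'
    · exact absurd h1 hA
    · exact absurd h1 hA
  · rintro v (⟨h1, -⟩ | ⟨h1, -⟩)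
    · refine lk.toSys.ind (P := fun v => ∃ n, (fun v => if v ∈ Γ.A then v else π v)^[n] v ∈ Γ.A)
        (fun a _ ha => ⟨0, ha⟩) (fun v _ hA ih => reach_step ?_) v h1
      simpa only [if_neg hA] using ih
    · exact ⟨0, h1⟩
  · intro v hv; exact lk.avoid v (lk.alt_sub hR v hv)
  · rintro v (⟨h1, h2⟩ | ⟨h1, h2⟩) hA
    · simp only [if_neg hA]; exact h2
    · exact absurd h1 hA
  · rintro v ⟨hv | ⟨u, hu, e⟩, hn⟩
    · exact Or.inr ⟨hv, hn⟩
    · by_cases hD : v ∈ D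
      · exact Or.inl ⟨hD, alt_jump hu e hD⟩
      · exact absurd (alt_out hu e hD) hn
  · intro v hv
    by_cases hn : v ∈ alt Γ D π h
    · exact Or.inl hn
    · by_cases hA : v ∈ Γ.A
      · exact Or.inr ⟨Or.inl hA, hn⟩
      · rcases hv with ⟨h1, h2⟩ | ⟨h1, -⟩
        · exact Or.inr ⟨Or.inr ⟨π v, h2, lk.adj v h1 hA⟩, hn⟩
        · exact absurd h1 hA

/-- The outcome of switching along an alternating walk from `h` to `u`: a finite modification
`(D', π')` of `(D, π)` within the set `O`, which additionally uses the source `h` and in which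
`u` is a terminal vertex. -/
structure Aug (Γ : Web V) (R D : Set V) (π : V → V) (h : V) (O : Set V) (u : V)
    (D' : Set V) (π' : V → V) : Prop where
  finite : {v | ¬ (v ∈ D ↔ v ∈ D') ∨ π' v ≠ π v}.Finite
  src : ∀ a ∈ D', a ∈ Γ.A → π' a = a
  cl : ∀ v ∈ D', v ∉ Γ.A → π' v ∈ D'
  adj : ∀ v ∈ D', v ∉ Γ.A → Γ.Adj (π' v) v
  inj : ∀ v ∈ D', ∀ w ∈ D', v ∉ Γ.A → w ∉ Γ.A → π' v = π' w → v = w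
  pred : ∀ v ∈ D', v ∉ Γ.A → π' v ∈ R
  mem : u ∈ D'
  free : ∀ v ∈ D', v ∉ Γ.A → π' v ≠ u
  new : ∀ v ∈ D', v ∉ D → v ∈ O
  old : ∀ v ∈ D, v ∉ D' → v ∈ O
  chg : ∀ v ∈ D, (v ∉ D' ∨ π' v ≠ π v) → π v ∈ O
  chg' : ∀ v ∈ D', v ∉ Γ.A → (v ∉ D ∨ π' v ≠ π v) → π' v ∈ O
  srcs : ∀ a ∈ D', a ∈ Γ.A → a ∈ D ∨ a = h

theorem Aug.mono {O O' D' : Set V} {π' : V → V} {u : V} (H : Aug Γ R D π h O u D' π')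
    (hO : O ⊆ O') : Aug Γ R D π h O' u D' π' :=
  { H with
    new := fun v h1 h2 => hO (H.new v h1 h2)
    old := fun v h1 h2 => hO (H.old v h1 h2)
    chg := fun v h1 h2 => hO (H.chg v h1 h2)
    chg' := fun v h1 h2 h3 => hO (H.chg' v h1 h2 h3) }

/-- Augmentation along an alternating walk, by induction on the length of the walk: the paths are
rerouted so that the unused source `h` is used and `u` becomes a terminal vertex. -/
theorem IsLk.exists_aug_lvl (lk : IsLk Γ R D π) (hA : h ∈ Γ.A) (hR : h ∈ R) (hD : h ∉ D) (n : ℕ) :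
    ∀ u ∈ lvl Γ D π h n, ∃ D' π', Aug Γ R D π h (lvl Γ D π h n) u D' π' := by
  classical
  have hsub : ∀ n, ∀ u ∈ lvl Γ D π h n, u ∈ R := fun n u hu => lk.alt_sub hR u ⟨n, hu⟩
  induction n with
  | zero =>
    rintro u rfl
    have hne : ∀ v ∈ D, v ≠ u := fun v hv e => hD (e ▸ hv)
    refine ⟨insert u D, Function.update π u u, ?_, ?_, ?_, ?_, ?_, ?_, ?_, ?_, ?_, ?_, ?_, ?_, ?_⟩
    · refine (Set.finite_singleton u).subset ?_
      intro v hv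
      by_contra hc
      have hc : v ≠ u := hc
      simp [hc] at hv
    · rintro a (rfl | ha) haA
      · simp
      · rw [Function.update_of_ne (hne a ha)]; exact lk.src a ha haA
    · rintro v (rfl | hv) hvA
      · exact absurd hA hvA
      · rw [Function.update_of_ne (hne v hv)]; exact Or.inr (lk.cl v hv hvA)
    · rintro v (rfl | hv) hvA
      · exact absurd hA hvA
      · rw [Function.update_of_ne (hne v hv)]; exact lk.adj v hv hvA
    · rintro v (rfl | hv) w (rfl | hw) hvA hwA
      · exact fun _ => rfl
      · exact absurd hA hvA
      · exact absurd hA hwA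
      · rw [Function.update_of_ne (hne v hv), Function.update_of_ne (hne w hw)]
        exact lk.inj v hv w hw hvA hwA
    · rintro v (rfl | hv) hvA
      · exact absurd hA hvA
      · rw [Function.update_of_ne (hne v hv)]; exact lk.pred v hv hvA
    · exact Or.inl rfl
    · rintro v (rfl | hv) hvA
      · exact absurd hA hvA
      · rw [Function.update_of_ne (hne v hv)]
        exact hne _ (lk.cl v hv hvA)
    · rintro v (rfl | hv) hvD
      · exact rfl
      · exact absurd hv hvD
    · intro v hv h1; exact absurd (Or.inr hv) h1
    · rintro v hv (h1 | h1)
      · exact absurd (Or.inr hv) h1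
      · exact absurd (Function.update_of_ne (hne v hv) _ _) h1
    · rintro v (rfl | hv) hvA h1
      · exact absurd hA hvA
      · rcases h1 with h1 | h1
        · exact absurd hv h1
        · exact absurd (Function.update_of_ne (hne v hv) _ _) h1
    · rintro a (rfl | ha) _
      · exact Or.inr rfl
      · exact Or.inl ha
  | succ n ih =>
    intro w hw
    have hmono : lvl Γ D π h n ⊆ lvl Γ D π h (n + 1) := fun v hv => Or.inl hv
    by_cases hwn : w ∈ lvl Γ D π h n
    · obtain ⟨D', π', H⟩ := ih w hwn
      exact ⟨D', π', H.mono hmono⟩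
    rcases hw with hw' | ⟨hwD, u, hu, e⟩ | ⟨v, hv, rfl, u, hu, e⟩ | ⟨u, hu, huD, rfl⟩
    · exact absurd hw' hwn
    · -- prolong the path ending at `u` by the new vertex `w`
      obtain ⟨D₁, π₁, H⟩ := ih u hu
      have hw1 : w ∉ D₁ := fun h1 => hwn (H.new w h1 hwD)
      have hwA : w ∉ Γ.A := Γ.not_into_A _ _ e
      have huw : u ≠ w := fun h => hwn (h ▸ hu)
      have hne : ∀ v ∈ D₁, v ≠ w := fun v hv e => hw1 (e ▸ hv)
      have hwO : w ∈ lvl Γ D π h (n + 1) := Or.inr (Or.inl ⟨hwD, u, hu, e⟩)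
      refine ⟨insert w D₁, Function.update π₁ w u, ?_, ?_, ?_, ?_, ?_, ?_, ?_, ?_, ?_, ?_, ?_, ?_, ?_⟩
      · refine (H.finite.insert w).subset ?_
        intro v hv
        by_cases hc : v = w
        · exact Or.inl hc
        · right; simpa [hc] using hv
      · rintro a (rfl | ha) haA
        · exact absurd haA hwA
        · rw [Function.update_of_ne (hne a ha)]; exact H.src a ha haA
      · rintro v (rfl | hv) hvA
        · simp [H.mem]
        · rw [Function.update_of_ne (hne v hv)]; exact Or.inr (H.cl v hv hvA)
      · rintro v (rfl | hv) hvA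
        · simpa using e
        · rw [Function.update_of_ne (hne v hv)]; exact H.adj v hv hvA
      · rintro v (rfl | hv) w' (rfl | hw') hvA hwA'
        · exact fun _ => rfl
        · rw [Function.update_self, Function.update_of_ne (hne w' hw')]
          exact fun h1 => absurd h1.symm (H.free w' hw' hwA')
        · rw [Function.update_self, Function.update_of_ne (hne v hv)]
          exact fun h1 => absurd h1 (H.free v hv hvA)
        · rw [Function.update_of_ne (hne v hv), Function.update_of_ne (hne w' hw')]
          exact H.inj v hv w' hw' hvA hwA'
      · rintro v (rfl | hv) hvA
        · simpa using hsub n u hu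
        · rw [Function.update_of_ne (hne v hv)]; exact H.pred v hv hvA
      · exact Or.inl rfl
      · rintro v (rfl | hv) hvA
        · simpa using huw
        · rw [Function.update_of_ne (hne v hv)]
          exact hne _ (H.cl v hv hvA)
      · rintro v (rfl | hv) hvD
        · exact hwO
        · exact hmono (H.new v hv hvD)
      · intro v hv h1; exact hmono (H.old v hv fun h2 => h1 (Or.inr h2))
      · rintro v hv h1
        refine hmono (H.chg v hv (h1.imp (fun h1 h2 => h1 (Or.inr h2)) fun h1 => ?_))
        rwa [Function.update_of_ne (fun h : v = w => hwD (h ▸ hv))] at h1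
      · rintro v (rfl | hv) hvA h1
        · simpa using hmono hu
        · rw [Function.update_of_ne (hne v hv)] at h1 ⊢
          exact hmono (H.chg' v hv hvA h1)
      · rintro a (rfl | ha) haA
        · exact absurd haA hwA
        · exact H.srcs a ha haA
    · -- reroute the path through `v`, so that its old predecessor becomes terminal
      obtain ⟨D₁, π₁, H⟩ := ih u hu
      have hvA : v ∉ Γ.A := Γ.not_into_A _ _ e
      have hv1 : v ∈ D₁ := by
        by_contra hc; exact hwn (H.chg v hv (Or.inl hc))
      have hπ1 : π₁ v = π v := by
        by_contra hc; exact hwn (H.chg v hv (Or.inr hc))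
      have huw : u ≠ π v := fun h => hwn (h ▸ hu)
      have hwO : π v ∈ lvl Γ D π h (n + 1) := Or.inr (Or.inr (Or.inl ⟨v, hv, rfl, u, hu, e⟩))
      have up : ∀ x, x ≠ v → Function.update π₁ v u x = π₁ x :=
        fun x hx => Function.update_of_ne hx _ _
      refine ⟨D₁, Function.update π₁ v u, ?_, ?_, ?_, ?_, ?_, ?_, ?_, ?_, ?_, ?_, ?_, ?_, ?_⟩
      · refine (H.finite.insert v).subset ?_
        intro x hx
        by_cases hc : x = v
        · exact Or.inl hc
        · right; simpa [hc] using hx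
      · intro a ha haA
        rw [up a (fun h => hvA (h ▸ haA))]; exact H.src a ha haA
      · intro x hx hxA
        by_cases hc : x = v
        · subst hc; simpa using H.mem
        · rw [up x hc]; exact H.cl x hx hxA
      · intro x hx hxA
        by_cases hc : x = v
        · subst hc; simpa using e
        · rw [up x hc]; exact H.adj x hx hxA
      · intro x hx y hy hxA hyA
        by_cases hc : x = v
        · by_cases hc' : y = v
          · intro _; rw [hc, hc']
          · subst hc
            rw [up y hc', Function.update_self]
            exact fun h1 => absurd h1.symm (H.free y hy hyA)
        · by_cases hc' : y = v
          · subst hc'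
            rw [up x hc, Function.update_self]
            exact fun h1 => absurd h1 (H.free x hx hxA)
          · rw [up x hc, up y hc']; exact H.inj x hx y hy hxA hyA
      · intro x hx hxA
        by_cases hc : x = v
        · subst hc; simpa using hsub n u hu
        · rw [up x hc]; exact H.pred x hx hxA
      · rw [← hπ1]; exact H.cl v hv1 hvA
      · intro x hx hxA
        by_cases hc : x = v
        · subst hc; simpa using huw
        · rw [up x hc, ← hπ1]
          exact fun h1 => hc (H.inj x hx v hv1 hxA hvA h1)
      · exact fun x h1 h2 => hmono (H.new x h1 h2)
      · exact fun x h1 h2 => hmono (H.old x h1 h2)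
      · intro x hx h1
        by_cases hc : x = v
        · subst hc; exact hwO
        · rw [up x hc] at h1; exact hmono (H.chg x hx h1)
      · intro x hx hxA h1
        by_cases hc : x = v
        · subst hc; simpa using hmono hu
        · rw [up x hc] at h1 ⊢; exact hmono (H.chg' x hx hxA h1)
      · exact H.srcs
    · -- shorten the path ending at `u`
      obtain ⟨D₁, π₁, H⟩ := ih u hu
      have huA : u ∉ Γ.A := fun h => hwn (by rwa [lk.src u huD h])
      have hu1 : u ∈ D₁ := H.mem
      have hπ1 : π₁ u = π u := by
        by_contra hc; exact hwn (H.chg u huD (Or.inr hc))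
      have huw : π u ≠ u := fun h => hwn (by rwa [h])
      have hwO : π u ∈ lvl Γ D π h (n + 1) := Or.inr (Or.inr (Or.inr ⟨u, hu, huD, rfl⟩))
      refine ⟨D₁ \ {u}, π₁, ?_, fun a ha => H.src a ha.1, ?_, fun x hx => H.adj x hx.1,
        fun x hx y hy => H.inj x hx.1 y hy.1, fun x hx => H.pred x hx.1, ?_, ?_, ?_, ?_, ?_, ?_, ?_⟩
      · refine (H.finite.insert u).subset ?_
        intro x hx
        by_cases hc : x = u
        · exact Or.inl hc
        · right; simpa [hc] using hx
      · intro x hx hxA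
        exact ⟨H.cl x hx.1 hxA, H.free x hx.1 hxA⟩
      · rw [← hπ1]; exact ⟨H.cl u hu1 huA, by rw [hπ1]; exact huw⟩
      · intro x hx hxA
        rw [← hπ1]
        exact fun h1 => hx.2 (H.inj x hx.1 u hu1 hxA huA h1)
      · exact fun x h1 h2 => hmono (H.new x h1.1 h2)
      · intro x hx h1
        by_cases hc : x = u
        · exact hmono (hc ▸ hu)
        · exact hmono (H.old x hx fun h2 => h1 ⟨h2, hc⟩)
      · intro x hx h1
        by_cases hc : x = u
        · rw [hc]; exact hwO
        · exact hmono (H.chg x hx (h1.imp (fun h1 h2 => h1 ⟨h2, hc⟩) id))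
      · exact fun x hx hxA h1 => hmono (H.chg' x hx.1 hxA h1)
      · exact fun a ha => H.srcs a ha.1

theorem IsLk.exists_aug (lk : IsLk Γ R D π) (hA : h ∈ Γ.A) (hR : h ∈ R) (hD : h ∉ D) {u : V}
    (hu : u ∈ alt Γ D π h) : ∃ D' π', Aug Γ R D π h (alt Γ D π h) u D' π' := by
  obtain ⟨n, hn⟩ := hu
  obtain ⟨D', π', H⟩ := lk.exists_aug_lvl hA hR hD n u hn
  exact ⟨D', π', H.mono fun v hv => ⟨n, hv⟩⟩

end alt

/-- Backward iteration in a modified system still terminates outside `S`: if it is eventually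
unmodified it terminates since the old system does; otherwise injectivity produces a cycle, which
avoids `S` and hence is unmodified. -/
theorem fin_of_finite_change {A D D' S K : Set V} {π π' : V → V}
    (fin : ∀ v ∈ D, ∃ n, π^[n] v ∈ A)
    (cl : ∀ v ∈ D', v ∉ A → π' v ∈ D')
    (inj : ∀ v ∈ D', ∀ w ∈ D', v ∉ A → w ∉ A → π' v = π' w → v = w)
    (hK : K.Finite) (hKD : ∀ v ∈ D', v ∉ K → v ∈ D ∧ π' v = π v)
    (hKS : ∀ v ∈ D', v ∉ A → v ∈ K → π' v ∈ S) (hS : ∀ v ∈ D, v ∈ S → π v ∈ S)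
    {v : V} (hv : v ∈ D') (hvS : v ∉ S) : ∃ n, π'^[n] v ∈ A := by
  by_contra! hc
  have hD' : ∀ k, π'^[k] v ∈ D' := by
    intro k
    induction k with
    | zero => exact hv
    | succ k ih => rw [Function.iterate_succ_apply']; exact cl _ ih (hc k)
  have fin' : ∃ k₀, ∀ k ≥ k₀, π'^[k] v ∉ K := by
    by_cases hi : Function.Injective (fun k => π'^[k] v)
    · have : {k | π'^[k] v ∈ K}.Finite := hK.preimage hi.injOn
      obtain ⟨b, hb⟩ := this.bddAbove
      exact ⟨b + 1, fun k hk h => by have := hb h; omega⟩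
    · have hper : ∃ m, 0 < m ∧ π'^[m] v = v := by
        have : ∀ i j, i < j → π'^[i] v = π'^[j] v → π'^[j - i] v = v := by
          intro i
          induction i with
          | zero => intro j _ h; simpa using h.symm
          | succ i ih =>
            intro j hj h
            obtain ⟨j, rfl⟩ : ∃ j', j = j' + 1 := ⟨j - 1, by omega⟩
            rw [Function.iterate_succ_apply', Function.iterate_succ_apply'] at h
            have := ih j (by omega) (inj _ (hD' i) _ (hD' j) (hc i) (hc j) h)
            rwa [Nat.add_sub_add_right]
        simp only [Function.Injective, not_forall] at hi
        obtain ⟨i, j, h, hne⟩ := hi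
        rcases lt_or_gt_of_ne hne with h1 | h1
        · exact ⟨j - i, by omega, this i j h1 h⟩
        · exact ⟨i - j, by omega, this j i h1 h.symm⟩
      obtain ⟨m, hm, hmv⟩ := hper
      have hmt : ∀ t, π'^[m * t] v = v := by
        intro t
        rw [Function.iterate_mul]
        exact Function.iterate_fixed hmv t
      have back : ∀ j k, π'^[k + j] v ∉ S → π'^[k] v ∉ S := by
        intro j
        induction j with
        | zero => exact fun k h => h
        | succ j ih =>
          intro k h
          refine ih k fun h1 => h ?_
          rw [← add_assoc, Function.iterate_succ_apply']
          by_cases hk : π'^[k + j] v ∈ K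
          · exact hKS _ (hD' _) (hc _) hk
          · obtain ⟨h2, h3⟩ := hKD _ (hD' _) hk
            rw [h3]; exact hS _ h2 h1
      have hnS : ∀ k, π'^[k] v ∉ S := by
        intro k
        refine back (m * k - k) k ?_
        have : k + (m * k - k) = m * k := by
          have : k ≤ m * k := Nat.le_mul_of_pos_left k hm
          omega
        rw [this, hmt]; exact hvS
      refine ⟨0, fun k _ hk => hnS (k + 1) ?_⟩
      rw [Function.iterate_succ_apply']
      exact hKS _ (hD' _) (hc _) hk
  obtain ⟨k₀, hk₀⟩ := fin'
  have hsame : ∀ j, π^[j] (π'^[k₀] v) = π'^[k₀ + j] v := by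
    intro j
    induction j with
    | zero => rfl
    | succ j ih =>
      rw [Function.iterate_succ_apply', ih, ← add_assoc, Function.iterate_succ_apply',
        (hKD _ (hD' (k₀ + j)) (hk₀ _ (by omega))).2]
  obtain ⟨n, hn⟩ := fin _ (hKD _ (hD' k₀) (hk₀ k₀ le_rfl)).1
  rw [hsame] at hn
  exact hc _ hn

/-- If deleting `x` produces a hindrance with unused source `h`, then either the web itself is
hindered, or the path system of the hindrance can be rerouted to use `h` and to cover `x`. -/
theorem core {x h : V} {R D : Set V} {π : V → V} (hxA : x ∉ Γ.A) (hxR : x ∉ R)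
    (lk : IsLk (Γ.delete {x}) R D π) (hA : h ∈ Γ.A) (hR : h ∈ R) (hD : h ∉ D) :
    Hind Γ ∨ (x ∈ Γ.bd R ∧ ∃ D' π', IsLk Γ R D' π' ∧ ∀ a ∈ D', a ∈ Γ.A → a ∈ D ∨ a = h) := by
  classical
  set Γ' := Γ.delete {x} with hΓ'
  set S := alt Γ' D π h with hS
  have hxh : h ≠ x := fun e => hxA (e ▸ hA)
  have hA' : ∀ a, a ∈ Γ'.A ↔ a ∈ Γ.A := by
    intro a
    constructor
    · exact fun h => h.1
    · exact fun h => ⟨h, fun e => hxA ((show a = x from e) ▸ h)⟩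
  have hxD : x ∉ D := fun h1 => (iso_delete {x}).notMem lk.toSys h1 rfl
  have hadj : ∀ u v, v ≠ x → u ∈ R → Γ.Adj u v → Γ'.Adj u v := by
    intro u v hv hu e
    exact ⟨e, fun h => hxR ((show u = x from h) ▸ hu), hv⟩
  have hSR := lk.alt_sub hR
  by_cases hu : ∃ u ∈ S, Γ.Adj u x
  · right
    obtain ⟨u, hu, hux⟩ := hu
    have huR := hSR u hu
    refine ⟨⟨Or.inr ⟨u, huR, hux⟩, hxR⟩, ?_⟩
    obtain ⟨D', π', H⟩ := lk.exists_aug ((hA' h).2 hA) hR hD hu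
    have hxD' : x ∉ D' := fun h1 => hxR (hSR x (H.new x h1 hxD))
    set σ := Function.update π' x u with hσ
    have up : ∀ y ∈ D', σ y = π' y := fun y hy =>
      Function.update_of_ne (fun e : y = x => hxD' (e ▸ hy)) _ _
    have upx : σ x = u := Function.update_self ..
    set E := insert x D' with hE
    have hEcl : ∀ v ∈ E, v ∉ Γ.A → σ v ∈ E := by
      rintro v (rfl | hv) hvA
      · rw [upx]; exact Or.inr H.mem
      · rw [up v hv]; exact Or.inr (H.cl v hv fun h => hvA ((hA' _).1 h))
    have hEinj : ∀ v ∈ E, ∀ w ∈ E, v ∉ Γ.A → w ∉ Γ.A → σ v = σ w → v = w := by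
      rintro v (rfl | hv) w (rfl | hw) hvA hwA
      · exact fun _ => rfl
      · rw [upx, up w hw]
        exact fun e => absurd e.symm (H.free w hw fun h => hwA ((hA' _).1 h))
      · rw [upx, up v hv]
        exact fun e => absurd e (H.free v hv fun h => hvA ((hA' _).1 h))
      · rw [up v hv, up w hw]
        exact H.inj v hv w hw (fun h => hvA ((hA' _).1 h)) (fun h => hwA ((hA' _).1 h))
    have hpred : ∀ v ∈ E, v ∉ Γ.A → σ v ∈ R := by
      rintro v (rfl | hv) hvA
      · rw [upx]; exact huR
      · rw [up v hv]; exact H.pred v hv fun h => hvA ((hA' _).1 h)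
    have hEadj : ∀ v ∈ E, v ∉ Γ.A → Γ.Adj (σ v) v := by
      rintro v (rfl | hv) hvA
      · rw [upx]; exact hux
      · rw [up v hv]; exact (H.adj v hv fun h => hvA ((hA' _).1 h)).1
    have hfin : ∀ v ∈ E, v ∉ S → ∃ n, σ^[n] v ∈ Γ.A := by
      intro v hv hvS
      refine fin_of_finite_change (D := D) (D' := E) (S := S) (π := π)
        (K := insert x {v | ¬ (v ∈ D ↔ v ∈ D') ∨ π' v ≠ π v}) ?_ hEcl hEinj (H.finite.insert x)
        ?_ ?_ (fun v h1 h2 => alt_back h2 h1) hv hvS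
      · intro v hv
        obtain ⟨n, hn⟩ := lk.fin v hv
        exact ⟨n, hn.1⟩
      · rintro v (rfl | hv) hvK
        · exact absurd (Or.inl rfl) hvK
        · have h1 : ¬ (¬ (v ∈ D ↔ v ∈ D') ∨ π' v ≠ π v) := fun h => hvK (Or.inr h)
          push Not at h1
          rw [up v hv]
          exact ⟨h1.1.2 hv, h1.2⟩
      · rintro v (rfl | hv) hvA hvK
        · rw [upx]; exact hu
        · have h1 : (¬ (v ∈ D ↔ v ∈ D') ∨ π' v ≠ π v) := by
            rcases hvK with h | h
            · exact absurd (h ▸ hv) hxD'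
            · exact h
          rw [up v hv]
          refine H.chg' v hv (fun h => hvA ((hA' _).1 h)) (h1.imp (fun h1 h2 => h1 ⟨fun _ => hv,
            fun _ => h2⟩) id)
    refine ⟨{v | v ∈ E ∧ ∃ n, σ^[n] v ∈ Γ.A}, σ, ⟨⟨?_, ?_, ?_, ?_, ?_⟩, ?_, ?_, ?_, ?_⟩, ?_⟩
    · rintro a ⟨rfl | ha, -⟩ haA
      · exact absurd haA hxA
      · rw [up a ha]; exact H.src a ha ((hA' a).2 haA)
    · rintro v ⟨hv, n, hn⟩ hvA
      refine ⟨hEcl v hv hvA, ?_⟩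
      cases n with
      | zero => exact absurd hn hvA
      | succ n => exact ⟨n, hn⟩
    · exact fun v hv => hEadj v hv.1
    · exact fun v hv w hw => hEinj v hv.1 w hw.1
    · exact fun v hv => hv.2
    · intro v hv hB
      exact lk.avoid v hv ⟨hB, fun e => hxR ((show v = x from e) ▸ hv)⟩
    · exact fun v hv => hpred v hv.1
    · rintro v ⟨hv, hvR⟩
      have hvS : v ∉ S := fun h => hvR (hSR v h)
      have : v ∈ E := by
        by_cases hvx : v = x
        · exact Or.inl hvx
        · right
          by_contra hc
          refine hvS (H.old v (lk.bdD v ⟨?_, hvR⟩) hc)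
          rcases hv with hv | ⟨w, hw, e⟩
          · exact Or.inl ((hA' v).2 hv)
          · exact Or.inr ⟨w, hw, hadj w v hvx hw e⟩
      exact ⟨this, hfin v this hvS⟩
    · rintro v ⟨hv, -⟩
      by_cases hvA : v ∈ Γ.A
      · exact A_sub Γ R hvA
      · exact adj_sub Γ R (hpred v hv hvA) (hEadj v hv hvA)
    · rintro a ⟨rfl | ha, -⟩ haA
      · exact absurd haA hxA
      · exact H.srcs a ha ((hA' a).2 haA)
  · left
    have sh := lk.shrink hR
    refine ⟨S, _, _, h, ⟨⟨fun a ha haA => sh.src a ha ((hA' a).2 haA),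
      fun v hv hvA => sh.cl v hv fun h => hvA ((hA' v).1 h),
      fun v hv hvA => (sh.adj v hv fun h => hvA ((hA' v).1 h)).1,
      fun v hv w hw hvA hwA => sh.inj v hv w hw (fun h => hvA ((hA' v).1 h))
        (fun h => hwA ((hA' w).1 h)), ?_⟩, ?_,
      fun v hv hvA => sh.pred v hv fun h => hvA ((hA' v).1 h), ?_, ?_⟩, hA, mem_alt_self, ?_⟩
    · intro v hv
      obtain ⟨n, hn⟩ := sh.fin v hv
      exact ⟨n, hn.1⟩
    · intro v hv hB
      exact sh.avoid v hv ⟨hB, fun e => hxR ((show v = x from e) ▸ hSR v hv)⟩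
    · rintro v ⟨hv, hvS⟩
      refine sh.bdD v ⟨?_, hvS⟩
      rcases hv with hv | ⟨w, hw, e⟩
      · exact Or.inl ((hA' v).2 hv)
      · exact Or.inr ⟨w, hw, hadj w v (fun h => hu ⟨w, hw, h ▸ e⟩) (hSR w hw) e⟩
    · intro v hv
      refine (sh.sub v hv).imp id fun h => ⟨?_, h.2⟩
      exact h.1.imp (fun h => h.1) fun ⟨w, hw, e⟩ => ⟨w, hw, e.1⟩
    · rintro (h1 | h1)
      · exact hD h1.1
      · exact h1.2 mem_alt_self

end Web

end

/-! ### Deleting vertices from unhindered webs -/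

section

namespace Web
variable {V : Type*} {Γ : Web V}

/-- The largest wave region together with its boundary. -/
def clo (Γ : Web V) : Set V := Γ.Rm ∪ Γ.bd Γ.Rm

theorem IsLk.sub_clo {R D : Set V} {π : V → V} (h : IsLk Γ R D π) {v : V}
    (hv : v ∈ R ∪ Γ.bd R) : v ∈ Γ.clo := by
  rcases hv with hv | ⟨hv | ⟨u, hu, e⟩, -⟩
  · exact Or.inl (h.subset_Rm hv)
  · exact A_sub _ _ hv
  · exact adj_sub _ _ (h.subset_Rm hu) e

theorem A_sub_clo {v : V} (hv : v ∈ Γ.A) : v ∈ Γ.clo := A_sub _ _ hv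

/-- Deleting a vertex outside the closure of the largest wave creates no hindrance. -/
theorem unhind_delete_of_notMem_clo (hΓ : ¬ Hind Γ) {x : V} (hx : x ∉ Γ.clo) :
    ¬ Hind (Γ.delete {x}) := by
  rintro ⟨R, D, π, h, lk, hA, hR, hD⟩
  have hxA : x ∉ Γ.A := fun h => hx (A_sub_clo h)
  have hhx : h ∉ ({x} : Set V) := hA.2
  rcases core hxA (R := R \ {x}) (fun h => h.2 rfl) (lk.diff_iso (iso_delete {x})) hA.1 ⟨hR, hhx⟩ hD
    with h1 | ⟨h1, D', π', lk', -⟩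
  · exact hΓ h1
  · exact hx (lk'.sub_clo (Or.inr h1))

/-- Deleting a source creates no hindrance. -/
theorem unhind_delete_source (hΓ : ¬ Hind Γ) {a : V} (ha : a ∈ Γ.A) :
    ¬ Hind (Γ.delete {a}) := by
  classical
  rintro ⟨R, D, π, h, lk₀, hA, hR, hD⟩
  have lk := lk₀.diff_iso (iso_delete {a})
  have haD : a ∉ D := fun h1 => (iso_delete {a}).notMem lk.toSys h1 rfl
  have hne : ∀ v ∈ D, v ≠ a := fun v hv e => haD (e ▸ hv)
  have hAA : ∀ v ∈ D, v ∉ Γ.A → v ∉ (Γ.delete {a}).A := fun v _ h1 h2 => h1 h2.1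
  have up : ∀ v ∈ D, Function.update π a a v = π v := fun v hv =>
    Function.update_of_ne (hne v hv) _ _
  refine hΓ ⟨R \ {a}, insert a D, Function.update π a a, h, ⟨⟨?_, ?_, ?_, ?_, ?_⟩, ?_, ?_, ?_, ?_⟩,
    hA.1, ⟨hR, hA.2⟩, ?_⟩
  · rintro v (rfl | hv) hvA
    · simp
    · rw [up v hv]; exact lk.src v hv ⟨hvA, hne v hv⟩
  · rintro v (rfl | hv) hvA
    · exact absurd ha hvA
    · rw [up v hv]; exact Or.inr (lk.cl v hv (hAA v hv hvA))
  · rintro v (rfl | hv) hvA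
    · exact absurd ha hvA
    · rw [up v hv]; exact (lk.adj v hv (hAA v hv hvA)).1
  · rintro v (rfl | hv) w (rfl | hw) hvA hwA
    · exact fun _ => rfl
    · exact absurd ha hvA
    · exact absurd ha hwA
    · rw [up v hv, up w hw]; exact lk.inj v hv w hw (hAA v hv hvA) (hAA w hw hwA)
  · rintro v (rfl | hv)
    · exact ⟨0, ha⟩
    · refine lk.toSys.ind (P := fun v => ∃ n, (Function.update π a a)^[n] v ∈ Γ.A)
        (fun b _ hb => ⟨0, hb.1⟩) (fun v hv _ ih => reach_step ?_) v hv
      rwa [up v hv]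
  · intro v hv hB
    exact lk.avoid v hv ⟨hB, hv.2⟩
  · rintro v (rfl | hv) hvA
    · exact absurd ha hvA
    · rw [up v hv]; exact lk.pred v hv (hAA v hv hvA)
  · rintro v ⟨hv, hvR⟩
    by_cases hva : v = a
    · exact Or.inl hva
    · refine Or.inr (lk.bdD v ⟨?_, hvR⟩)
      exact hv.imp (fun h => ⟨h, hva⟩) fun ⟨u, hu, e⟩ => ⟨u, hu, e, hu.2, hva⟩
  · rintro v (rfl | hv)
    · exact Or.inr ⟨Or.inl ha, fun h => h.2 rfl⟩
    · refine (lk.sub v hv).imp id fun h => ⟨?_, h.2⟩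
      exact h.1.imp (fun h => h.1) fun ⟨w, hw, e⟩ => ⟨w, hw, e.1⟩
  · rintro (h1 | h1)
    · exact hA.2 h1
    · exact hD h1

/-- A path system avoiding `Y` which covers the boundary after deleting `Y` is a wave there. -/
theorem Sys.isLk_delete {R D Y : Set V} {π : V → V} (h : Sys Γ D π) (hY : ∀ v ∈ D, v ∉ Y)
    (avoid : ∀ v ∈ R, v ∉ Γ.B) (pred : ∀ v ∈ D, v ∉ Γ.A → π v ∈ R)
    (hbd : ∀ v ∈ (Γ.delete Y).bd (R \ Y), v ∈ D) : IsLk (Γ.delete Y) (R \ Y) D π := by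
  have hA : ∀ v ∈ D, v ∉ (Γ.delete Y).A → v ∉ Γ.A := fun v hv h1 h2 => h1 ⟨h2, hY v hv⟩
  refine ⟨⟨fun a ha haA => h.src a ha haA.1, fun v hv hvA => h.cl v hv (hA v hv hvA),
    fun v hv hvA => ⟨h.adj v hv (hA v hv hvA), hY _ (h.cl v hv (hA v hv hvA)), hY v hv⟩,
    fun v hv w hw hvA hwA => h.inj v hv w hw (hA v hv hvA) (hA w hw hwA), ?_⟩,
    fun v hv hB => avoid v hv.1 hB.1,
    fun v hv hvA => ⟨pred v hv (hA v hv hvA), hY _ (h.cl v hv (hA v hv hvA))⟩, hbd, ?_⟩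
  · intro v hv
    obtain ⟨n, hn⟩ := h.fin v hv
    exact ⟨n, hn, hY _ (h.iter hv n)⟩
  · intro v hv
    by_cases hvA : v ∈ Γ.A
    · exact A_sub (Γ.delete Y) _ ⟨hvA, hY v hv⟩
    · exact adj_sub (Γ.delete Y) _ ⟨pred v hv hvA, hY _ (h.cl v hv hvA)⟩
        ⟨h.adj v hv hvA, hY _ (h.cl v hv hvA), hY v hv⟩

theorem bd_delete_sub {R Y : Set V} {v : V} (hv : v ∈ (Γ.delete Y).bd (R \ Y)) :
    v ∈ Γ.bd R ∧ v ∉ Y := by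
  obtain ⟨hv, hvR⟩ := hv
  have hY : v ∉ Y := by
    rcases hv with h | ⟨u, -, h⟩
    · exact h.2
    · exact h.2.2
  refine ⟨⟨hv.imp (fun h => h.1) fun ⟨u, hu, e⟩ => ⟨u, hu.1, e.1⟩, fun h => hvR ⟨h, hY⟩⟩, hY⟩

theorem mem_bd_delete {R D Y : Set V} {π : V → V} (h : Sys Γ D π) (hY : ∀ v ∈ D, v ∉ Y)
    (pred : ∀ v ∈ D, v ∉ Γ.A → π v ∈ R) {v : V} (hv : v ∈ D) (hvR : v ∉ R) :
    v ∈ (Γ.delete Y).bd (R \ Y) := by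
  refine ⟨?_, fun h => hvR h.1⟩
  by_cases hA : v ∈ Γ.A
  · exact Or.inl ⟨hA, hY v hv⟩
  · have := h.cl v hv hA
    exact Or.inr ⟨π v, ⟨pred v hv hA, hY _ this⟩, h.adj v hv hA, hY _ this, hY v hv⟩

/-- If deleting a non-source `y` leaves an unhindered web, then every wave restricts to a wave of
that web, using no new sources and losing no boundary vertices other than `y`. -/
theorem IsLk.delRegion {R D : Set V} {π : V → V} (lk : IsLk Γ R D π) {y : V} (hyA : y ∉ Γ.A)
    (hun : ¬ Hind (Γ.delete {y})) :
    ∃ D' π', IsLk (Γ.delete {y}) (R \ {y}) D' π' ∧ (∀ a ∈ D', a ∈ Γ.A → a ∈ D) ∧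
      ∀ v ∈ Γ.bd R, v ≠ y → v ∈ (Γ.delete {y}).bd (R \ {y}) := by
  -- the case where a part of the system avoids `y` and still covers the boundary
  have easy : ∀ X : Set V, (y ∈ D → root Γ.A π y ∈ X) →
      (∀ v ∈ Γ.bd R, v ≠ y → root Γ.A π v ∉ X) →
      ∃ D' π', IsLk (Γ.delete {y}) (R \ {y}) D' π' ∧ (∀ a ∈ D', a ∈ Γ.A → a ∈ D) ∧
        ∀ v ∈ Γ.bd R, v ≠ y → v ∈ (Γ.delete {y}).bd (R \ {y}) := by
    intro X hyX hX
    have hs := lk.toSys.drop X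
    have hy : ∀ v ∈ {v | v ∈ D ∧ root Γ.A π v ∉ X}, v ∉ ({y} : Set V) := by
      rintro v hv rfl
      exact hv.2 (hyX hv.1)
    refine ⟨_, π, hs.isLk_delete hy lk.avoid (fun v hv => lk.pred v hv.1) ?_, fun a ha _ => ha.1, ?_⟩
    · intro v hv
      obtain ⟨h1, h2⟩ := bd_delete_sub hv
      exact ⟨lk.bdD v h1, hX v h1 h2⟩
    · intro v hv hvy
      exact mem_bd_delete hs hy (fun v hv => lk.pred v hv.1) ⟨lk.bdD v hv, hX v hv hvy⟩ hv.2
  by_cases hyD : y ∈ D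
  swap
  · exact easy ∅ (fun h => absurd h hyD) (fun _ _ _ h => h)
  set a := root Γ.A π y with ha
  obtain ⟨haA, haD⟩ := lk.toSys.root_mem hyD
  by_cases hyR : y ∈ R
  swap
  · have hyb := (lk.sub y hyD).resolve_left hyR
    exact easy {a} (fun _ => rfl) fun v hv hvy e => hvy (lk.bd_root_inj hv hyb e)
  by_cases ht : ∃ t ∈ Γ.bd R, root Γ.A π t = a
  swap
  · push Not at ht
    exact easy {a} (fun _ => rfl) fun v hv _ => ht v hv
  obtain ⟨t, htb, hta⟩ := ht
  have hty : t ≠ y := fun e => htb.2 (e ▸ hyR)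
  -- `t` is not a source, since `y` lies before it on its path
  have htA : t ∉ Γ.A := by
    intro h
    rw [root_of_mem h] at hta
    obtain ⟨n, hn⟩ := lk.toSys.exists_root hyD
    rw [← ha, ← hta] at hn
    rcases lk.anc hyD n with h1 | h1
    · exact hty (hn.symm.trans h1)
    · exact htb.2 (hn ▸ h1)
  have haR : a ∈ R := by
    by_contra hc
    have hab : a ∈ Γ.bd R := ⟨Or.inl haA, hc⟩
    have := lk.bd_root_inj hab htb (by rw [root_of_mem haA, hta])
    exact htA (this ▸ haA)
  have hay : a ≠ y := fun e => hyA (e ▸ haA)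
  have hs := lk.toSys.drop {a}
  set D₀ := {v | v ∈ D ∧ root Γ.A π v ∉ ({a} : Set V)} with hD₀
  have hy0 : ∀ v ∈ D₀, v ∉ ({y} : Set V) := by
    rintro v hv rfl
    exact hv.2 rfl
  have ha0 : a ∉ D₀ := fun h => h.2 (root_of_mem haA)
  have hbd0 : ∀ v ∈ Γ.bd R, v ≠ t → v ∈ D₀ := fun v hv hvt =>
    ⟨lk.bdD v hv, fun e => hvt (lk.bd_root_inj hv htb (Eq.trans e hta.symm))⟩
  by_cases htb' : t ∈ (Γ.delete {y}).bd (R \ {y})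
  swap
  · refine absurd ⟨_, _, _, a, hs.isLk_delete hy0 lk.avoid (fun v hv => lk.pred v hv.1) ?_,
      ⟨haA, hay⟩, ⟨haR, hay⟩, ha0⟩ hun
    intro v hv
    refine hbd0 v (bd_delete_sub hv).1 ?_
    rintro rfl
    exact htb' hv
  have hyt0 : ∀ v ∈ D₀, v ∉ ({y} ∪ {t} : Set V) := by
    rintro v hv (h | rfl)
    · exact hy0 v hv h
    · exact hv.2 hta
  have e1 : R \ {y} = R \ ({y} ∪ {t}) := by
    ext v
    simp only [Set.mem_sdiff, Set.mem_union, Set.mem_singleton_iff]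
    constructor
    · rintro ⟨h1, h2⟩
      exact ⟨h1, fun h => h.elim h2 fun h => htb.2 (h ▸ h1)⟩
    · rintro ⟨h1, h2⟩
      exact ⟨h1, fun h => h2 (Or.inl h)⟩
  have lk₀ : IsLk ((Γ.delete {y}).delete {t}) (R \ {y}) D₀ π := by
    rw [delete_delete, e1]
    refine hs.isLk_delete hyt0 lk.avoid (fun v hv => lk.pred v hv.1) ?_
    intro v hv
    obtain ⟨h1, h2⟩ := bd_delete_sub hv
    exact hbd0 v h1 fun h => h2 (Or.inr h)
  rcases core (Γ := Γ.delete {y}) (fun h => htA h.1) htb'.2 lk₀ ⟨haA, hay⟩ ⟨haR, hay⟩ ha0 with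
    h | ⟨-, D', π', lk', hsrc⟩
  · exact absurd h hun
  · refine ⟨D', π', lk', ?_, ?_⟩
    · intro b hb hbA
      have hby : b ∉ ({y} : Set V) := fun e => hyA ((show b = y from e) ▸ hbA)
      rcases hsrc b hb ⟨hbA, hby⟩ with h | rfl
      · exact h.1
      · exact haD
    · intro v hv hvy
      by_cases hvt : v = t
      · rw [hvt]; exact htb'
      · exact mem_bd_delete hs hy0 (fun v hv => lk.pred v hv.1) (hbd0 v hv hvt) hv.2

/-- Restoring a non-source vertex to an unhindered web creates no hindrance. -/
theorem unhind_of_delete {y : V} (hyA : y ∉ Γ.A) (hun : ¬ Hind (Γ.delete {y})) : ¬ Hind Γ := by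
  rintro ⟨R, D, π, h, lk, hA, hR, hD⟩
  obtain ⟨D', π', lk', h1, -⟩ := lk.delRegion hyA hun
  have hy : h ≠ y := fun e => hyA (e ▸ hA)
  exact hun ⟨_, _, _, h, lk', ⟨hA, hy⟩, ⟨hR, hy⟩, fun h2 => hD (h1 h h2 hA)⟩

theorem unhind_of_delete_finite {Y : Set V} (hf : Y.Finite) : ∀ {Γ : Web V}, (∀ y ∈ Y, y ∉ Γ.A) →
    ¬ Hind (Γ.delete Y) → ¬ Hind Γ := by
  induction Y, hf using Set.Finite.induction_on with
  | empty => intro Γ _ h; rwa [delete_empty] at h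
  | @insert a s _ _ ih =>
    intro Γ hA h
    refine unhind_of_delete (y := a) (hA a (Or.inl rfl)) (ih (fun y hy h => hA y (Or.inr hy) h.1) ?_)
    rwa [delete_delete, Set.singleton_union]

/-- Deleting a non-source from a web and staying unhindered can only shrink closures by that
vertex. -/
theorem clo_sub_delete {y : V} (hyA : y ∉ Γ.A) (hun : ¬ Hind (Γ.delete {y})) {v : V}
    (hv : v ∈ Γ.clo) : v ∈ (Γ.delete {y}).clo := by
  by_cases hvy : v = y
  · subst hvy
    exact Or.inl (mem_Rm_of_iso (iso_delete _) rfl)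
  obtain ⟨D, π, lk⟩ := Γ.exists_Rm
  obtain ⟨D', π', lk', -, h2⟩ := lk.delRegion hyA hun
  rcases hv with hv | hv
  · exact lk'.sub_clo (Or.inl ⟨hv, hvy⟩)
  · exact lk'.sub_clo (Or.inr (h2 v hv hvy))

theorem clo_sub_delete_finite {Y : Set V} (hf : Y.Finite) : ∀ {Γ : Web V}, (∀ y ∈ Y, y ∉ Γ.A) →
    ¬ Hind (Γ.delete Y) → ∀ v ∈ Γ.clo, v ∈ (Γ.delete Y).clo := by
  induction Y, hf using Set.Finite.induction_on with
  | empty => intro Γ _ _ v hv; rwa [delete_empty]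
  | @insert a s _ hs ih =>
    intro Γ hA h v hv
    rw [← Set.singleton_union, ← delete_delete] at h ⊢
    have h1 : ∀ y ∈ s, y ∉ (Γ.delete {a}).A := fun y hy h => hA y (Or.inr hy) h.1
    refine ih h1 h v (clo_sub_delete (hA a (Or.inl rfl)) (unhind_of_delete_finite hs h1 h) hv)

end Web

end

/-! ### Closures of waves under deletions and quotients -/

section

namespace Web
variable {V : Type*} {Γ : Web V}

theorem isLk_delete_of_notMem {R D X : Set V} {π : V → V} (lk : IsLk Γ R D π)
    (hX : ∀ x ∈ X, x ∉ R ∪ Γ.bd R) : IsLk (Γ.delete X) R D π ∧ (Γ.delete X).bd R = Γ.bd R := by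
  have hRX : R \ X = R := by
    ext v; exact ⟨fun h => h.1, fun h => ⟨h, fun h' => hX v h' (Or.inl h)⟩⟩
  have hD : ∀ v ∈ D, v ∉ X := fun v hv h => hX v h (lk.sub v hv)
  have h1 := lk.toSys.isLk_delete (R := R) hD lk.avoid lk.pred
    (fun v hv => lk.bdD v (bd_delete_sub hv).1)
  refine ⟨by rwa [hRX] at h1, ?_⟩
  ext v
  constructor
  · intro hv
    rw [← hRX] at hv
    exact (bd_delete_sub hv).1
  · intro hv
    have := mem_bd_delete lk.toSys hD lk.pred (lk.bdD v hv) hv.2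
    rwa [hRX] at this

theorem Rm_sub_delete {X : Set V} (hX : ∀ x ∈ X, x ∉ Γ.clo) {v : V} (hv : v ∈ Γ.Rm) :
    v ∈ (Γ.delete X).Rm := by
  obtain ⟨D, π, lk⟩ := Γ.exists_Rm
  exact (isLk_delete_of_notMem lk hX).1.subset_Rm hv

theorem clo_sub_delete_of_notMem {X : Set V} (hX : ∀ x ∈ X, x ∉ Γ.clo) {v : V} (hv : v ∈ Γ.clo) :
    v ∈ (Γ.delete X).clo := by
  obtain ⟨D, π, lk⟩ := Γ.exists_Rm
  obtain ⟨h1, h2⟩ := isLk_delete_of_notMem lk hX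
  refine h1.sub_clo ?_
  rw [h2]; exact hv

/-- Quotients commute with the deletion of vertices away from the region. -/
theorem quot_delete {R X : Set V} (hX : ∀ x ∈ X, x ∉ R ∪ Γ.bd R)
    (hbd : (Γ.delete X).bd R = Γ.bd R) : (Γ.quot R).delete X = (Γ.delete X).quot R := by
  have e1 : Γ.bd R \ X = Γ.bd R := by
    ext v; exact ⟨fun h => h.1, fun h => ⟨h, fun h' => hX v h' (Or.inr h)⟩⟩
  simp only [delete, quot, Web.mk.injEq]
  refine ⟨?_, ?_, ?_⟩
  · funext u v
    have : (Γ.delete X).bd R = Γ.bd R := hbd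
    simp only [delete] at this
    rw [this]
    apply propext
    tauto
  · rw [e1]; exact hbd.symm
  · ext v; simp only [Set.mem_sdiff]; tauto

theorem clo_quot {R D : Set V} {π : V → V} (lk : IsLk Γ R D π) : (Γ.quot R).clo = Γ.clo := by
  have iso := iso_quot (Γ := Γ) R
  apply Set.Subset.antisymm
  · have hR : ∀ v ∈ (Γ.quot R).Rm, v ∈ Γ.Rm := by
      intro v hv
      obtain ⟨E, ρ, h⟩ := (Γ.quot R).exists_Rm
      have h' : IsLk ((Γ.delete (Pos.ofLk lk).N).quot (Pos.ofLk lk).R) (Γ.quot R).Rm E ρ := by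
        change IsLk ((Γ.delete ∅).quot R) _ _ _
        rw [delete_empty]; exact h
      obtain ⟨q, -, hN, hqR, -⟩ := (Pos.ofLk lk).compose h'
      have hq := q.lk
      rw [hN] at hq
      change IsLk (Γ.delete ∅) _ _ _ at hq
      rw [delete_empty, hqR] at hq
      by_cases hvR : v ∈ R
      · exact lk.subset_Rm hvR
      · exact hq.subset_Rm (Or.inl ⟨hv, fun h => h.elim (fun h => h.elim) hvR⟩)
    rintro v (hv | ⟨hv | ⟨u, hu, e⟩, -⟩)
    · exact Or.inl (hR v hv)
    · exact lk.sub_clo (Or.inr hv)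
    · exact adj_sub _ _ (hR u hu) e.1
  · have hR : ∀ v ∈ Γ.Rm, v ∈ (Γ.quot R).Rm := by
      intro v hv
      by_cases hvR : v ∈ R
      · exact mem_Rm_of_iso iso hvR
      obtain ⟨E, ρ, h⟩ := Γ.exists_Rm
      obtain ⟨q, hq, hN, hqR⟩ := lk.union h
      have hlk := q.lk
      rw [hN, delete_empty] at hlk
      have hb : ∀ v, v ∈ Γ.A → v ∉ R → v ∈ Γ.bd R := fun v hv h => ⟨Or.inl hv, h⟩
      have hπ : ∀ v ∈ q.D, v ∉ R → v ∉ Γ.bd R → q.π v ∉ R := fun v hv h1 h2 h3 =>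
        h2 ⟨Or.inr ⟨_, h3, hlk.adj v hv fun h => h2 (hb v h h1)⟩, h1⟩
      classical
      have hm : IsLk (Γ.quot R) (q.R \ R) (q.D \ R)
          (fun v => if v ∈ Γ.bd R then v else q.π v) := by
        refine ⟨⟨?_, ?_, ?_, ?_, ?_⟩, ?_, ?_, ?_, ?_⟩
        · intro x _ hx; exact if_pos hx
        · intro x hx hxA
          simp only [if_neg (show x ∉ Γ.bd R from hxA)]
          exact ⟨hlk.cl' hx.1, hπ x hx.1 hx.2 hxA⟩
        · intro x hx hxA
          simp only [if_neg (show x ∉ Γ.bd R from hxA)]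
          exact ⟨hlk.adj x hx.1 fun h => hxA (hb x h hx.2), hπ x hx.1 hx.2 hxA, hx.2, hxA⟩
        · intro x hx y hy hxA hyA e
          simp only [if_neg (show x ∉ Γ.bd R from hxA), if_neg (show y ∉ Γ.bd R from hyA)] at e
          exact hlk.inj x hx.1 y hy.1 (fun h => hxA (hb x h hx.2)) (fun h => hyA (hb y h hy.2)) e
        · rintro x ⟨hx, hxR⟩
          revert hxR
          refine hlk.toSys.ind (P := fun x => x ∉ R → ∃ n,
            (fun v => if v ∈ Γ.bd R then v else q.π v)^[n] x ∈ (Γ.quot R).A) ?_ ?_ x hx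
          · intro x _ hxA hxR; exact ⟨0, hb x hxA hxR⟩
          · intro x hx hxA ih hxR
            by_cases h : x ∈ Γ.bd R
            · exact ⟨0, h⟩
            · apply reach_step
              simp only [if_neg h]
              exact ih (hπ x hx hxR h)
        · intro x hx h; exact hlk.avoid x hx.1 h.1
        · intro x hx hxA
          simp only [if_neg (show x ∉ Γ.bd R from hxA)]
          exact ⟨hlk.pred x hx.1 fun h => hxA (hb x h hx.2), hπ x hx.1 hx.2 hxA⟩
        · rintro x ⟨hx, hxR⟩
          rcases hx with hx | ⟨u, hu, e⟩
          · have h1 : x ∉ q.R := fun h => hxR ⟨h, hx.2⟩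
            refine ⟨hlk.bdD x ⟨?_, h1⟩, hx.2⟩
            rcases hx.1 with h | ⟨u, hu, e⟩
            · exact Or.inl h
            · exact Or.inr ⟨u, by rw [hqR]; exact Or.inr hu, e⟩
          · exact ⟨hlk.bdD x ⟨Or.inr ⟨u, hu.1, e.1⟩, fun h => hxR ⟨h, e.2.2.1⟩⟩, e.2.2.1⟩
        · rintro x ⟨hx, hxR⟩
          by_cases h : x ∈ q.R
          · exact Or.inl ⟨h, hxR⟩
          · refine Or.inr ⟨?_, fun h' => h h'.1⟩
            by_cases hx2 : x ∈ Γ.bd R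
            · exact Or.inl hx2
            · have hxA : x ∉ Γ.A := fun h => hx2 (hb x h hxR)
              exact Or.inr ⟨q.π x, ⟨hlk.pred x hx hxA, hπ x hx hxR hx2⟩, hlk.adj x hx hxA,
                hπ x hx hxR hx2, hxR, hx2⟩
      exact hm.subset_Rm ⟨by rw [hqR]; exact Or.inl hv, hvR⟩
    have hA : ∀ v ∈ Γ.bd R, v ∈ (Γ.quot R).clo := fun v hv => A_sub_clo hv
    rintro v (hv | ⟨h, -⟩)
    · exact Or.inl (hR v hv)
    by_cases hvR : v ∈ R
    · exact Or.inl (mem_Rm_of_iso iso hvR)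
    by_cases hvb : v ∈ Γ.bd R
    · exact hA v hvb
    rcases h with h | ⟨u, hu, e⟩
    · exact absurd ⟨Or.inl h, hvR⟩ hvb
    · have huR : u ∉ R := fun h => hvb ⟨Or.inr ⟨u, h, e⟩, hvR⟩
      exact adj_sub _ _ (hR u hu) ⟨e, huR, hvR, hvb⟩

/-- Deletions outside the closure are computed in the quotient by the largest wave. -/
theorem clo_delete_eq {X : Set V} (hX : ∀ x ∈ X, x ∉ Γ.clo) :
    ((Γ.quot Γ.Rm).delete X).clo = (Γ.delete X).clo := by
  obtain ⟨D, π, lk⟩ := Γ.exists_Rm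
  obtain ⟨h1, h2⟩ := isLk_delete_of_notMem lk hX
  rw [quot_delete hX h2, clo_quot h1]

theorem mem_clo_of_iso {J : Set V} (hJ : Iso Γ J) {v : V} (hv : v ∈ J) : v ∈ Γ.clo :=
  Or.inl (mem_Rm_of_iso hJ hv)

end Web

end

/-! ### Legal sequences of deletions -/

section

namespace Web
variable {V : Type*} {Γ : Web V} {a : V}

/-- The closure of the largest wave after deleting `a` and the set `Y`. -/
def cc (Γ : Web V) (a : V) (Y : Set V) : Set V := (Γ.delete (insert a Y)).clo

/-- The set of entries of a list. -/
def ls (l : List V) : Set V := {x | x ∈ l}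

theorem ls_finite (l : List V) : (ls l).Finite := l.finite_toSet

theorem ls_nil : ls ([] : List V) = ∅ := by ext; simp [ls]

theorem ls_cons (w : V) (l : List V) : ls (w :: l) = insert w (ls l) := by ext; simp [ls]

theorem ls_append (l m : List V) : ls (l ++ m) = ls l ∪ ls m := by ext; simp [ls]

/-- Legal extensions: the list `l` (read from its end) adds one vertex at a time, each of them an
out-neighbour of `a`, of `L` or of an earlier vertex, and outside the current closure. -/
def Leg (Γ : Web V) (a : V) (L Y : Set V) : List V → Prop
  | [] => True
  | w :: l => Leg Γ a L Y l ∧ (∃ u ∈ insert a (L ∪ ls l), Γ.Adj u w) ∧ w ∉ cc Γ a (Y ∪ ls l)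

/-- All out-neighbours of `y` lie in the closure belonging to `Y`. -/
def dead (Γ : Web V) (a : V) (Y : Set V) (y : V) : Prop := ∀ v, Γ.Adj y v → v ∈ cc Γ a Y

theorem mem_cc_self {Y : Set V} {v : V} (hv : v ∈ insert a Y) : v ∈ cc Γ a Y :=
  mem_clo_of_iso (iso_delete _) hv

theorem A_mem_cc {Y : Set V} {v : V} (hv : v ∈ Γ.A) : v ∈ cc Γ a Y := by
  by_cases h : v ∈ insert a Y
  · exact mem_cc_self h
  · exact A_sub_clo ⟨hv, h⟩

theorem delete_insert_eq {Y Y' : Set V} (h : Y ⊆ Y') :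
    Γ.delete (insert a Y') = (Γ.delete (insert a Y)).delete (Y' \ Y) := by
  rw [delete_delete]
  congr 1
  ext v
  have := @h v
  simp only [Set.mem_insert_iff, Set.mem_union, Set.mem_sdiff]
  tauto

theorem cc_mono {Y Y' : Set V} (h : Y ⊆ Y') (hd : ∀ v ∈ Y', v ∉ Y → v ∉ cc Γ a Y) :
    cc Γ a Y ⊆ cc Γ a Y' := by
  intro v hv
  unfold cc
  rw [delete_insert_eq h]
  exact clo_sub_delete_of_notMem (fun x hx => hd x hx.1 hx.2) hv

theorem Leg.mono {L L' Y : Set V} (h : L ⊆ L') : ∀ {l}, Leg Γ a L Y l → Leg Γ a L' Y l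
  | [], _ => trivial
  | w :: l, ⟨h1, ⟨u, hu, e⟩, h3⟩ => by
    refine ⟨h1.mono h, ⟨u, ?_, e⟩, h3⟩
    rcases hu with rfl | hu | hu
    · exact Or.inl rfl
    · exact Or.inr (Or.inl (h hu))
    · exact Or.inr (Or.inr hu)

theorem Leg.cc_sub {L Y : Set V} : ∀ {l}, Leg Γ a L Y l → cc Γ a Y ⊆ cc Γ a (Y ∪ ls l)
  | [], _ => by simp [ls_nil]
  | w :: l, ⟨h1, _, h3⟩ => by
    refine h1.cc_sub.trans (cc_mono ?_ ?_)
    · rw [ls_cons]; intro x; simp only [Set.mem_union, Set.mem_insert_iff]; tauto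
    · intro v hv hv'
      have : v = w := by
        simp only [ls_cons, Set.mem_union, Set.mem_insert_iff] at hv hv'; tauto
      rw [this]; exact h3

theorem Leg.notMem {L Y : Set V} : ∀ {l}, Leg Γ a L Y l → ∀ v ∈ ls l, v ∉ cc Γ a Y
  | [], _, v, hv => by simp [ls] at hv
  | w :: l, ⟨h1, _, h3⟩, v, hv => by
    rw [ls_cons] at hv
    rcases hv with rfl | hv
    · exact fun h => h3 (h1.cc_sub h)
    · exact h1.notMem v hv

theorem Leg.append {L Y : Set V} {m : List V} (hm : Leg Γ a L Y m) :
    ∀ {l}, Leg Γ a (L ∪ ls m) (Y ∪ ls m) l → Leg Γ a L Y (l ++ m)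
  | [], _ => hm
  | w :: l, ⟨h1, ⟨u, hu, e⟩, h3⟩ => by
    refine ⟨hm.append h1, ⟨u, ?_, e⟩, ?_⟩
    · change u ∈ insert a (L ∪ ls (l ++ m))
      rw [ls_append]
      simp only [Set.mem_insert_iff, Set.mem_union] at hu ⊢
      tauto
    · change w ∉ cc Γ a (Y ∪ ls (l ++ m))
      have : Y ∪ ls (l ++ m) = Y ∪ ls m ∪ ls l := by
        ext x; simp only [ls_append, Set.mem_union]; tauto
      rwa [this]

/-- Finitely many legal deletions can be reordered: a partial deletion has smaller closure. -/
theorem Leg.cc_sub_of_subset {L Y X : Set V} {l : List V} (h : Leg Γ a L Y l) (hX : X ⊆ ls l) :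
    cc Γ a (Y ∪ X) ⊆ cc Γ a (Y ∪ ls l) := by
  set G := Γ.delete (insert a Y) with hG
  have key : ∀ X : Set V, X ⊆ ls l → cc Γ a (Y ∪ X) = ((G.quot G.Rm).delete X).clo := by
    intro X hX
    rw [clo_delete_eq (fun x hx => h.notMem x (hX hx)), delete_delete]
    unfold cc
    congr 2
    ext v; simp only [Set.mem_insert_iff, Set.mem_union]; tauto
  have un : ∀ l', ls l' ⊆ ls l → Leg Γ a L Y l' → ¬ Hind ((G.quot G.Rm).delete (ls l')) := by
    intro l'
    induction l' with
    | nil => intro _ _; rw [ls_nil, delete_empty]; exact quot_Rm_unhind G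
    | cons w l' ih =>
      intro hs ⟨h1, _, h3⟩
      have hs' : ls l' ⊆ ls l := fun x hx => hs (by rw [ls_cons]; exact Or.inr hx)
      have := unhind_delete_of_notMem_clo (ih hs' h1) (x := w) (by rw [← key _ hs']; exact h3)
      rw [delete_delete] at this
      rw [ls_cons, ← Set.union_singleton]
      exact this
  rw [key X hX, key _ subset_rfl]
  intro v hv
  have e : ((G.quot G.Rm).delete X).delete (ls l \ X) = (G.quot G.Rm).delete (ls l) := by
    rw [delete_delete, Set.union_sdiff_cancel hX]
  rw [← e]
  refine clo_sub_delete_finite ((ls_finite l).subset Set.sdiff_subset) ?_ ?_ v hv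
  · rintro y hy ⟨hyA, -⟩
    exact h.notMem y hy.1 (Or.inr hyA)
  · rw [e]; exact un l subset_rfl h

theorem Leg.unhind {l : List V} (hun : ¬ Hind (Γ.delete {a})) : Leg Γ a ∅ ∅ l →
    ¬ Hind (Γ.delete (insert a (ls l))) := by
  induction l with
  | nil => intro _; rw [ls_nil]; simpa using hun
  | cons w l ih =>
    rintro ⟨h1, _, h3⟩
    have := unhind_delete_of_notMem_clo (ih h1) (x := w) (by simpa [cc] using h3)
    rw [delete_delete] at this
    have e : insert a (ls l) ∪ {w} = insert a (ls (w :: l)) := by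
      rw [ls_cons]; ext v; simp only [Set.mem_insert_iff, Set.mem_union, Set.mem_singleton_iff]; tauto
    rwa [e] at this

theorem dead.mono {Y Y' : Set V} {y : V} (h : dead Γ a Y y) (hc : cc Γ a Y ⊆ cc Γ a Y') :
    dead Γ a Y' y := fun v e => hc (h v e)

/-- Enlarging `Y` by vertices outside the closure whose new members inside the largest region
are dead enlarges the largest region also after further legal deletions. -/
theorem grow {L Y Y' : Set V} {l : List V} (hs : Y ⊆ Y') (hl : Leg Γ a L Y' l)
    (hd : ∀ z ∈ (Γ.delete (insert a (Y ∪ ls l))).Rm, z ∈ Y' → z ∉ Y → dead Γ a Y' z) :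
    (Γ.delete (insert a (Y ∪ ls l))).Rm ⊆ (Γ.delete (insert a (Y' ∪ ls l))).Rm ∧
      cc Γ a (Y ∪ ls l) ⊆ cc Γ a (Y' ∪ ls l) := by
  set W := Γ.delete (insert a (Y ∪ ls l)) with hW
  set W' := Γ.delete (insert a (Y' ∪ ls l)) with hW'
  have hc' : cc Γ a Y' ⊆ W'.clo := hl.cc_sub
  have hself : ∀ v ∈ insert a (Y' ∪ ls l), v ∈ W'.clo := fun v hv => mem_cc_self hv
  have hA : ∀ v ∈ Γ.A, v ∈ W'.clo := fun v hv => A_mem_cc hv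
  obtain ⟨E, ρ, lk⟩ := W.exists_Rm
  obtain ⟨D, π, lk'⟩ := W'.exists_Rm
  have adj' : ∀ u ∈ W.Rm, ∀ v, W.Adj u v → v ∉ W'.clo → W'.Adj u v := by
    intro u hu v e hv
    refine ⟨e.1, ?_, fun h => hv (hself v h)⟩
    rintro (h | h | h)
    · exact e.2.1 (Or.inl h)
    · by_cases hY : u ∈ Y
      · exact e.2.1 (Or.inr (Or.inl hY))
      · exact hv (hc' (hd u hu h hY v e.1))
    · exact e.2.1 (Or.inr (Or.inr h))
  have hU := lk'.glue (U := W.Rm) (E := E) (ρ := ρ) ?_ ?_ ?_ ?_ ?_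
  · have h1 : W.Rm ⊆ W'.Rm := fun v hv => hU.subset_Rm (Or.inl hv)
    refine ⟨h1, ?_⟩
    rintro v (hv | ⟨hv | ⟨u, hu, e⟩, -⟩)
    · exact Or.inl (h1 hv)
    · exact hA v hv.1
    · by_contra hv
      exact hv (adj_sub _ _ (h1 hu) (adj' u hu v e hv))
  · intro v hv hB
    refine lk.avoid v hv ⟨hB.1, fun h => hB.2 ?_⟩
    rcases h with h | h | h
    · exact Or.inl h
    · exact Or.inr (Or.inl (hs h))
    · exact Or.inr (Or.inr h)
  · rintro v ⟨hv, hvn⟩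
    by_cases hvc : v ∈ W'.clo
    · rcases hvc with h | h
      · exact absurd (Or.inr h) hvn
      · exact Or.inl (lk'.bdD v h)
    · right
      rcases hv with h | ⟨u, hu, e⟩
      · exact absurd (hA v h.1) hvc
      rcases hu with hu | hu
      · refine lk.bdD v ⟨Or.inr ⟨u, hu, e.1, fun h => e.2.1 ?_, fun h => e.2.2 ?_⟩,
          fun h => hvn (Or.inl h)⟩
        · rcases h with h | h | h
          exacts [Or.inl h, Or.inr (Or.inl (hs h)), Or.inr (Or.inr h)]
        · rcases h with h | h | h
          exacts [Or.inl h, Or.inr (Or.inl (hs h)), Or.inr (Or.inr h)]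
      · exact absurd (adj_sub _ _ hu e) hvc
  · intro v hv h1 h2
    have hvc : v ∉ W'.clo := fun h => h.elim h1 h2
    have hvA : v ∉ W.A := fun h => hvc (hA v h.1)
    have e := adj' _ (lk.pred v hv hvA) v (lk.adj v hv hvA) hvc
    exact ⟨e, lk.pred v hv hvA, lk.cl v hv hvA, fun h => hvc (adj_sub _ _ h e)⟩
  · intro v hv w hw hvc hwc e
    exact lk.inj v hv w hw (fun h => hvc (hA v h.1)) (fun h => hwc (hA w h.1)) e
  · intro v hv
    obtain ⟨n, hn⟩ := lk.fin v hv
    exact ⟨n, hA _ hn.1⟩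

/-- The ordering of token sets used for the maximality argument. -/
structure Ext (Γ : Web V) (a : V) (Y Y' : Set V) : Prop where
  sub : Y ⊆ Y'
  out : ∀ v ∈ Y', v ∉ Y → v ∉ cc Γ a Y
  dead : ∀ l, Leg Γ a Y Y' l → ∀ z ∈ (Γ.delete (insert a (Y ∪ ls l))).Rm, z ∈ Y' → z ∉ Y →
    dead Γ a Y' z

theorem Ext.leg {L Y Y' : Set V} (h : Ext Γ a Y Y') (hL : L ⊆ Y) :
    ∀ {l}, Leg Γ a L Y' l → Leg Γ a L Y l
  | [], _ => trivial
  | _ :: _, ⟨h1, h2, h3⟩ => ⟨h.leg hL h1, h2,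
      fun hc => h3 ((grow h.sub h1 (h.dead _ (h1.mono hL))).2 hc)⟩

theorem Ext.grow {L Y Y' : Set V} (h : Ext Γ a Y Y') (hL : L ⊆ Y) {l : List V}
    (hl : Leg Γ a L Y' l) :
    (Γ.delete (insert a (Y ∪ ls l))).Rm ⊆ (Γ.delete (insert a (Y' ∪ ls l))).Rm :=
  (Web.grow h.sub hl (h.dead _ (hl.mono hL))).1

theorem Ext.cc_sub {Y Y' : Set V} (h : Ext Γ a Y Y') : cc Γ a Y ⊆ cc Γ a Y' := cc_mono h.sub h.out

theorem Ext.trans {Y Y' Y'' : Set V} (h : Ext Γ a Y Y') (h' : Ext Γ a Y' Y'') :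
    Ext Γ a Y Y'' where
  sub := h.sub.trans h'.sub
  out := by
    intro v hv hvY
    by_cases hv' : v ∈ Y'
    · exact h.out v hv' hvY
    · exact fun hc => h'.out v hv hv' (h.cc_sub hc)
  dead := by
    intro l hl z hz hz'' hzY
    have hl' := h'.leg h.sub hl
    by_cases hz' : z ∈ Y'
    · exact (h.dead l hl' z hz hz' hzY).mono h'.cc_sub
    · exact h'.dead l (hl.mono h.sub) z (h.grow subset_rfl hl' hz) hz'' hz'

/-- Increasing unions for the ordering `Ext`. -/
theorem ext_lim {ι : Type*} (T : ι → Set V) (hc : ∀ i j, T i ⊆ T j ∨ T j ⊆ T i)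
    (hout : ∀ i j, T i ⊆ T j → ∀ v ∈ T j, v ∉ T i → v ∉ cc Γ a (T i))
    (hdead : ∀ i l, (∀ j, T i ⊆ T j → Leg Γ a (T i) (T j) l) → ∀ j, T i ⊆ T j →
      ∀ z ∈ (Γ.delete (insert a (T i ∪ ls l))).Rm, z ∈ T j → z ∉ T i →
        ∃ k, dead Γ a (T k) z) (i : ι) :
    Ext Γ a (T i) (⋃ j, T j) := by
  have out : ∀ i, ∀ v ∈ ⋃ j, T j, v ∉ T i → v ∉ cc Γ a (T i) := by
    intro i v hv hvi
    obtain ⟨j, hj⟩ := Set.mem_iUnion.1 hv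
    rcases hc i j with h | h
    · exact hout i j h v hj hvi
    · exact absurd (h hj) hvi
  have ccs : ∀ i, cc Γ a (T i) ⊆ cc Γ a (⋃ j, T j) :=
    fun i => cc_mono (Set.subset_iUnion _ _) (out i)
  have step : ∀ l, (∀ i, ∀ L ⊆ T i, Leg Γ a L (⋃ j, T j) l → Leg Γ a L (T i) l) → ∀ i, ∀ L ⊆ T i,
      Leg Γ a L (⋃ j, T j) l →
      ∀ z ∈ (Γ.delete (insert a (T i ∪ ls l))).Rm, z ∈ (⋃ j, T j) → z ∉ T i →
        dead Γ a (⋃ j, T j) z := by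
    intro l ih i L hL hl z hz hzU hzi
    obtain ⟨j, hj⟩ := Set.mem_iUnion.1 hzU
    rcases hc i j with h | h
    · obtain ⟨k, hk⟩ := hdead i l (fun j hij => (ih j L (hL.trans hij) hl).mono hL) j h z hz hj hzi
      exact hk.mono (ccs k)
    · exact absurd (h hj) hzi
  have leg : ∀ l i, ∀ L ⊆ T i, Leg Γ a L (⋃ j, T j) l → Leg Γ a L (T i) l := by
    intro l
    induction l with
    | nil => intros; trivial
    | cons w l ih =>
      rintro i L hL ⟨h1, h2, h3⟩
      exact ⟨ih i L hL h1, h2, fun h => h3 ((grow (Set.subset_iUnion _ _) h1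
        (step l ih i L hL h1)).2 h)⟩
  exact ⟨Set.subset_iUnion _ _, out i, fun l hl => step l (leg l) i _ subset_rfl hl⟩

theorem leg_iUnion {ι : Type*} [Nonempty ι] (T : ι → Set V) (hc : ∀ i j, T i ⊆ T j ∨ T j ⊆ T i)
    {Y : Set V} : ∀ {l}, Leg Γ a (⋃ j, T j) Y l → ∃ i, Leg Γ a (T i) Y l
  | [], _ => ⟨Classical.arbitrary ι, trivial⟩
  | w :: l, ⟨h1, ⟨u, hu, e⟩, h3⟩ => by
    obtain ⟨i, hi⟩ := leg_iUnion T hc h1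
    rcases hu with hu | hu | hu
    · exact ⟨i, hi, ⟨u, Or.inl hu, e⟩, h3⟩
    · obtain ⟨j, hj⟩ := Set.mem_iUnion.1 hu
      rcases hc i j with h | h
      · exact ⟨j, hi.mono h, ⟨u, Or.inr (Or.inl hj), e⟩, h3⟩
      · exact ⟨i, hi, ⟨u, Or.inr (Or.inl (h hj)), e⟩, h3⟩
    · exact ⟨i, hi, ⟨u, Or.inr (Or.inr hu), e⟩, h3⟩

/-- No legal extension of `Y` meets `B`. -/
def Stuck (Γ : Web V) (a : V) (Y : Set V) : Prop :=
  (∀ v ∈ Y, v ∉ Γ.B) ∧ ∀ l, Leg Γ a Y Y l → ∀ v ∈ ls l, v ∉ Γ.B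

theorem stuck_lim {ι : Type*} [Nonempty ι] (T : ι → Set V) (hc : ∀ i j, T i ⊆ T j ∨ T j ⊆ T i)
    (hext : ∀ i, Ext Γ a (T i) (⋃ j, T j)) (hB : ∀ i, ∀ v ∈ T i, v ∉ Γ.B)
    (hl : ∀ i l, Leg Γ a (T i) (T i) l → ∀ v ∈ ls l, v ∉ Γ.B) : Stuck Γ a (⋃ j, T j) := by
  refine ⟨fun v hv => ?_, fun l h => ?_⟩
  · obtain ⟨j, hj⟩ := Set.mem_iUnion.1 hv
    exact hB j v hj
  · obtain ⟨i, hi⟩ := leg_iUnion T hc h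
    exact hl i l ((hext i).leg subset_rfl hi)

/-- Zorn's lemma for `Ext`: if no legal sequence starting from `∅` reaches `B`, then there is a
maximal set with this property. -/
theorem exists_max_stuck (h0 : Stuck Γ a ∅) :
    ∃ Y, Stuck Γ a Y ∧ ∀ Y', Stuck Γ a Y' → Ext Γ a Y Y' → Y' ⊆ Y := by
  have hch : ∀ c : Set {Y // Stuck Γ a Y}, IsChain (fun Y Y' => Ext Γ a Y.1 Y'.1) c →
      ∃ ub : {Y // Stuck Γ a Y}, ∀ x ∈ c, Ext Γ a x.1 ub.1 := by
    intro c hc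
    rcases c.eq_empty_or_nonempty with rfl | hne
    · exact ⟨⟨∅, h0⟩, fun _ h => h.elim⟩
    have : Nonempty c := hne.to_subtype
    let T : c → Set V := fun i => i.1.1
    have hcmp : ∀ i j : c, Ext Γ a (T i) (T j) ∨ Ext Γ a (T j) (T i) ∨ i = j := by
      intro i j
      by_cases e : i = j
      · exact Or.inr (Or.inr e)
      · rcases hc i.2 j.2 (fun e' => e (Subtype.ext e')) with h | h
        · exact Or.inl h
        · exact Or.inr (Or.inl h)
    have hsub : ∀ i j, T i ⊆ T j ∨ T j ⊆ T i := by
      intro i j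
      rcases hcmp i j with h | h | rfl
      exacts [Or.inl h.sub, Or.inr h.sub, Or.inl subset_rfl]
    have hext : ∀ i, Ext Γ a (T i) (⋃ j, T j) := by
      refine ext_lim T hsub ?_ ?_
      · intro i j hij v hv hvi
        rcases hcmp i j with h | h | rfl
        exacts [h.out v hv hvi, absurd (h.sub hv) hvi, absurd hv hvi]
      · intro i l hl j hij z hz hzj hzi
        rcases hcmp i j with h | h | rfl
        exacts [⟨j, h.dead l (hl j hij) z hz hzj hzi⟩, absurd (h.sub hzj) hzi, absurd hzj hzi]
    exact ⟨⟨_, stuck_lim T hsub hext (fun i => i.1.2.1) (fun i => i.1.2.2)⟩,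
      fun x hx => hext ⟨x, hx⟩⟩
  obtain ⟨⟨Y, hY⟩, hm⟩ := exists_maximal_of_chains_bounded hch (fun h h' => h.trans h')
  exact ⟨Y, hY, fun Y' h h' => (hm ⟨Y', h⟩ h').sub⟩

end Web

end

/-! ### Linking one source in an unhindered web -/

section

namespace Web
variable {V : Type*} {Γ : Web V} {a : V}

/-- The token `z` is dead after the legal extension `l`, or stays alive in all further ones. -/
def Decided (Γ : Web V) (a : V) (Y : Set V) (l : List V) (z : V) : Prop :=
  dead Γ a (Y ∪ ls l) z ∨ ∀ e, Leg Γ a Y Y (e ++ l) → ¬ dead Γ a (Y ∪ ls (e ++ l)) z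

theorem Leg.cc_append {Y : Set V} {e l : List V} (h : Leg Γ a Y Y (e ++ l)) :
    cc Γ a (Y ∪ ls l) ⊆ cc Γ a (Y ∪ ls (e ++ l)) :=
  h.cc_sub_of_subset (by rw [ls_append]; exact Set.subset_union_right)

theorem Decided.mono {Y : Set V} {e l : List V} {z : V} (hd : Decided Γ a Y l z)
    (h : Leg Γ a Y Y (e ++ l)) : Decided Γ a Y (e ++ l) z := by
  rcases hd with hd | hd
  · exact Or.inl (hd.mono h.cc_append)
  · refine Or.inr fun e' => ?_
    rw [← List.append_assoc]
    exact hd (e' ++ e)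

theorem exists_decided {Y : Set V} {l : List V} (hl : Leg Γ a Y Y l) (m : List V) :
    ∃ e, Leg Γ a Y Y (e ++ l) ∧ ∀ z ∈ m, Decided Γ a Y (e ++ l) z := by
  induction m with
  | nil => exact ⟨[], hl, by simp⟩
  | cons z m ih =>
    obtain ⟨e, he, hd⟩ := ih
    by_cases h : ∃ e', Leg Γ a Y Y (e' ++ (e ++ l)) ∧ dead Γ a (Y ∪ ls (e' ++ (e ++ l))) z
    · obtain ⟨e', he', hz⟩ := h
      refine ⟨e' ++ e, by rwa [List.append_assoc], ?_⟩
      rw [List.append_assoc]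
      intro x hx
      rcases List.mem_cons.1 hx with rfl | hx
      · exact Or.inl hz
      · exact (hd x hx).mono he'
    · push Not at h
      refine ⟨e, he, fun x hx => ?_⟩
      rcases List.mem_cons.1 hx with rfl | hx
      · exact Or.inr h
      · exact hd x hx

/-- If all edges leaving `a` and the deleted set `Y` end in the closure of the largest wave of the
remaining web, then that wave is a hindrance of `Γ` leaving `a` unused; deleted vertices are isolated
and hence belong to its region. -/
theorem hind_of_closed {Y : Set V} (ha : a ∈ Γ.A) (haB : a ∉ Γ.B) (hB : ∀ v ∈ Y, v ∉ Γ.B)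
    (h : ∀ u ∈ insert a Y, ∀ v, Γ.Adj u v → v ∈ cc Γ a Y) : Hind Γ := by
  set W := Γ.delete (insert a Y) with hW
  obtain ⟨D, π, lk⟩ := W.exists_Rm
  have iso := iso_delete (Γ := Γ) (insert a Y)
  have hin : ∀ v ∈ insert a Y, v ∈ W.Rm := fun v hv => mem_Rm_of_iso iso hv
  have hD : ∀ v ∈ D, v ∉ insert a Y := fun v hv => iso.notMem lk.toSys hv
  have hbd : Γ.bd W.Rm = W.bd W.Rm := by
    ext v
    constructor
    · rintro ⟨hv, hvn⟩
      have hvY : v ∉ insert a Y := fun h => hvn (hin v h)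
      refine ⟨?_, hvn⟩
      rcases hv with hv | ⟨u, hu, e⟩
      · exact Or.inl ⟨hv, hvY⟩
      · by_cases huY : u ∈ insert a Y
        · rcases h u huY v e with h | h
          · exact absurd h hvn
          · exact h.1
        · exact Or.inr ⟨u, hu, e, huY, hvY⟩
    · rintro ⟨hv | ⟨u, hu, e⟩, hvn⟩
      · exact ⟨Or.inl hv.1, hvn⟩
      · exact ⟨Or.inr ⟨u, hu, e.1⟩, hvn⟩
  refine ⟨W.Rm, D, π, a, ⟨⟨?_, ?_, ?_, ?_, ?_⟩, ?_, ?_, ?_, ?_⟩, ha, hin a (Or.inl rfl),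
    fun h => hD a h (Or.inl rfl)⟩
  · intro v hv hvA; exact lk.src v hv ⟨hvA, hD v hv⟩
  · intro v hv hvA; exact lk.cl v hv fun h => hvA h.1
  · intro v hv hvA; exact (lk.adj v hv fun h => hvA h.1).1
  · intro v hv w hw hvA hwA; exact lk.inj v hv w hw (fun h => hvA h.1) (fun h => hwA h.1)
  · intro v hv; obtain ⟨n, hn⟩ := lk.fin v hv; exact ⟨n, hn.1⟩
  · intro v hv hvB
    by_cases hvY : v ∈ insert a Y
    · rcases hvY with rfl | hvY
      exacts [haB hvB, hB v hvY hvB]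
    · exact lk.avoid v hv ⟨hvB, hvY⟩
  · intro v hv hvA; exact lk.pred v hv fun h => hvA h.1
  · rw [hbd]; exact lk.bdD
  · rw [hbd]; exact lk.sub

/-- In an unhindered web some legal sequence starting from `a` reaches `B`. -/
theorem not_stuck (hΓ : ¬ Hind Γ) (ha : a ∈ Γ.A) (haB : a ∉ Γ.B) : ¬ Stuck Γ a ∅ := by
  intro h0
  obtain ⟨Y, ⟨hYB, hY⟩, hmax⟩ := exists_max_stuck h0
  by_cases hcl : ∀ u ∈ insert a Y, ∀ v, Γ.Adj u v → v ∈ cc Γ a Y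
  · exact hΓ (hind_of_closed ha haB hYB hcl)
  push Not at hcl
  obtain ⟨u, hu, w, e, hw⟩ := hcl
  have hw1 : Leg Γ a Y Y [w] := by
    refine ⟨trivial, ⟨u, ?_, e⟩, ?_⟩
    · simpa [ls_nil] using hu
    · simpa [ls_nil] using hw
  have step : ∀ l : {l // Leg Γ a Y Y l}, ∃ l' : {l // Leg Γ a Y Y l},
      (∃ e, l'.1 = e ++ l.1) ∧ (∀ z ∈ l.1, Decided Γ a Y l'.1 z) ∧ (l.1 = [] → w ∈ l'.1) := by
    rintro ⟨l, hl⟩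
    by_cases h : l = []
    · subst h
      exact ⟨⟨[w], hw1⟩, ⟨[w], rfl⟩, by simp, by simp⟩
    · obtain ⟨e, he, hd⟩ := exists_decided hl l
      exact ⟨⟨_, he⟩, ⟨e, rfl⟩, hd, fun h' => absurd h' h⟩
  choose f hf1 hf2 hf3 using step
  let s : ℕ → {l // Leg Γ a Y Y l} := fun n => f^[n] ⟨[], trivial⟩
  have hs : ∀ n, s (n + 1) = f (s n) := fun n => Function.iterate_succ_apply' f n _
  have hpre : ∀ n k, ∃ e, (s (n + k)).1 = e ++ (s n).1 := by
    intro n k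
    induction k with
    | zero => exact ⟨[], rfl⟩
    | succ k ih =>
      obtain ⟨e, he⟩ := ih
      obtain ⟨e', he'⟩ := hf1 (s (n + k))
      exact ⟨e' ++ e, by rw [← Nat.add_assoc, hs, he', he, List.append_assoc]⟩
  have hpre' : ∀ {n m}, n ≤ m → ∃ e, (s m).1 = e ++ (s n).1 := by
    intro n m h
    obtain ⟨k, rfl⟩ := Nat.exists_eq_add_of_le h
    exact hpre n k
  let T : ℕ → Set V := fun n => Y ∪ ls (s n).1
  have hTm : ∀ {n m}, n ≤ m → T n ⊆ T m := by
    intro n m h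
    obtain ⟨e, he⟩ := hpre' h
    simp only [T, he, ls_append]
    intro x; simp only [Set.mem_union]; tauto
  have hout : ∀ {n m}, n ≤ m → ∀ v ∈ T m, v ∉ T n → v ∉ cc Γ a (T n) := by
    intro n m h v hv hvn
    obtain ⟨e, he⟩ := hpre' h
    have hleg := (s m).2
    rw [he] at hleg
    have hve : v ∈ ls e := by
      simp only [T, he, ls_append, Set.mem_union] at hv hvn
      tauto
    clear he hv
    induction e with
    | nil => simp [ls] at hve
    | cons x e ih =>
      rw [ls_cons] at hve
      rcases hve with rfl | hve
      · exact fun h => hleg.2.2 (hleg.1.cc_append h)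
      · exact ih hleg.1 hve
  have hsub : ∀ n m, T n ⊆ T m ∨ T m ⊆ T n := fun n m => (le_total n m).imp hTm hTm
  have hlegT : ∀ n l, Leg Γ a (T n) (T n) l → Leg Γ a Y Y (l ++ (s n).1) :=
    fun n l h => (s n).2.append h
  have hext : ∀ n, Ext Γ a (T n) (⋃ m, T m) := by
    refine ext_lim T hsub ?_ ?_
    · intro n m h v hv hvn
      rcases le_total n m with h' | h'
      · exact hout h' v hv hvn
      · exact absurd (hTm h' hv) hvn
    · intro n l hl m hnm z hz hzm hzn
      have hnm' : n ≤ m := by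
        by_contra h'
        exact hzn (hTm (by omega) hzm)
      refine ⟨m + 1, ?_⟩
      have hn1 : n ≤ m + 1 := by omega
      have hleg : Leg Γ a (T (m + 1)) (T (m + 1)) l := (hl (m + 1) (hTm hn1)).mono (hTm hn1)
      have hbig := hlegT _ _ hleg
      have hzT : z ∈ T (m + 1) := hTm (Nat.le_succ m) hzm
      have hzl : z ∉ ls l := fun h => hleg.notMem z h (mem_cc_self (Or.inr hzT))
      have hza : z ≠ a := by
        rintro rfl
        have hzY : z ∉ Y := fun h => hzn (Or.inl h)
        have : z ∈ ls (s m).1 := hzm.resolve_left hzY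
        exact (s m).2.notMem z this (mem_cc_self (Or.inl rfl))
      have hdead : dead Γ a (Y ∪ ls (l ++ (s (m + 1)).1)) z := by
        intro v hzv
        have hv : v ∈ cc Γ a (T n ∪ ls l) := by
          by_cases h : v ∈ insert a (T n ∪ ls l)
          · exact mem_cc_self h
          · refine adj_sub _ _ hz ⟨hzv, ?_, h⟩
            rintro (h | h | h)
            exacts [hza h, hzn h, hzl h]
        have e1 : T n ∪ ls l = Y ∪ (ls (s n).1 ∪ ls l) := Set.union_assoc _ _ _
        rw [e1] at hv
        refine hbig.cc_sub_of_subset ?_ hv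
        obtain ⟨e, he⟩ := hpre' hn1
        rw [ls_append, he, ls_append]
        intro x; simp only [Set.mem_union]; tauto
      have hzs : z ∈ (s m).1 := hzm.resolve_left fun h => hzn (Or.inl h)
      have hd := hf2 (s m) z hzs
      rw [← hs] at hd
      rcases hd with hd | hd
      · exact hd
      · exact absurd hdead (hd l hbig)
  have hst : Stuck Γ a (⋃ m, T m) := by
    refine stuck_lim T hsub hext ?_ ?_
    · rintro n v (hv | hv)
      · exact hYB v hv
      · exact hY _ (s n).2 v hv
    · intro n l hl v hv
      exact hY _ (hlegT n l hl) v (by rw [ls_append]; exact Or.inl hv)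
  have hT0 : T 0 = Y := by
    change Y ∪ ls [] = Y
    rw [ls_nil, Set.union_empty]
  have hwY : w ∈ Y := by
    refine hmax _ hst (hT0 ▸ hext 0) (Set.mem_iUnion.2 ⟨1, Or.inr ?_⟩)
    have := hf3 (s 0) rfl
    rwa [← hs] at this
  exact hw (mem_cc_self (Or.inr hwY))

/-- `(P, ρ)` is a finite path from `a` to `v`. -/
structure PathTo (Γ : Web V) (a : V) (P : Set V) (ρ : V → V) (v : V) : Prop where
  sys : Sys Γ P ρ
  start : a ∈ P
  term : v ∈ P
  conn : ∃ n, ρ^[n] v = a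
  last : ∀ x ∈ P, x ∉ Γ.A → ρ x ≠ v
  only : ∀ x ∈ P, x ∈ Γ.A → x = a

theorem PathTo.trivial (ha : a ∈ Γ.A) : PathTo Γ a {a} id a where
  sys := ⟨fun _ _ _ => rfl, fun v hv h => absurd (hv ▸ ha) h, fun v hv h => absurd (hv ▸ ha) h,
    fun v hv _ _ h => absurd (hv ▸ ha) h, fun v hv => ⟨0, hv ▸ ha⟩⟩
  start := rfl
  term := rfl
  conn := ⟨0, rfl⟩
  last := fun v hv h => absurd (hv ▸ ha) h
  only := fun v hv _ => hv

theorem PathTo.snoc {P : Set V} {ρ : V → V} {u w : V} (h : PathTo Γ a P ρ u) (e : Γ.Adj u w)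
    (hw : w ∉ P) : ∃ ρ', PathTo Γ a (insert w P) ρ' w := by
  classical
  have hwA : w ∉ Γ.A := Γ.not_into_A _ _ e
  let ρ' : V → V := fun v => if v = w then u else ρ v
  have hw' : ρ' w = u := if_pos rfl
  have ho : ∀ v, v ≠ w → ρ' v = ρ v := fun v hv => if_neg hv
  have hne : ∀ v ∈ P, v ≠ w := fun v hv e => hw (e ▸ hv)
  have hit : ∀ n, ∀ v ∈ P, ρ'^[n] v = ρ^[n] v := by
    intro n
    induction n with
    | zero => intro v _; rfl
    | succ n ih =>
      intro v hv
      rw [Function.iterate_succ_apply, Function.iterate_succ_apply, ho v (hne v hv),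
        ih _ (h.sys.cl' hv)]
  refine ⟨ρ', ⟨⟨?_, ?_, ?_, ?_, ?_⟩, Or.inr h.start, Or.inl rfl, ?_, ?_, ?_⟩⟩
  · rintro v (rfl | hv) hvA
    · exact absurd hvA hwA
    · rw [ho v (hne v hv)]; exact h.sys.src v hv hvA
  · rintro v (rfl | hv) hvA
    · rw [hw']; exact Or.inr h.term
    · rw [ho v (hne v hv)]; exact Or.inr (h.sys.cl v hv hvA)
  · rintro v (rfl | hv) hvA
    · rw [hw']; exact e
    · rw [ho v (hne v hv)]; exact h.sys.adj v hv hvA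
  · rintro v (rfl | hv) x (rfl | hx) hvA hxA
    · exact fun _ => rfl
    · rw [hw', ho x (hne x hx)]; exact fun e => absurd e.symm (h.last x hx hxA)
    · rw [hw', ho v (hne v hv)]; exact fun e => absurd e (h.last v hv hvA)
    · rw [ho v (hne v hv), ho x (hne x hx)]; exact h.sys.inj v hv x hx hvA hxA
  · rintro v (rfl | hv)
    · apply reach_step
      rw [hw']
      obtain ⟨n, hn⟩ := h.sys.fin u h.term
      exact ⟨n, by rwa [hit n u h.term]⟩
    · obtain ⟨n, hn⟩ := h.sys.fin v hv
      exact ⟨n, by rwa [hit n v hv]⟩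
  · obtain ⟨n, hn⟩ := h.conn
    exact ⟨n + 1, by rw [Function.iterate_succ_apply, hw', hit n u h.term, hn]⟩
  · rintro v (rfl | hv) hvA
    · rw [hw']; exact fun e => hw (e ▸ h.term)
    · rw [ho v (hne v hv)]; exact fun e => hw (e ▸ h.sys.cl' hv)
  · rintro v (rfl | hv) hvA
    · exact absurd hvA hwA
    · exact h.only v hv hvA

theorem Leg.exists_path (ha : a ∈ Γ.A) : ∀ {l : List V}, Leg Γ a ∅ ∅ l → ∀ v ∈ insert a (ls l),
    ∃ P ρ, P ⊆ insert a (ls l) ∧ PathTo Γ a P ρ v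
  | [], _, v, hv => by
    rw [ls_nil] at hv
    have hva : v = a := by simpa using hv
    subst hva
    exact ⟨{v}, id, by simp, .trivial ha⟩
  | w :: l, ⟨h1, ⟨u, hu, e⟩, h3⟩, v, hv => by
    rw [Set.empty_union] at hu h3
    rw [ls_cons] at hv ⊢
    by_cases hvw : v = w
    · subst hvw
      obtain ⟨P, ρ, hP, h⟩ := h1.exists_path ha u hu
      obtain ⟨ρ', h'⟩ := h.snoc e (fun h => h3 (mem_cc_self (hP h)))
      refine ⟨_, ρ', ?_, h'⟩
      rintro x (rfl | hx)
      · exact Or.inr (Or.inl rfl)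
      · rcases hP hx with h | h
        exacts [Or.inl h, Or.inr (Or.inr h)]
    · have hv' : v ∈ insert a (ls l) := by
        rcases hv with h | h | h
        exacts [Or.inl h, absurd h hvw, Or.inr h]
      obtain ⟨P, ρ, hP, h⟩ := h1.exists_path ha v hv'
      exact ⟨P, ρ, hP.trans (Set.insert_subset_insert (Set.subset_insert _ _)), h⟩

/-- In an unhindered web, every source can be linked to `B` by a finite path whose removal leaves
the web unhindered. -/
theorem exists_path_unhind (hΓ : ¬ Hind Γ) (ha : a ∈ Γ.A) :
    ∃ P ρ b, P.Finite ∧ PathTo Γ a P ρ b ∧ b ∈ Γ.B ∧ ¬ Hind (Γ.delete P) := by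
  have hun := unhind_delete_source hΓ ha
  by_cases haB : a ∈ Γ.B
  · exact ⟨{a}, id, a, Set.finite_singleton a, .trivial ha, haB, hun⟩
  have h := not_stuck hΓ ha haB
  simp only [Stuck, Set.mem_empty_iff_false, false_implies, implies_true, true_and] at h
  push Not at h
  obtain ⟨l, hl, b, hb, hbB⟩ := h
  obtain ⟨P, ρ, hP, hp⟩ := hl.exists_path ha b (Or.inr hb)
  have hfin : (insert a (ls l)).Finite := (ls_finite l).insert a
  refine ⟨P, ρ, b, hfin.subset hP, hp, hbB, ?_⟩
  refine unhind_of_delete_finite (Y := insert a (ls l) \ P) (hfin.subset Set.sdiff_subset) ?_ ?_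
  · rintro y ⟨hy, hyP⟩ hyA
    rcases hy with rfl | hy
    · exact hyP hp.start
    · exact hl.notMem y hy (A_mem_cc hyA.1)
  · rw [delete_delete, Set.union_sdiff_cancel hP]
    exact hl.unhind hun

end Web

end

/-! ### Assembling waves of missed positions -/

section

namespace Web
variable {V : Type*} {Γ : Web V}

/-- The vertices which are joined to `A₀` by a chain of predecessors in `U`. -/
inductive Rch (U A₀ : Set V) (Pr : V → V → Prop) : V → Prop
  | base {a : V} : a ∈ A₀ → Rch U A₀ Pr a
  | step {v w : V} : Pr v w → w ∈ U → Rch U A₀ Pr w → Rch U A₀ Pr v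

/-- A predecessor relation that links the whole boundary of `U` to `A₀` is a wave; it is a
hindrance if `A₀` misses a source in `U`. -/
theorem hind_of_rch {U A₀ : Set V} {Pr : V → V → Prop} {h : V}
    (hB : ∀ v ∈ U, v ∉ Γ.B) (hA₀ : ∀ a ∈ A₀, a ∈ Γ.A ∧ a ∈ U)
    (adj : ∀ v w, Pr v w → Γ.Adj w v)
    (fn : ∀ v w w', Pr v w → Pr v w' → w = w')
    (inj : ∀ v v' w, w ∈ U → Pr v w → Pr v' w → v = v')
    (bd : ∀ v ∈ Γ.bd U, v ∉ Γ.A → Rch U A₀ Pr v)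
    (hA : h ∈ Γ.A) (hU : h ∈ U) (hh : h ∉ A₀) : Hind Γ := by
  classical
  set D : Set V := {v | Rch U A₀ Pr v ∨ (v ∈ Γ.A ∧ v ∉ U)} with hD
  have prA : ∀ v w, Pr v w → v ∉ Γ.A := fun v w hp => Γ.not_into_A _ _ (adj v w hp)
  have inv : ∀ v, Rch U A₀ Pr v → v ∉ Γ.A → ∃ w, Pr v w ∧ w ∈ U ∧ Rch U A₀ Pr w := by
    intro v hv hvA
    cases hv with
    | base ha => exact absurd (hA₀ _ ha).1 hvA
    | step h1 h2 h3 => exact ⟨_, h1, h2, h3⟩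
  let ρ : V → V := fun v => if hv : v ∉ Γ.A ∧ ∃ w, Pr v w then hv.2.choose else v
  have hρ : ∀ v w, Pr v w → ρ v = w := by
    intro v w hp
    have hv : v ∉ Γ.A ∧ ∃ w, Pr v w := ⟨prA v w hp, w, hp⟩
    have : ρ v = hv.2.choose := dif_pos hv
    rw [this]
    exact fn v _ _ hv.2.choose_spec hp
  have hρA : ∀ v, v ∈ Γ.A → ρ v = v := fun v hv => dif_neg fun h => h.1 hv
  have key : ∀ v ∈ D, v ∉ Γ.A → Pr v (ρ v) ∧ ρ v ∈ U ∧ Rch U A₀ Pr (ρ v) := by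
    rintro v (hv | hv) hvA
    · obtain ⟨w, h1, h2, h3⟩ := inv v hv hvA
      rw [hρ v w h1]; exact ⟨h1, h2, h3⟩
    · exact absurd hv.1 hvA
  refine ⟨U, D, ρ, h, ⟨⟨?_, ?_, ?_, ?_, ?_⟩, hB, ?_, ?_, ?_⟩, hA, hU, ?_⟩
  · intro a _ ha; exact hρA a ha
  · intro v hv hvA; exact Or.inl (key v hv hvA).2.2
  · intro v hv hvA; exact adj _ _ (key v hv hvA).1
  · intro v hv w hw hvA hwA e
    have h1 := key v hv hvA
    have h2 := key w hw hwA
    rw [e] at h1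
    exact inj v w _ h1.2.1 h1.1 h2.1
  · rintro v (hv | hv)
    · induction hv with
      | base ha => exact ⟨0, (hA₀ _ ha).1⟩
      | step h1 h2 h3 ih =>
        apply reach_step
        rwa [hρ _ _ h1]
    · exact ⟨0, hv.1⟩
  · intro v hv hvA; exact (key v hv hvA).2.1
  · intro v hv
    by_cases hvA : v ∈ Γ.A
    · exact Or.inr ⟨hvA, hv.2⟩
    · exact Or.inl (bd v hv hvA)
  · intro v hv
    by_cases hvU : v ∈ U
    · exact Or.inl hvU
    · refine Or.inr ⟨?_, hvU⟩
      by_cases hvA : v ∈ Γ.A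
      · exact Or.inl hvA
      · have := key v hv hvA
        exact Or.inr ⟨_, this.2.1, adj _ _ this.1⟩
  · rintro (hv | hv)
    · cases hv with
      | base ha => exact hh ha
      | step h1 => exact prA _ _ h1 hA
    · exact hv.2 hU

namespace Pos

/-- The path system of a position without the path starting at `h`. -/
def Dh (p : Pos Γ) (h : V) : Set V :=
  {v | v ∈ p.D ∧ root (Γ.delete p.N).A p.π v ∉ ({h} : Set V)}

/-- The vertices reachable by alternating walks from a missed source of a position. -/
def S (p : Pos Γ) (h : V) : Set V := alt (Γ.delete p.N) (p.Dh h) p.π h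

variable {p : Pos Γ} {h : V}

theorem Miss.lk (hm : p.Miss h) : IsLk (Γ.delete p.N) p.R (p.Dh h) p.π :=
  p.lk.drop {h} hm.2.2

theorem Miss.notN (hm : p.Miss h) : h ∉ p.N := p.disj h hm.2.1

theorem Miss.A' (hm : p.Miss h) : h ∈ (Γ.delete p.N).A := ⟨hm.1, hm.notN⟩

theorem Miss.notDh (hm : p.Miss h) : h ∉ p.Dh h := fun hd =>
  hd.2 (root_of_mem hm.A')

theorem Miss.S_sub (hm : p.Miss h) {v : V} (hv : v ∈ p.S h) : v ∈ p.R :=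
  hm.lk.alt_sub hm.2.1 v hv

theorem Miss.S_notN (hm : p.Miss h) {v : V} (hv : v ∈ p.S h) : v ∉ p.N :=
  p.disj v (hm.S_sub hv)

/-- The path of the missed source is reachable. -/
theorem Miss.comp_sub (_hm : p.Miss h) : ∀ v ∈ p.D, root (Γ.delete p.N).A p.π v = h → v ∈ p.S h := by
  refine p.lk.toSys.ind (P := fun v => root (Γ.delete p.N).A p.π v = h → v ∈ p.S h) ?_ ?_
  · intro a _ haA e
    rw [root_of_mem haA] at e
    rw [e]; exact mem_alt_self
  · intro v hv hvA ih e
    rw [p.lk.toSys.root_pred hv] at ih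
    exact alt_out (ih e) (p.lk.adj v hv hvA) fun hd => hd.2 e

theorem Miss.mem_Dh (hm : p.Miss h) {v : V} (hv : v ∈ p.D) (hS : v ∉ p.S h) : v ∈ p.Dh h :=
  ⟨hv, fun e => hS (hm.comp_sub v hv e)⟩

theorem Miss.pred_S (hm : p.Miss h) {v : V} (hv : v ∈ p.D) (hS : v ∈ p.S h) : p.π v ∈ p.S h := by
  by_cases hd : v ∈ p.Dh h
  · exact alt_back hS hd
  · refine hm.comp_sub _ (p.lk.toSys.cl' hv) ?_
    rw [p.lk.toSys.root_pred hv]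
    by_contra e
    exact hd ⟨hv, e⟩

end Pos

/-- A sequence of positions with missed sources, in which every vertex removed earlier and adjacent
to a reachable set is later reached through a switch within a separate zone `q i \ r i`. -/
structure Asm (Γ : Web V) (I : Type*) [LinearOrder I] where
  r : I → Pos Γ
  q : I → Pos Γ
  h : I → V
  u : I → V
  b : I → V
  D' : I → Set V
  π' : I → V → V
  qr : ∀ i, q i ≤ r i
  rq : ∀ i j, i < j → r j ≤ q i
  miss : ∀ i, (r i).Miss (h i)
  us : ∀ i, u i ∈ (r i).S (h i)
  ub : ∀ i, Γ.Adj (u i) (b i)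
  bN : ∀ i, b i ∈ (r i).N
  aug : ∀ i, Aug (Γ.delete (r i).N) (r i).R ((r i).Dh (h i)) (r i).π (h i) ((r i).S (h i)) (u i)
    (D' i) (π' i)
  hN : ∀ i, h i ∈ (q i).N
  uN : ∀ i, u i ∈ (q i).N
  kN : ∀ i v, v ∈ D' i → (v ∉ (r i).Dh (h i) ∨ π' i v ≠ (r i).π v) → π' i v ∈ (q i).N

namespace Asm

variable {I : Type*} [LinearOrder I] (Λ : Asm Γ I) (J : Set I)

/-- The vertices removed at step `i`. -/
def zone (i : I) : Set V := {v | v ∈ (Λ.q i).N ∧ v ∉ (Λ.r i).N}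

open Classical in
/-- The vertex set of the path system used in zone `i`: switched for `i ∈ J`, unswitched
otherwise. -/
noncomputable def F (i : I) : Set V := if i ∈ J then Λ.D' i else (Λ.r i).Dh (Λ.h i)

open Classical in
/-- The predecessor map belonging to `F`. -/
noncomputable def σ (i : I) : V → V := if i ∈ J then Λ.π' i else (Λ.r i).π

/-- The reachable set of step `i`. -/
abbrev S (i : I) : Set V := (Λ.r i).S (Λ.h i)

theorem rr {i j : I} (hij : i ≤ j) : Λ.r j ≤ Λ.r i := by
  rcases hij.lt_or_eq with hij | rfl
  · exact (Λ.rq i j hij).trans (Λ.qr i)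
  · exact le_rfl

theorem qr' {i j : I} (hij : i ≤ j) : Λ.q j ≤ Λ.r i := (Λ.qr j).trans (Λ.rr hij)

variable {Λ} {J} {i j k m : I} {v w : V}

theorem zone_le (hz : v ∈ Λ.zone j) (hv : v ∉ (Λ.r i).N) : i ≤ j := by
  by_contra hlt
  exact hv ((Λ.rq j i (not_le.1 hlt)).N v hz.1)

theorem zone_unique (h1 : v ∈ Λ.zone i) (h2 : v ∈ Λ.zone j) : i = j :=
  le_antisymm (zone_le h2 h1.2) (zone_le h1 h2.2)

theorem coh (h1 : v ∈ (Λ.r i).D) (h2 : v ∈ (Λ.r j).D) : (Λ.r i).π v = (Λ.r j).π v := by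
  rcases le_total i j with hij | hij
  · exact ((Λ.rr hij).π v h1 ((Λ.r j).notN h2)).symm
  · exact (Λ.rr hij).π v h2 ((Λ.r i).notN h1)

theorem zone_pred (h1 : v ∈ (Λ.r i).D) : v ∈ Λ.zone j ↔ (Λ.r i).π v ∈ Λ.zone j := by
  have hv := (Λ.r i).notN h1
  have hw := (Λ.r i).notN ((Λ.r i).lk.toSys.cl' h1)
  constructor
  · intro hz
    have hij := zone_le hz hv
    exact ⟨((Λ.qr' hij).comp v h1).1 hz.1, fun h => hz.2 (((Λ.rr hij).comp v h1).2 h)⟩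
  · intro hz
    have hij := zone_le hz hw
    exact ⟨((Λ.qr' hij).comp v h1).2 hz.1, fun h => hz.2 (((Λ.rr hij).comp v h1).1 h)⟩

theorem D'_notN (hv : v ∈ Λ.D' i) : v ∉ (Λ.r i).N := by
  by_cases hA : v ∈ (Γ.delete (Λ.r i).N).A
  · exact hA.2
  · exact ((Λ.aug i).adj v hv hA).2.2

theorem F_notN (hv : v ∈ Λ.F J i) : v ∉ (Λ.r i).N := by
  unfold F at hv
  split_ifs at hv
  · exact D'_notN hv
  · exact (Λ.r i).notN hv.1

theorem F_src (hv : v ∈ Λ.F J i) (hA : v ∈ Γ.A) : Λ.σ J i v = v := by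
  have hn := F_notN hv
  unfold F at hv
  unfold σ
  split_ifs at hv ⊢
  · exact (Λ.aug i).src v hv ⟨hA, hn⟩
  · exact (Λ.r i).lk.src v hv.1 ⟨hA, hn⟩

theorem F_cl (hv : v ∈ Λ.F J i) (hA : v ∉ Γ.A) :
    Λ.σ J i v ∈ Λ.F J i ∧ Γ.Adj (Λ.σ J i v) v := by
  have hA' : v ∉ (Γ.delete (Λ.r i).N).A := fun h => hA h.1
  unfold F at hv ⊢
  unfold σ
  split_ifs at hv ⊢
  · exact ⟨(Λ.aug i).cl v hv hA', ((Λ.aug i).adj v hv hA').1⟩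
  · exact ⟨(Λ.miss i).lk.cl v hv hA', ((Λ.miss i).lk.adj v hv hA').1⟩

theorem F_zone (hv : v ∈ Λ.F J i) (hz : v ∈ Λ.zone i) (hA : v ∉ Γ.A) :
    Λ.σ J i v ∈ Λ.zone i := by
  refine ⟨?_, F_notN (F_cl hv hA).1⟩
  unfold F at hv
  unfold σ
  split_ifs at hv ⊢
  · by_cases hc : v ∉ (Λ.r i).Dh (Λ.h i) ∨ Λ.π' i v ≠ (Λ.r i).π v
    · exact Λ.kN i v hv hc
    · push Not at hc
      rw [hc.2]
      exact ((zone_pred hc.1.1).1 hz).1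
  · exact ((zone_pred hv.1).1 hz).1

theorem F_inj (hv : v ∈ Λ.F J i) (hw : w ∈ Λ.F J i) (hA : v ∉ Γ.A) (hB : w ∉ Γ.A)
    (e : Λ.σ J i v = Λ.σ J i w) : v = w := by
  have hA' : v ∉ (Γ.delete (Λ.r i).N).A := fun h => hA h.1
  have hB' : w ∉ (Γ.delete (Λ.r i).N).A := fun h => hB h.1
  unfold F at hv hw
  unfold σ at e
  split_ifs at hv hw e
  · exact (Λ.aug i).inj v hv w hw hA' hB' e
  · exact (Λ.r i).lk.inj v hv.1 w hw.1 hA' hB' e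

theorem F_pred (hv : v ∈ Λ.F J i) (hA : v ∉ Γ.A) :
    (v ∈ (Λ.r i).D ∧ Λ.σ J i v = (Λ.r i).π v) ∨ Λ.σ J i v ∈ Λ.S i := by
  have hA' : v ∉ (Γ.delete (Λ.r i).N).A := fun h => hA h.1
  unfold F at hv
  unfold σ
  split_ifs at hv ⊢
  · by_cases hc : v ∉ (Λ.r i).Dh (Λ.h i) ∨ Λ.π' i v ≠ (Λ.r i).π v
    · exact Or.inr ((Λ.aug i).chg' v hv hA' hc)
    · push Not at hc
      exact Or.inl ⟨hc.1.1, hc.2⟩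
  · exact Or.inl ⟨hv.1, rfl⟩

theorem F_old (hv : v ∈ (Λ.r i).D) (hS : v ∉ Λ.S i) : v ∈ Λ.F J i := by
  have := (Λ.miss i).mem_Dh hv hS
  unfold F
  split_ifs
  · by_contra hn
    exact hS ((Λ.aug i).old v this hn)
  · exact this

theorem aug_fin (i : I) (hv : v ∈ Λ.D' i) (hS : v ∉ Λ.S i ∨ v = Λ.u i) :
    ∃ n, (Λ.π' i)^[n] v ∈ Γ.A := by
  classical
  set W := Γ.delete (Λ.r i).N with hW
  have H := Λ.aug i
  set b := Λ.b i
  set u := Λ.u i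
  have hb : b ∉ Λ.D' i := fun h => D'_notN h (Λ.bN i)
  have hbS : b ∉ Λ.S i := fun h => (Λ.miss i).S_notN h (Λ.bN i)
  have hbA : b ∉ Γ.A := Γ.not_into_A _ _ (Λ.ub i)
  let ρ : V → V := fun x => if x = b then u else Λ.π' i x
  have hρb : ρ b = u := if_pos rfl
  have hρ : ∀ x ∈ Λ.D' i, ρ x = Λ.π' i x := fun x hx => if_neg fun e : x = b => hb (e ▸ hx)
  have hcl' : ∀ x ∈ Λ.D' i, Λ.π' i x ∈ Λ.D' i := by
    intro x hx
    by_cases hA : x ∈ W.A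
    · rw [H.src x hx hA]; exact hx
    · exact H.cl x hx hA
  have hit : ∀ n, ∀ x ∈ Λ.D' i, ρ^[n] x = (Λ.π' i)^[n] x := by
    intro n
    induction n with
    | zero => intro x _; rfl
    | succ n ih =>
      intro x hx
      rw [Function.iterate_succ_apply, Function.iterate_succ_apply, hρ x hx, ih _ (hcl' x hx)]
  have fin : ∀ x ∈ insert b (Λ.D' i), x ∉ Λ.S i → ∃ n, ρ^[n] x ∈ W.A := by
    intro x hx hxS
    refine fin_of_finite_change (D := (Λ.r i).Dh (Λ.h i)) (π := (Λ.r i).π) (S := Λ.S i)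
      (K := insert b {x | ¬ (x ∈ (Λ.r i).Dh (Λ.h i) ↔ x ∈ Λ.D' i) ∨ Λ.π' i x ≠ (Λ.r i).π x})
      (Λ.miss i).lk.fin ?_ ?_ (H.finite.insert b) ?_ ?_ (fun y h1 h2 => alt_back h2 h1) hx hxS
    · rintro y (rfl | hy) hA
      · rw [hρb]; exact Or.inr H.mem
      · rw [hρ y hy]; exact Or.inr (hcl' y hy)
    · rintro y (rfl | hy) z (rfl | hz) hA hA'
      · exact fun _ => rfl
      · rw [hρb, hρ z hz]; exact fun e => absurd e.symm (H.free z hz hA')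
      · rw [hρb, hρ y hy]; exact fun e => absurd e (H.free y hy hA)
      · rw [hρ y hy, hρ z hz]; exact H.inj y hy z hz hA hA'
    · intro y hy hyK
      have hyb : y ≠ b := fun e => hyK (Or.inl e)
      have hyD : y ∈ Λ.D' i := hy.resolve_left hyb
      have h2 : ¬ (¬ (y ∈ (Λ.r i).Dh (Λ.h i) ↔ y ∈ Λ.D' i) ∨ Λ.π' i y ≠ (Λ.r i).π y) :=
        fun h => hyK (Or.inr h)
      push Not at h2
      rw [hρ y hyD]
      exact ⟨h2.1.2 hyD, h2.2⟩
    · rintro y (rfl | hy) hA hyK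
      · rw [hρb]; exact Λ.us i
      · rw [hρ y hy]
        refine H.chg' y hy hA ?_
        rcases hyK with e | h | h
        · exact absurd (e ▸ hy) hb
        · left; tauto
        · exact Or.inr h
  rcases hS with hS | rfl
  · obtain ⟨n, hn⟩ := fin v (Or.inr hv) hS
    exact ⟨n, by rw [← hit n v hv]; exact hn.1⟩
  · obtain ⟨n, hn⟩ := fin b (Or.inl rfl) hbS
    cases n with
    | zero => exact absurd hn.1 hbA
    | succ n =>
      rw [Function.iterate_succ_apply, hρb] at hn
      exact ⟨n, by rw [← hit n u H.mem]; exact hn.1⟩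

theorem F_fin (hv : v ∈ Λ.F J i) (hS : v ∉ Λ.S i) : ∃ n, (Λ.σ J i)^[n] v ∈ Γ.A := by
  unfold F at hv
  unfold σ
  split_ifs at hv ⊢
  · exact aug_fin i hv (Or.inl hS)
  · obtain ⟨n, hn⟩ := (Λ.r i).lk.fin v hv.1
    exact ⟨n, hn.1⟩

/-- The predecessor relation of the assembled path system. -/
def Pr (Λ : Asm Γ I) (J : Set I) (v w : V) : Prop :=
  (∃ i ∈ J, v = Λ.b i ∧ w = Λ.u i) ∨
  ((∀ i ∈ J, v ≠ Λ.b i) ∧ v ∉ Γ.A ∧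
    ((∃ i, v ∈ Λ.zone i ∧ v ∈ Λ.F J i ∧ w = Λ.σ J i v) ∨
    ((∀ i, v ∉ Λ.zone i) ∧ ∃ i, v ∈ (Λ.r i).D ∧ w = (Λ.r i).π v)))

/-- The assembled path system is a hindrance. -/
theorem hind (Λ : Asm Γ I) (i₀ : I)
    (cov : ∀ j, ∀ b ∈ (Λ.r j).N, (∃ u ∈ Λ.S j, Γ.Adj u b) → ∃ i, i ≠ i₀ ∧ Λ.b i = b) : Hind Γ := by
  classical
  set U : Set V := {v | ∃ i, v ∈ Λ.S i} with hU
  set T : Set V := {b | b ∈ Γ.bd U ∧ b ∉ Γ.A ∧ ∀ i, (∃ u ∈ Λ.S i, Γ.Adj u b) → b ∈ (Λ.r i).N} with hT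
  have hTi : ∀ b ∈ T, ∃ i, i ≠ i₀ ∧ Λ.b i = b := by
    rintro b ⟨⟨hb | ⟨u, ⟨j, hu⟩, e⟩, -⟩, hbA, hb2⟩
    · exact absurd hb hbA
    · exact cov j b (hb2 j ⟨u, hu, e⟩) ⟨u, hu, e⟩
  have : Nonempty I := ⟨i₀⟩
  choose! f hf0 hf using hTi
  set J : Set I := f '' T with hJ
  have hJb : ∀ i ∈ J, Λ.b i ∈ T ∧ f (Λ.b i) = i := by
    rintro _ ⟨b, hb, rfl⟩
    rw [hf b hb]; exact ⟨hb, rfl⟩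
  have hbU : ∀ i ∈ J, ∀ v ∈ U, v ≠ Λ.b i := by
    intro i hi v hv e
    exact (hJb i hi).1.1.2 (e ▸ hv)
  have hi₀ : i₀ ∉ J := by
    rintro ⟨b, hb, e⟩; exact hf0 b hb e
  have hFJ : ∀ i ∈ J, Λ.F J i = Λ.D' i ∧ Λ.σ J i = Λ.π' i := by
    intro i hi
    simp only [F, σ, if_pos hi, and_self]
  have hz₀ : Λ.h i₀ ∈ Λ.zone i₀ := ⟨Λ.hN i₀, (Λ.miss i₀).notN⟩
  have hF₀ : Λ.h i₀ ∉ Λ.F J i₀ := by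
    simp only [F, if_neg hi₀]
    exact (Λ.miss i₀).notDh
  have huz : ∀ i, Λ.u i ∈ Λ.zone i := fun i => ⟨Λ.uN i, (Λ.miss i).S_notN (Λ.us i)⟩
  -- `U` is closed under predecessors
  have hUD : ∀ k i v, v ∈ Λ.S k → v ∈ (Λ.r i).D → v ∈ (Λ.r k).D := by
    intro k i v hk hi
    rcases le_total i k with hik | hik
    · exact (Λ.rr hik).D v hi ((Λ.miss k).S_notN hk)
    · exact (Λ.rr hik).back v hi ((Λ.miss k).S_sub hk)
  have hUπ : ∀ i, ∀ v ∈ U, v ∈ (Λ.r i).D → (Λ.r i).π v ∈ U := by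
    rintro i v ⟨k, hk⟩ hi
    have hk' := hUD k i v hk hi
    rw [coh hi hk']
    exact ⟨k, (Λ.miss k).pred_S hk' hk⟩
  have hUF : ∀ i, ∀ v ∈ U, v ∈ Λ.F J i → v ∉ Γ.A → Λ.σ J i v ∈ U := by
    intro i v hv hF hA
    rcases F_pred hF hA with ⟨h1, h2⟩ | h1
    · rw [h2]; exact hUπ i v hv h1
    · exact ⟨i, h1⟩
  set A₀ : Set V := {a | a ∈ Γ.A ∧ a ∈ U ∧ a ≠ Λ.h i₀} with hA₀
  have C1 : ∀ i n v, v ∈ Λ.F J i → v ∈ Λ.zone i → v ∈ U → (Λ.σ J i)^[n] v ∈ Γ.A →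
      Rch U A₀ (Λ.Pr J) v := by
    intro i n
    have base : ∀ v, v ∈ Λ.F J i → v ∈ Λ.zone i → v ∈ U → v ∈ Γ.A → Rch U A₀ (Λ.Pr J) v := by
      intro v hF hz hv hA
      refine .base ⟨hA, hv, ?_⟩
      rintro rfl
      obtain rfl := zone_unique hz hz₀
      exact hF₀ hF
    induction n with
    | zero => intro v hF hz hv hA; exact base v hF hz hv hA
    | succ n ih =>
      intro v hF hz hv hn
      by_cases hA : v ∈ Γ.A
      · exact base v hF hz hv hA
      · rw [Function.iterate_succ_apply] at hn
        have hU' := hUF i v hv hF hA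
        exact .step (Or.inr ⟨fun j hj => hbU j hj v hv, hA, Or.inl ⟨i, hz, hF, rfl⟩⟩) hU'
          (ih _ (F_cl hF hA).1 (F_zone hF hz hA) hU' hn)
  have C2 : ∀ k, ∀ v ∈ (Λ.r k).D, v ∈ U → (∀ i, v ∉ Λ.zone i) → Rch U A₀ (Λ.Pr J) v := by
    intro k
    refine (Λ.r k).lk.toSys.ind (P := fun v => v ∈ U → (∀ i, v ∉ Λ.zone i) →
      Rch U A₀ (Λ.Pr J) v) ?_ ?_
    · intro v hv hvA hvU hz
      refine .base ⟨hvA.1, hvU, ?_⟩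
      rintro rfl
      exact hz i₀ hz₀
    · intro v hv hvA ih hvU hz
      have hA : v ∉ Γ.A := fun h => hvA ⟨h, (Λ.r k).notN hv⟩
      have hU' := hUπ k v hvU hv
      exact .step (Or.inr ⟨fun j hj => hbU j hj v hvU, hA, Or.inr ⟨hz, k, hv, rfl⟩⟩) hU'
        (ih hU' fun i hi => hz i ((zone_pred hv).2 hi))
  refine hind_of_rch (U := U) (A₀ := A₀) (Pr := Λ.Pr J) (h := Λ.h i₀) ?_ (fun a ha => ⟨ha.1, ha.2.1⟩)
    ?_ ?_ ?_ ?_ (Λ.miss i₀).1 ⟨i₀, mem_alt_self⟩ (fun h => h.2.2 rfl)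
  · rintro v ⟨i, hi⟩ hB
    exact (Λ.r i).lk.avoid v ((Λ.miss i).S_sub hi) ⟨hB, (Λ.miss i).S_notN hi⟩
  · rintro v w (⟨i, _, rfl, rfl⟩ | ⟨_, hA, ⟨i, hz, hF, rfl⟩ | ⟨_, i, hD, rfl⟩⟩)
    · exact Λ.ub i
    · exact (F_cl hF hA).2
    · exact (Λ.r i).adjD hD hA
  · rintro v w w' (⟨i, hi, e1, rfl⟩ | ⟨h1, hA, h2⟩) (⟨i', hi', e2, rfl⟩ | ⟨h1', hA', h2'⟩)
    · have : i = i' := by rw [← (hJb i hi).2, ← (hJb i' hi').2, ← e1, ← e2]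
      rw [this]
    · exact absurd e1 (h1' i hi)
    · exact absurd e2 (h1 i' hi')
    · rcases h2 with ⟨i, hz, hF, rfl⟩ | ⟨hz, i, hD, rfl⟩ <;>
        rcases h2' with ⟨i', hz', hF', rfl⟩ | ⟨hz', i', hD', rfl⟩
      · rw [zone_unique hz hz']
      · exact absurd hz (hz' i)
      · exact absurd hz' (hz i')
      · exact coh hD hD'
  · have key : ∀ v w, w ∈ U → Λ.Pr J v w → (∀ i ∈ J, v ≠ Λ.b i) → v ∉ Γ.A ∧
        ((∃ i, v ∈ Λ.F J i ∧ w = Λ.σ J i v ∧ w ∈ Λ.zone i) ∨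
        ((∀ i, w ∉ Λ.zone i) ∧ ∃ i, v ∈ (Λ.r i).D ∧ w = (Λ.r i).π v)) := by
      rintro v w hw (⟨i, hi, e1, rfl⟩ | ⟨_, hA, h2⟩) hne
      · exact absurd e1 (hne i hi)
      refine ⟨hA, ?_⟩
      rcases h2 with ⟨i, hz, hF, rfl⟩ | ⟨hz, i, hD, rfl⟩
      · exact Or.inl ⟨i, hF, rfl, F_zone hF hz hA⟩
      · exact Or.inr ⟨fun j hj => hz j ((zone_pred hD).2 hj), i, hD, rfl⟩
    have mixed : ∀ i ∈ J, ∀ v, Λ.u i ∈ U → Λ.Pr J v (Λ.u i) → ¬ ∀ i ∈ J, v ≠ Λ.b i := by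
      intro i hi v hU' hp hne
      obtain ⟨hA, ⟨j, hF, e, hz⟩ | ⟨hz, -⟩⟩ := key v _ hU' hp hne
      · obtain rfl := zone_unique hz (huz i)
        rw [(hFJ j hi).1] at hF
        rw [(hFJ j hi).2] at e
        exact (Λ.aug j).free v hF (fun h => hA h.1) e.symm
      · exact hz i (huz i)
    intro v v' w hw hp hp'
    by_cases h1 : ∀ i ∈ J, v ≠ Λ.b i
    · by_cases h2 : ∀ i ∈ J, v' ≠ Λ.b i
      · obtain ⟨hA, h3⟩ := key v w hw hp h1
        obtain ⟨hA', h4⟩ := key v' w hw hp' h2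
        rcases h3 with ⟨i, hF, e, hz⟩ | ⟨hz, i, hD, e⟩ <;>
          rcases h4 with ⟨i', hF', e', hz'⟩ | ⟨hz', i', hD', e'⟩
        · obtain rfl := zone_unique hz hz'
          exact F_inj hF hF' hA hA' (e.symm.trans e')
        · exact absurd hz (hz' i)
        · exact absurd hz' (hz i')
        · have main : ∀ i i' v v', i ≤ i' → v ∈ (Λ.r i).D → v' ∈ (Λ.r i').D → v ∉ Γ.A → v' ∉ Γ.A →
              (Λ.r i).π v = (Λ.r i').π v' → v = v' := by
            intro i i' v v' hii hD hD' hA hA' e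
            have hn : v ∉ (Λ.r i').N := by
              rw [(Λ.rr hii).comp v hD, e]
              exact (Λ.r i').notN ((Λ.r i').lk.toSys.cl' hD')
            have hD2 := (Λ.rr hii).D v hD hn
            rw [coh hD hD2] at e
            exact (Λ.r i').lk.inj v hD2 v' hD' (fun h => hA h.1) (fun h => hA' h.1) e
          rcases le_total i i' with hii | hii
          · exact main i i' v v' hii hD hD' hA hA' (e.symm.trans e')
          · exact (main i' i v' v hii hD' hD hA' hA (e'.symm.trans e)).symm
      · rcases hp' with ⟨i, hi, rfl, rfl⟩ | hp'
        · exact absurd h1 (mixed i hi v hw hp)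
        · exact absurd hp'.1 h2
    · rcases hp with ⟨i, hi, rfl, rfl⟩ | hp
      · rcases hp' with ⟨i', hi', rfl, e⟩ | hp'
        · have := huz i'
          rw [← e] at this
          rw [zone_unique (huz i) this]
        · exact absurd hp'.1 (mixed i hi v' hw (Or.inr hp'))
      · exact absurd hp.1 h1
  · intro b hb hbA
    by_cases hbT : b ∈ T
    · have hi : f b ∈ J := ⟨b, hbT, rfl⟩
      have huU : Λ.u (f b) ∈ U := ⟨f b, Λ.us _⟩
      refine .step (Or.inl ⟨f b, hi, (hf b hbT).symm, rfl⟩) huU ?_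
      obtain ⟨n, hn⟩ := aug_fin (Λ := Λ) (f b) (Λ.aug _).mem (Or.inr rfl)
      refine C1 (f b) n _ ?_ (huz _) huU ?_
      · rw [(hFJ _ hi).1]; exact (Λ.aug _).mem
      · rw [(hFJ _ hi).2]; exact hn
    · have hbJ : ∀ i ∈ J, b ≠ Λ.b i := fun i hi e => hbT (e ▸ (hJb i hi).1)
      have hbU' : ∀ i, b ∉ Λ.S i := fun i h => hb.2 ⟨i, h⟩
      have : ∃ i, (∃ u ∈ Λ.S i, Γ.Adj u b) ∧ b ∉ (Λ.r i).N := by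
        by_contra hcon
        push Not at hcon
        exact hbT ⟨hb, hbA, fun i hi => hcon i hi⟩
      obtain ⟨i, ⟨u, hu, e⟩, hbN⟩ := this
      have e' : (Γ.delete (Λ.r i).N).Adj u b := ⟨e, (Λ.miss i).S_notN hu, hbN⟩
      have hbD : b ∈ (Λ.r i).Dh (Λ.h i) := by
        by_contra hcon
        exact hbU' i (alt_out hu e' hcon)
      have hbπ : (Λ.r i).π b ∈ Λ.S i := alt_jump hu e' hbD
      by_cases hz : ∃ m, b ∈ Λ.zone m
      · obtain ⟨m, hz⟩ := hz
        have him : i ≤ m := zone_le hz hbN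
        have hbDm : b ∈ (Λ.r m).D := (Λ.rr him).D b hbD.1 hz.2
        have hF : b ∈ Λ.F J m := F_old hbDm (hbU' m)
        have hU' : Λ.σ J m b ∈ U := by
          rcases F_pred hF hbA with ⟨h1, h2⟩ | h1
          · rw [h2, coh h1 hbD.1]; exact ⟨i, hbπ⟩
          · exact ⟨m, h1⟩
        refine .step (Or.inr ⟨hbJ, hbA, Or.inl ⟨m, hz, hF, rfl⟩⟩) hU' ?_
        obtain ⟨n, hn⟩ := F_fin hF (hbU' m)
        cases n with
        | zero => exact absurd hn hbA
        | succ n =>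
          rw [Function.iterate_succ_apply] at hn
          exact C1 m n _ (F_cl hF hbA).1 (F_zone hF hz hbA) hU' hn
      · push Not at hz
        have hU' : (Λ.r i).π b ∈ U := ⟨i, hbπ⟩
        refine .step (Or.inr ⟨hbJ, hbA, Or.inr ⟨hz, i, hbD.1, rfl⟩⟩) hU' ?_
        exact C2 i _ ((Λ.r i).lk.toSys.cl' hbD.1) hU' fun j hj => hz j ((zone_pred hbD.1).2 hj)

end Asm

end Web

end

/-! ### Transfinite recursion and absorption of vertex sets -/

section

/-- Recursion along a well-order with a relation that only looks at earlier values. -/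
theorem exists_wf_seq {I : Type*} [LinearOrder I] [WellFoundedLT I] {α : Type*} [Nonempty α]
    (R : I → (I → α) → α → Prop)
    (hR : ∀ i f g s, (∀ j < i, f j = g j) → R i f s → R i g s)
    (h : ∀ i f, (∀ j < i, R j f (f j)) → ∃ s, R i f s) : ∃ f : I → α, ∀ i, R i f (f i) := by
  classical
  let d : α := Classical.arbitrary α
  let F : (i : I) → ((j : I) → j < i → α) → α := fun i rec =>
    let f : I → α := fun j => if hj : j < i then rec j hj else d
    if hs : ∃ s, R i f s then hs.choose else d
  let f : I → α := (wellFounded_lt (α := I)).fix F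
  have hf : ∀ i, f i = F i (fun j _ => f j) := fun i => WellFounded.fix_eq _ F i
  refine ⟨f, fun i => ?_⟩
  induction i using WellFoundedLT.induction with
  | ind i ih =>
    let g : I → α := fun j => if j < i then f j else d
    have hg : ∀ j < i, f j = g j := fun j hj => (if_pos hj).symm
    obtain ⟨s, hs⟩ := h i f ih
    have hex : ∃ s, R i g s := ⟨s, hR i f g s hg hs⟩
    have hfi : f i = hex.choose := by
      rw [hf i]
      exact dif_pos hex
    rw [hfi]
    exact hR i g f _ (fun j hj => (hg j hj).symm) hex.choose_spec

namespace Web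
variable {V : Type u} {Γ : Web V}

theorem Sys.depth_inj {D : Set V} {π : V → V} (h : Sys Γ D π) (n : ℕ) :
    ∀ v ∈ D, ∀ w ∈ D, (∀ m < n, π^[m] v ∉ Γ.A) → (∀ m < n, π^[m] w ∉ Γ.A) →
      π^[n] v = π^[n] w → v = w := by
  induction n with
  | zero => intro v _ w _ _ _ e; exact e
  | succ n ih =>
    intro v hv w hw h1 h2 e
    rw [Function.iterate_succ_apply, Function.iterate_succ_apply] at e
    have := ih (π v) (h.cl' hv) (π w) (h.cl' hw)
      (fun m hm => by rw [← Function.iterate_succ_apply]; exact h1 _ (by omega))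
      (fun m hm => by rw [← Function.iterate_succ_apply]; exact h2 _ (by omega)) e
    exact h.inj v hv w hw (h1 0 (by omega)) (h2 0 (by omega)) this

/-- The union of the paths of a system that meet `X`. -/
def comp (Γ : Web V) (D : Set V) (π : V → V) (X : Set V) : Set V :=
  {v | v ∈ D ∧ ∃ x ∈ X, x ∈ D ∧ root Γ.A π v = root Γ.A π x}

theorem Sys.countable_comp {D : Set V} {π : V → V} (h : Sys Γ D π) (a : V) :
    {v | v ∈ D ∧ root Γ.A π v = a}.Countable := by
  classical
  have hx : ∀ v, ∃ n, v ∈ D → π^[n] v ∈ Γ.A ∧ ∀ m < n, π^[m] v ∉ Γ.A := by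
    intro v
    by_cases hv : v ∈ D
    · exact ⟨Nat.find (h.fin v hv), fun _ => ⟨Nat.find_spec (h.fin v hv),
        fun m hm => Nat.find_min (h.fin v hv) hm⟩⟩
    · exact ⟨0, fun h => absurd h hv⟩
  choose d hd using hx
  refine Set.countable_iff_exists_injOn.2 ⟨d, ?_⟩
  rintro v ⟨hv, ev⟩ w ⟨hw, ew⟩ e
  have hr : ∀ v ∈ D, π^[d v] v = root Γ.A π v := fun v hv => by
    rw [← h.root_iter hv (d v), root_of_mem (hd v hv).1]
  refine h.depth_inj (d v) v hv w hw (hd v hv).2 (fun m hm => (hd w hw).2 m (e ▸ hm)) ?_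
  rw [hr v hv, ev, e, hr w hw, ew]

theorem Sys.mk_comp_le {D : Set V} {π : V → V} (h : Sys Γ D π) {X : Set V} {κ : Cardinal.{u}}
    (hX : #X ≤ κ) (hκ : ℵ₀ ≤ κ) : #(comp Γ D π X) ≤ κ := by
  have hsub : comp Γ D π X ⊆ ⋃ x : X, {v | v ∈ D ∧ root Γ.A π v = root Γ.A π x} := by
    rintro v ⟨hv, x, hx, -, e⟩
    exact Set.mem_iUnion.2 ⟨⟨x, hx⟩, hv, e⟩
  refine (mk_le_mk_of_subset hsub).trans ((mk_iUnion_le _).trans ?_)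
  refine mul_le_of_le hκ hX (ciSup_le' fun x => ?_)
  exact (h.countable_comp _).le_aleph0.trans hκ

theorem Sys.mk_comp_lt {D : Set V} {π : V → V} (h : Sys Γ D π) {X : Set V} {κ : Cardinal.{u}}
    (hX : #X < κ) (hκ : ℵ₀ < κ) : #(comp Γ D π X) < κ :=
  (h.mk_comp_le (κ := max #X ℵ₀) (le_max_left _ _) (le_max_right _ _)).trans_lt (max_lt hX hκ)

theorem subset_comp {D : Set V} {π : V → V} {X : Set V} {v : V} (hv : v ∈ D) (hX : v ∈ X) :
    v ∈ comp Γ D π X := ⟨hv, v, hX, hv, rfl⟩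

theorem Sys.comp_iff {D : Set V} {π : V → V} (h : Sys Γ D π) {X : Set V} {v : V} (hv : v ∈ D) :
    v ∈ comp Γ D π X ↔ π v ∈ comp Γ D π X := by
  refine ⟨fun ⟨_, x, h1, h2, h3⟩ => ⟨h.cl' hv, x, h1, h2, ?_⟩,
    fun ⟨_, x, h1, h2, h3⟩ => ⟨hv, x, h1, h2, ?_⟩⟩
  · rw [h.root_pred hv, h3]
  · rw [← h.root_pred hv, h3]

namespace Pos

/-- Remove from a position a vertex set consisting of whole paths and unused vertices. -/
def remove (p : Pos Γ) (Z : Set V) (hZ : p.N ⊆ Z) (hc : ∀ v ∈ p.D, v ∈ Z ↔ p.π v ∈ Z) :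
    Pos Γ where
  N := Z
  R := p.R \ Z
  D := p.D \ Z
  π := p.π
  disj := fun v hv => hv.2
  lk := by
    have hA : ∀ v ∈ p.D, v ∉ Z → v ∉ (Γ.delete Z).A → v ∉ (Γ.delete p.N).A :=
      fun v _ hvZ hvA h => hvA ⟨h.1, hvZ⟩
    have hnA : ∀ v, v ∈ (Γ.delete Z).A → v ∈ (Γ.delete p.N).A :=
      fun v h => ⟨h.1, fun hN => h.2 (hZ hN)⟩
    refine ⟨⟨?_, ?_, ?_, ?_, ?_⟩, ?_, ?_, ?_, ?_⟩
    · intro a ha haA; exact p.lk.src a ha.1 (hnA a haA)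
    · intro v hv _; exact ⟨p.lk.toSys.cl' hv.1, fun h => hv.2 ((hc v hv.1).2 h)⟩
    · intro v hv hvA
      exact ⟨(p.lk.adj v hv.1 (hA v hv.1 hv.2 hvA)).1, fun h => hv.2 ((hc v hv.1).2 h), hv.2⟩
    · intro v hv w hw hvA hwA e
      exact p.lk.inj v hv.1 w hw.1 (hA v hv.1 hv.2 hvA) (hA w hw.1 hw.2 hwA) e
    · rintro v ⟨hv, hvZ⟩
      revert v
      refine p.lk.toSys.ind (P := fun v => v ∉ Z → ∃ n, p.π^[n] v ∈ (Γ.delete Z).A) ?_ ?_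
      · intro a _ ha haZ; exact ⟨0, ha.1, haZ⟩
      · intro v hv _ ih hvZ
        exact reach_step (ih fun h => hvZ ((hc v hv).2 h))
    · intro v hv hB; exact p.lk.avoid v hv.1 ⟨hB.1, fun h => hB.2 (hZ h)⟩
    · intro v hv hvA
      exact ⟨p.lk.pred v hv.1 (hA v hv.1 hv.2 hvA), fun h => hv.2 ((hc v hv.1).2 h)⟩
    · rintro v ⟨h1 | ⟨w, hw, e⟩, h2⟩
      · exact ⟨p.lk.bdD v ⟨Or.inl (hnA v h1), fun h => h2 ⟨h, h1.2⟩⟩, h1.2⟩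
      · refine ⟨p.lk.bdD v ⟨Or.inr ⟨w, hw.1, e.1, fun h => e.2.1 (hZ h), fun h => e.2.2 (hZ h)⟩,
          fun h => h2 ⟨h, e.2.2⟩⟩, e.2.2⟩
    · intro v hv
      rcases p.lk.sub v hv.1 with h | h
      · exact Or.inl ⟨h, hv.2⟩
      · refine Or.inr ⟨?_, fun h' => h.2 h'.1⟩
        by_cases hvA : v ∈ (Γ.delete p.N).A
        · exact Or.inl ⟨hvA.1, hv.2⟩
        · refine Or.inr ⟨p.π v, ⟨p.lk.pred v hv.1 hvA, ?_⟩, (p.lk.adj v hv.1 hvA).1, ?_, hv.2⟩ <;>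
            exact fun h => hv.2 ((hc v hv.1).2 h)

theorem remove_le (p : Pos Γ) (Z : Set V) (hZ : p.N ⊆ Z) (hc : ∀ v ∈ p.D, v ∈ Z ↔ p.π v ∈ Z) :
    p.remove Z hZ hc ≤ p :=
  ⟨fun _ h => hZ h, fun v hv => hc v hv, fun _ h h' => ⟨h, h'⟩, fun _ h h' => ⟨h, h'⟩,
    fun _ _ _ => rfl, fun _ h _ => h.1⟩

/-- The vertices removed when the set `X` is absorbed: `X` with all paths meeting it. -/
def absN (p : Pos Γ) (X : Set V) : Set V :=
  p.N ∪ X ∪ comp (Γ.delete p.N) p.D p.π X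

/-- Absorb a vertex set. -/
def absorb (p : Pos Γ) (X : Set V) : Pos Γ :=
  p.remove (p.absN X) (fun _ h => Or.inl (Or.inl h)) (by
    have key : ∀ v ∈ p.D, v ∈ p.absN X ↔ v ∈ comp (Γ.delete p.N) p.D p.π X := by
      intro v hv
      refine ⟨?_, Or.inr⟩
      rintro ((h | h) | h)
      · exact absurd h (p.notN hv)
      · exact subset_comp hv h
      · exact h
    intro v hv
    rw [key v hv, key _ (p.lk.toSys.cl' hv), p.lk.toSys.comp_iff hv])

theorem absorb_le (p : Pos Γ) (X : Set V) : p.absorb X ≤ p := p.remove_le _ _ _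

theorem subset_absorb (p : Pos Γ) {X : Set V} {v : V} (hv : v ∈ X) : v ∈ (p.absorb X).N :=
  Or.inl (Or.inr hv)

theorem mk_absorb_lt (p : Pos Γ) {X : Set V} {κ : Cardinal.{u}} (hκ : ℵ₀ < κ) (hp : #p.N < κ)
    (hX : #X < κ) : #(p.absorb X).N < κ := by
  refine (mk_union_le _ _).trans_lt (add_lt_of_lt hκ.le ?_ (p.lk.toSys.mk_comp_lt hX hκ))
  exact (mk_union_le _ _).trans_lt (add_lt_of_lt hκ.le hp hX)

theorem mk_absorb_le (p : Pos Γ) {X : Set V} {κ : Cardinal.{u}} (hκ : ℵ₀ ≤ κ) (hp : #p.N ≤ κ)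
    (hX : #X ≤ κ) : #(p.absorb X).N ≤ κ := by
  refine (mk_union_le _ _).trans (add_le_of_le hκ ?_ (p.lk.toSys.mk_comp_le hX hκ))
  exact (mk_union_le _ _).trans (add_le_of_le hκ hp hX)

/-- The removed vertices that receive an edge from the vertices reachable from `h`. -/
def β (p : Pos Γ) (h : V) : Set V := {b | b ∈ p.N ∧ ∃ u ∈ p.S h, Γ.Adj u b}

/-- If the alternating walks from a missed source reached no removed vertex, the reachable set
would be the region of a hindrance of `Γ` itself. -/
theorem β_nonempty {p : Pos Γ} {h : V} (hΓ : ¬ Hind Γ) (hm : p.Miss h) : (p.β h).Nonempty := by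
  by_contra hne
  apply hΓ
  have hno : ∀ u ∈ p.S h, ∀ b, Γ.Adj u b → b ∉ p.N := fun u hu b e hb =>
    hne ⟨b, hb, u, hu, e⟩
  have lk := hm.lk.shrink hm.2.1
  set S := p.S h with hS
  set D : Set V := {v | (v ∈ p.Dh h ∧ p.π v ∈ S) ∨ (v ∈ (Γ.delete p.N).A ∧ v ∉ S)}
  obtain ⟨π, lk⟩ : ∃ π, IsLk (Γ.delete p.N) S D π := ⟨_, lk⟩
  have hA : ∀ v ∈ D, v ∉ Γ.A → v ∉ (Γ.delete p.N).A := fun v _ h h' => h h'.1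
  have hA' : ∀ v ∈ D, v ∉ (Γ.delete p.N).A → v ∉ Γ.A := fun v hv h h' =>
    h ⟨h', (iso_delete p.N).notMem lk.toSys hv⟩
  refine hind_of_rch (U := S) (A₀ := {a | a ∈ D ∧ a ∈ (Γ.delete p.N).A ∧ a ∈ S})
    (Pr := fun v w => v ∈ D ∧ v ∉ Γ.A ∧ w = π v) (h := h) ?_ ?_ ?_ ?_ ?_ ?_ hm.1 mem_alt_self ?_
  · intro v hv hB; exact lk.avoid v hv ⟨hB, hm.S_notN hv⟩
  · rintro a ⟨_, ha, haS⟩; exact ⟨ha.1, haS⟩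
  · rintro v w ⟨h1, h2, rfl⟩; exact (lk.adj v h1 (hA v h1 h2)).1
  · rintro v w w' ⟨_, _, e⟩ ⟨_, _, e'⟩; rw [e, e']
  · rintro v v' w _ ⟨h1, h2, e⟩ ⟨h1', h2', e'⟩
    exact lk.inj v h1 v' h1' (hA v h1 h2) (hA v' h1' h2') (by rw [← e, ← e'])
  · have : ∀ v ∈ D, (v ∉ Γ.A ∨ v ∈ S) → Rch S {a | a ∈ D ∧ a ∈ (Γ.delete p.N).A ∧ a ∈ S}
        (fun v w => v ∈ D ∧ v ∉ Γ.A ∧ w = π v) v := by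
      refine lk.toSys.ind ?_ ?_
      · rintro a ha haA (h | h)
        · exact absurd haA.1 h
        · exact Rch.base ⟨ha, haA, h⟩
      · intro v hv hvA ih _
        have h1 := lk.pred v hv hvA
        exact Rch.step ⟨hv, hA' v hv hvA, rfl⟩ h1 (ih (Or.inr h1))
    rintro v ⟨h1 | ⟨w, hw, e⟩, h2⟩ hvA
    · exact absurd h1 hvA
    · refine this v (lk.bdD v ⟨Or.inr ⟨w, hw, e, hm.S_notN hw, hno w hw v e⟩, h2⟩) (Or.inl hvA)
  · rintro ⟨h1 | h1, -, hs⟩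
    · exact hm.notDh h1.1
    · exact h1.2 mem_alt_self

end Pos
end Web

end

/-! ### The assembly theorem -/

section

theorem mk_Iio_ord {κ : Cardinal.{u}} (i : κ.ord.ToType) : #(Set.Iio i) < κ := by
  have := mk_Iio_lt i (by rw [mk_ord_toType, Ordinal.type_toType])
  rwa [mk_ord_toType] at this

/-- A bookkeeping function on an initial ordinal, taking every value arbitrarily late. -/
theorem exists_bookkeeping {κ : Cardinal.{u}} (hκ : ℵ₀ ≤ κ) :
    ∃ φ : κ.ord.ToType → κ.ord.ToType × κ.ord.ToType, ∀ l j k, ∃ i, l < i ∧ φ i = (j, k) := by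
  have hc : #(κ.ord.ToType) = #((κ.ord.ToType × κ.ord.ToType) × κ.ord.ToType) := by
    simp only [mk_prod, lift_id, mk_ord_toType]
    rw [mul_eq_self hκ, mul_eq_self hκ]
  obtain ⟨e⟩ := Cardinal.eq.1 hc
  refine ⟨fun i => (e i).1, fun l j k => ?_⟩
  by_contra hno
  push Not at hno
  let f : κ.ord.ToType → Set.Iio l ⊕ Unit := fun m =>
    if h : e.symm ((j, k), m) < l then Sum.inl ⟨_, h⟩ else Sum.inr ()
  have hle : ∀ m, e.symm ((j, k), m) ≤ l := by
    intro m
    by_contra h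
    exact hno _ (not_le.1 h) (by rw [e.apply_symm_apply])
  have hf : Function.Injective f := by
    intro m m' h
    have : e.symm ((j, k), m) = e.symm ((j, k), m') := by
      by_cases h1 : e.symm ((j, k), m) < l <;> by_cases h2 : e.symm ((j, k), m') < l
      · simp only [f, dif_pos h1, dif_pos h2] at h
        exact congrArg Subtype.val (Sum.inl.inj h)
      · simp only [f, dif_pos h1, dif_neg h2] at h
        cases h
      · simp only [f, dif_neg h1, dif_pos h2] at h
        cases h
      · rw [(hle m).antisymm (not_lt.1 h1), (hle m').antisymm (not_lt.1 h2)]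
    have := e.symm.injective this
    exact (Prod.mk.inj this).2
  have h1 := mk_le_of_injective hf
  rw [mk_ord_toType, mk_sum, lift_uzero, mk_punit, lift_one] at h1
  refine absurd h1 (not_le.2 (add_lt_of_lt hκ (mk_Iio_ord l) ?_))
  exact one_lt_aleph0.trans_le hκ

/-- A nonempty set of size at most `#I` is enumerated by `I`. -/
theorem exists_enum {I V : Type u} {X : Set V} (hX : X.Nonempty) (hc : #X ≤ #I) :
    ∃ g : I → V, (∀ i, g i ∈ X) ∧ ∀ x ∈ X, ∃ i, g i = x := by
  obtain ⟨e⟩ := hc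
  have : Nonempty X := hX.to_subtype
  refine ⟨fun i => (Function.invFun e i : X), fun i => Subtype.property _, fun x hx => ⟨e ⟨x, hx⟩, ?_⟩⟩
  exact congrArg Subtype.val (Function.leftInverse_invFun e.injective _)

theorem mk_setOf_exists_lt {V ι : Type u} {κ : Cardinal.{u}} (hκ : κ.IsRegular) {S : ι → Set V}
    (hι : #ι < κ) (hS : ∀ i, #(S i) < κ) {T : Set V} (hT : ∀ v, v ∈ T → ∃ i, v ∈ S i) : #T < κ :=
  (mk_le_mk_of_subset fun v hv => Set.mem_iUnion.2 (hT v hv)).trans_lt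
    ((card_iUnion_lt_iff_forall_of_isRegular hκ hι).2 hS)

namespace Web
variable {V : Type u} {Γ : Web V}

/-- One step of the assembly: a position with a missed source, a switch reaching a target `b`, and
a refinement which removes the vertices involved in the switch. -/
structure AStep (Γ : Web V) (lam : Cardinal.{u}) (𝓡 : Set (Pos Γ × V)) where
  r : Pos Γ
  q : Pos Γ
  h : V
  u : V
  b : V
  D' : Set V
  π' : V → V
  mem : (r, h) ∈ 𝓡
  qr : q ≤ r
  small : #q.N < lam
  us : u ∈ r.S h
  ub : Γ.Adj u b
  bN : b ∈ r.N
  aug : Aug (Γ.delete r.N) r.R (r.Dh h) r.π h (r.S h) u D' π'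
  hN : h ∈ q.N
  uN : u ∈ q.N
  kN : ∀ v, v ∈ D' → (v ∉ r.Dh h ∨ π' v ≠ r.π v) → π' v ∈ q.N

theorem exists_astep {lam : Cardinal.{u}} (hlam : ℵ₀ < lam) {𝓡 : Set (Pos Γ × V)} {x : Pos Γ × V}
    (hx : x ∈ 𝓡) (hs : #x.1.N < lam) (hm : x.1.Miss x.2) {b : V} (hb : b ∈ x.1.β x.2) :
    ∃ s : AStep Γ lam 𝓡, s.r = x.1 ∧ s.h = x.2 ∧ s.b = b := by
  obtain ⟨r, h⟩ := x
  obtain ⟨hbN, u, hu, e⟩ := hb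
  obtain ⟨D', π', H⟩ := hm.lk.exists_aug hm.A' hm.2.1 hm.notDh hu
  set K : Set V := {v | ¬ (v ∈ r.Dh h ↔ v ∈ D') ∨ π' v ≠ r.π v} with hK
  set X : Set V := {h, u} ∪ Set.image π' K with hX
  have hfin : X.Finite := (Set.toFinite _).union (H.finite.image π')
  refine ⟨⟨r, r.absorb X, h, u, b, D', π', hx, r.absorb_le X,
    r.mk_absorb_lt hlam hs (hfin.lt_aleph0.trans hlam), hu, e, hbN, H, ?_, ?_, ?_⟩, rfl, rfl, rfl⟩
  · exact r.subset_absorb (Or.inl (Or.inl rfl))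
  · exact r.subset_absorb (Or.inl (Or.inr rfl))
  · intro v hv hc
    refine r.subset_absorb (Or.inr ⟨v, ?_, rfl⟩)
    rcases hc with hc | hc
    · exact Or.inl fun h => hc (h.2 hv)
    · exact Or.inr hc

/-- In an unhindered web, no nonempty set of positions with missed sources allows every target to
be kept within reach below any refinement: otherwise, assembling the waves of a long sequence of
such positions would give a hindrance. -/
theorem assembly (hΓ : ¬ Hind Γ) {lam : Cardinal.{u}} (hreg : lam.IsRegular) (hlam : ℵ₀ < lam)
    {𝓡 : Set (Pos Γ × V)} (h𝓡 : ∀ x ∈ 𝓡, #x.1.N < lam ∧ x.1.Miss x.2)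
    (ext : ∀ x ∈ 𝓡, ∀ b ∈ x.1.β x.2, ∀ q ≤ x.1, #q.N < lam →
      ∃ x' ∈ 𝓡, x'.1 ≤ q ∧ b ∈ x'.1.β x'.2) : ∀ x, x ∉ 𝓡 := by
  classical
  intro x₀ hx₀
  apply hΓ
  set I := lam.ord.ToType with hI
  obtain ⟨φ, hφ⟩ := exists_bookkeeping hlam.le
  have hg : ∀ s : AStep Γ lam 𝓡, ∃ g : I → V, (∀ i, g i ∈ s.r.β s.h) ∧
      ∀ b ∈ s.r.β s.h, ∃ i, g i = b := by
    intro s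
    refine exists_enum ⟨s.b, s.bN, s.u, s.us, s.ub⟩ ?_
    rw [hI, mk_ord_toType]
    exact (mk_le_mk_of_subset fun v hv => hv.1).trans (h𝓡 _ s.mem).1.le
  choose g hg1 hg2 using hg
  obtain ⟨b₀, hb₀⟩ := Pos.β_nonempty hΓ (h𝓡 x₀ hx₀).2
  obtain ⟨s₀, -, -, -⟩ := exists_astep hlam hx₀ (h𝓡 x₀ hx₀).1 (h𝓡 x₀ hx₀).2 hb₀
  have : Nonempty (AStep Γ lam 𝓡) := ⟨s₀⟩
  obtain ⟨f, hf⟩ := exists_wf_seq (I := I) (α := AStep Γ lam 𝓡)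
    (fun i prev s => (∀ j < i, s.r ≤ (prev j).q) ∧
      ((φ i).1 < i → s.b = g (prev (φ i).1) (φ i).2))
    (by
      rintro i f g' s hfg ⟨h1, h2⟩
      refine ⟨fun j hj => ?_, fun hj => ?_⟩
      · rw [← hfg j hj]; exact h1 j hj
      · rw [← hfg _ hj]; exact h2 hj)
    (by
      intro i f hf
      by_cases hi : ∃ j, j < i
      · obtain ⟨j₀, hj₀⟩ := hi
        have : Nonempty (Set.Iio i) := ⟨⟨j₀, hj₀⟩⟩
        have hc : ∀ j k : Set.Iio i, j ≤ k → (f k).q ≤ (f j).q := by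
          intro j k hjk
          rcases hjk.lt_or_eq with h | rfl
          · exact (f k).qr.trans ((hf k k.2).1 j h)
          · exact le_rfl
        obtain ⟨Q, hQ, hQN, -⟩ := Pos.exists_lim (fun j : Set.Iio i => (f j).q) (fun j k =>
          (le_total j k).symm.imp (hc k j) (hc j k))
        have hQs : #Q.N < lam := mk_setOf_exists_lt hreg (mk_Iio_ord i)
          (fun j : Set.Iio i => (f j).small) fun v hv => (hQN v).1 hv
        obtain ⟨j, hj, b, hb, hjb⟩ : ∃ j < i, ∃ b ∈ (f j).r.β (f j).h,
            ((φ i).1 < i → b = g (f (φ i).1) (φ i).2) := by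
          by_cases hφi : (φ i).1 < i
          · exact ⟨_, hφi, _, hg1 _ _, fun _ => rfl⟩
          · exact ⟨j₀, hj₀, _, hg1 _ j₀, fun h => absurd h hφi⟩
        obtain ⟨x', hx', hx'Q, hbx'⟩ := ext _ (f j).mem b hb Q ((hQ ⟨j, hj⟩).trans (f j).qr) hQs
        obtain ⟨s, h1, h2, h3⟩ := exists_astep hlam hx' (h𝓡 x' hx').1 (h𝓡 x' hx').2 hbx'
        refine ⟨s, fun k hk => ?_, fun h => h3.trans (hjb h)⟩
        rw [h1]
        exact hx'Q.trans (hQ ⟨k, hk⟩)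
      · exact ⟨s₀, fun j hj => absurd ⟨j, hj⟩ hi, fun h => absurd ⟨_, h⟩ hi⟩)
  have hI0 : Nonempty I := by
    rw [← mk_ne_zero_iff, hI, mk_ord_toType]
    exact hreg.ne_zero
  let Λ : Asm Γ I :=
    { r := fun i => (f i).r
      q := fun i => (f i).q
      h := fun i => (f i).h
      u := fun i => (f i).u
      b := fun i => (f i).b
      D' := fun i => (f i).D'
      π' := fun i => (f i).π'
      qr := fun i => (f i).qr
      rq := fun i j hij => (hf j).1 i hij
      miss := fun i => (h𝓡 _ (f i).mem).2
      us := fun i => (f i).us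
      ub := fun i => (f i).ub
      bN := fun i => (f i).bN
      aug := fun i => (f i).aug
      hN := fun i => (f i).hN
      uN := fun i => (f i).uN
      kN := fun i => (f i).kN }
  refine Λ.hind (wellFounded_lt.min Set.univ Set.univ_nonempty) ?_
  intro j b hb hu
  obtain ⟨k, hk⟩ := hg2 (f j) b ⟨hb, hu⟩
  obtain ⟨i, hji, hi⟩ := hφ j j k
  refine ⟨i, ?_, ?_⟩
  · rintro rfl
    exact wellFounded_lt.not_lt_min Set.univ (Set.mem_univ j) hji
  · have := (hf i).2 (by rw [hi]; exact hji)
    rw [hi] at this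
    exact this.trans hk

end Web

end

/-! ### Ranks and full positions -/

section

namespace Web
variable {V : Type u} {Γ : Web V}

/-- A position that removes fewer than `lam` vertices, together with a missed source. -/
def IsPt (lam : Cardinal.{u}) (x : Pos Γ × V) : Prop := #x.1.N < lam ∧ x.1.Miss x.2

/-- `RkO lam α x`: the point `x` has rank at most `α`, i.e. for a suitable target `b` and
refinement `q`, the points below `q` which still reach `b` have smaller rank. -/
inductive RkO (lam : Cardinal.{u}) : Ordinal.{u} → Pos Γ × V → Prop
  | mk {α : Ordinal.{u}} {x : Pos Γ × V} (b : V) (q : Pos Γ) (f : Pos Γ × V → Ordinal.{u})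
      (hb : b ∈ x.1.β x.2) (hq : q ≤ x.1) (hs : #q.N < lam)
      (hf : ∀ x', IsPt lam x' → x'.1 ≤ q → b ∈ x'.1.β x'.2 → f x' < α)
      (hr : ∀ x', IsPt lam x' → x'.1 ≤ q → b ∈ x'.1.β x'.2 → RkO lam (f x') x') : RkO lam α x

/-- The rank of a point. -/
noncomputable def rk (lam : Cardinal.{u}) (x : Pos Γ × V) : Ordinal.{u} := sInf {α | RkO lam α x}

/-- Every point has a rank: the points without one would contradict `assembly`. -/
theorem exists_rk (hΓ : ¬ Hind Γ) {lam : Cardinal.{u}} (hreg : lam.IsRegular) (hlam : ℵ₀ < lam)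
    {x : Pos Γ × V} (hx : IsPt lam x) : ∃ α, RkO lam α x := by
  by_contra hno
  push Not at hno
  refine assembly hΓ hreg hlam (𝓡 := {x : Pos Γ × V | IsPt lam x ∧ ∀ α, ¬ RkO lam α x})
    (fun x hx => hx.1) ?_ x ⟨hx, hno⟩
  rintro x ⟨hx, hxr⟩ b hb q hq hqs
  by_contra hc
  have hall : ∀ x', ∃ α, IsPt lam x' → x'.1 ≤ q → b ∈ x'.1.β x'.2 → RkO lam α x' := by
    intro x'
    by_contra h
    push Not at h
    obtain ⟨h1, h2, h3, -⟩ := h 0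
    exact hc ⟨x', ⟨h1, fun α => (h α).2.2.2⟩, h2, h3⟩
  choose f hf using hall
  refine hxr (Order.succ (⨆ x', f x')) (RkO.mk b q f hb hq hqs (fun x' _ _ _ => ?_) hf)
  exact Order.lt_succ_of_le (le_ciSup Ordinal.bddAbove_of_small x')

theorem rk_spec (hΓ : ¬ Hind Γ) {lam : Cardinal.{u}} (hreg : lam.IsRegular) (hlam : ℵ₀ < lam)
    {x : Pos Γ × V} (hx : IsPt lam x) : ∃ b ∈ x.1.β x.2, ∃ q ≤ x.1, #q.N < lam ∧
      ∀ x', IsPt lam x' → x'.1 ≤ q → b ∈ x'.1.β x'.2 → rk lam x' < rk lam x := by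
  have h : RkO lam (rk lam x) x := csInf_mem (exists_rk hΓ hreg hlam hx)
  generalize rk lam x = α at h ⊢
  cases h with
  | mk b q f hb hq hs hf hr =>
    refine ⟨b, hb, q, hq, hs, fun x' h1 h2 h3 => ?_⟩
    have h4 : rk lam x' ≤ f x' := csInf_le' (hr x' h1 h2 h3)
    exact h4.trans_lt (hf x' h1 h2 h3)

namespace Pos

/-- The supremum of the ranks of points below `p` reaching `b` cannot be decreased by refining
`p`. -/
def Dec (lam : Cardinal.{u}) (b : V) (p : Pos Γ) : Prop :=
  ∀ q ≤ p, #q.N < lam → ∀ x, IsPt lam x → x.1 ≤ p → b ∈ x.1.β x.2 →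
    ∃ x', IsPt lam x' ∧ x'.1 ≤ q ∧ b ∈ x'.1.β x'.2 ∧ rk lam x ≤ rk lam x'

theorem Dec.mono {lam : Cardinal.{u}} {b : V} {p q : Pos Γ} (h : Dec lam b p) (hq : q ≤ p) :
    Dec lam b q :=
  fun r hr hs x hx hxq hb => h r (hr.trans hq) hs x hx (hxq.trans hq) hb

theorem exists_dec {lam : Cardinal.{u}} (b : V) (p : Pos Γ) (hp : #p.N < lam) :
    ∃ q ≤ p, #q.N < lam ∧ Dec lam b q := by
  let M : Pos Γ → Ordinal.{u} := fun q =>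
    sInf {α | ∀ x : Pos Γ × V, IsPt lam x → x.1 ≤ q → b ∈ x.1.β x.2 → rk lam x < α}
  have hM : ∀ q : Pos Γ, ∀ x : Pos Γ × V, IsPt lam x → x.1 ≤ q → b ∈ x.1.β x.2 → rk lam x < M q := by
    intro q
    refine csInf_mem (s := {α | ∀ x : Pos Γ × V, IsPt lam x → x.1 ≤ q → b ∈ x.1.β x.2 →
      rk lam x < α}) ⟨Order.succ (⨆ x : Pos Γ × V, rk lam x), fun x _ _ _ => ?_⟩
    exact Order.lt_succ_of_le (le_ciSup Ordinal.bddAbove_of_small x)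
  have hM' : ∀ q : Pos Γ, ∀ α, (∀ x : Pos Γ × V, IsPt lam x → x.1 ≤ q → b ∈ x.1.β x.2 →
      rk lam x < α) → M q ≤ α := fun q α h => csInf_le' h
  obtain ⟨_, ⟨q, ⟨hq, hqs⟩, rfl⟩, hmin⟩ :=
    wellFounded_lt.has_min (M '' {q | q ≤ p ∧ #q.N < lam}) ⟨_, p, ⟨le_rfl, hp⟩, rfl⟩
  refine ⟨q, hq, hqs, fun r hr hrs x hx hxq hb => ?_⟩
  by_contra hno
  push Not at hno
  have h1 := hM' r _ fun x' h1 h2 h3 => hno x' h1 h2 h3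
  exact hmin _ ⟨r, ⟨hr.trans hq, hrs⟩, rfl⟩ (h1.trans_lt (hM q x hx hxq hb))

/-- A full position: it is small and the ranks at all removed vertices are decided. -/
def Full (lam : Cardinal.{u}) (p : Pos Γ) : Prop := #p.N < lam ∧ ∀ b ∈ p.N, Dec lam b p

/-- A good position: its wave uses every remaining source up to its boundary, and what lies
beyond the wave is unhindered. -/
def Good (p : Pos Γ) : Prop := (∀ h, ¬ p.Miss h) ∧ ¬ Hind ((Γ.delete p.N).quot p.R)

/-- A missed source would give a reached vertex `b` and a refinement below which the ranks at `b`
drop strictly, contrary to fullness. -/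
theorem Full.no_miss (hΓ : ¬ Hind Γ) {lam : Cardinal.{u}} (hreg : lam.IsRegular) (hlam : ℵ₀ < lam)
    {p : Pos Γ} (hp : p.Full lam) (h : V) : ¬ p.Miss h := by
  intro hm
  have hx : IsPt lam (p, h) := ⟨hp.1, hm⟩
  obtain ⟨b, hb, q, hq, hqs, hr⟩ := rk_spec hΓ hreg hlam hx
  obtain ⟨x', h1, h2, h3, h4⟩ := hp.2 b hb.1 q hq hqs _ hx le_rfl hb
  exact absurd (hr x' h1 h2 h3) (not_lt.2 h4)

theorem Full.good (hΓ : ¬ Hind Γ) {lam : Cardinal.{u}} (hreg : lam.IsRegular) (hlam : ℵ₀ < lam)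
    {p : Pos Γ} (hp : p.Full lam) : p.Good := by
  refine ⟨hp.no_miss hΓ hreg hlam, fun h => ?_⟩
  obtain ⟨q, hq, hN, a, ha⟩ := p.extend_of_hind h
  refine Full.no_miss hΓ hreg hlam (p := q) ⟨?_, fun b hb => ?_⟩ a ha
  · rw [hN]; exact hp.1
  · exact (hp.2 b (hN ▸ hb)).mono hq

theorem top_full {lam : Cardinal.{u}} (hlam : ℵ₀ < lam) : (Pos.top Γ).Full lam := by
  have : (Pos.top Γ).N = ∅ := rfl
  refine ⟨?_, fun b hb => absurd hb (by rw [this]; exact Set.notMem_empty b)⟩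
  rw [this, mk_eq_zero]
  exact aleph0_pos.trans hlam

/-- Limits of short chains of full positions are full. -/
theorem full_lim {lam : Cardinal.{u}} (hreg : lam.IsRegular) {ι : Type u} (hι : #ι < lam)
    {p : ι → Pos Γ} (hp : ∀ i, (p i).Full lam) {q : Pos Γ} (hq : ∀ i, q ≤ p i)
    (hN : ∀ v, v ∈ q.N ↔ ∃ i, v ∈ (p i).N) : q.Full lam := by
  refine ⟨mk_setOf_exists_lt hreg hι (fun i => (hp i).1) fun v => (hN v).1, fun b hb => ?_⟩
  obtain ⟨i, hi⟩ := (hN b).1 hb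
  exact ((hp i).2 b hi).mono (hq i)

/-- Descending sequences of positions meeting one requirement at each step. -/
theorem exists_desc {I : Type u} [LinearOrder I] [WellFoundedLT I] (Sm : Pos Γ → Prop)
    (P : I → Pos Γ → Prop) (p : Pos Γ) (hp : Sm p)
    (hlim : ∀ i : I, ∀ s : Set.Iio i → Pos Γ, ∀ q, (∀ j, Sm (s j)) → (∀ j, q ≤ s j) →
      (∀ v, v ∈ q.N ↔ ∃ j, v ∈ (s j).N) → (∃ j, j < i) → Sm q)
    (h : ∀ i q, Sm q → q ≤ p → ∃ r ≤ q, Sm r ∧ P i r) :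
    ∃ s : I → Pos Γ, ∀ i, s i ≤ p ∧ Sm (s i) ∧ P i (s i) ∧ ∀ j < i, s i ≤ s j := by
  have : Nonempty (Pos Γ) := ⟨p⟩
  refine exists_wf_seq (fun i prev s => s ≤ p ∧ Sm s ∧ P i s ∧ ∀ j < i, s ≤ prev j) ?_ ?_
  · rintro i f g s hfg ⟨h1, h2, h3, h4⟩
    exact ⟨h1, h2, h3, fun j hj => hfg j hj ▸ h4 j hj⟩
  · intro i f hf
    by_cases hi : ∃ j, j < i
    · have : Nonempty (Set.Iio i) := let ⟨j, hj⟩ := hi; ⟨⟨j, hj⟩⟩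
      have hc : ∀ j k : Set.Iio i, j ≤ k → f k ≤ f j := by
        intro j k hjk
        rcases hjk.lt_or_eq with h | rfl
        · exact (hf k k.2).2.2.2 j h
        · exact le_rfl
      obtain ⟨Q, hQ, hQN, -⟩ := Pos.exists_lim (fun j : Set.Iio i => f j) (fun j k =>
        (le_total j k).symm.imp (hc k j) (hc j k))
      have hQs : Sm Q := hlim i _ Q (fun j => (hf j j.2).2.1) hQ hQN hi
      have hQp : Q ≤ p := (hQ this.some).trans (hf _ this.some.2).1
      obtain ⟨r, h1, h2, h3⟩ := h i Q hQs hQp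
      exact ⟨r, h1.trans hQp, h2, h3, fun j hj => h1.trans (hQ ⟨j, hj⟩)⟩
    · obtain ⟨r, h1, h2, h3⟩ := h i p hp le_rfl
      exact ⟨r, h1, h2, h3, fun j hj => absurd ⟨j, hj⟩ hi⟩

/-- The ranks at all removed vertices of `p` can be decided by one small refinement; this may remove
new vertices, so that fullness needs a further iteration. -/
theorem exists_full_step {lam : Cardinal.{u}} (hreg : lam.IsRegular) (p : Pos Γ)
    (hp : #p.N < lam) : ∃ q ≤ p, #q.N < lam ∧ ∀ b ∈ p.N, Dec lam b q := by
  rcases p.N.eq_empty_or_nonempty with h0 | hne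
  · exact ⟨p, le_rfl, hp, fun b hb => absurd hb (by rw [h0]; exact Set.notMem_empty b)⟩
  obtain ⟨g, -, hg2⟩ := exists_enum (I := (#p.N).ord.ToType) hne (by rw [mk_ord_toType])
  obtain ⟨s, hs⟩ := exists_desc (I := (#p.N).ord.ToType) (fun q => #q.N < lam)
    (fun i q => Dec lam (g i) q) p hp
    (fun i s q hs _ hN _ => mk_setOf_exists_lt hreg ((mk_Iio_ord i).trans hp) hs
      fun v => (hN v).1) (fun i q hq _ => exists_dec (g i) q hq)
  have : Nonempty (#p.N).ord.ToType := by
    rw [← mk_ne_zero_iff, mk_ord_toType, mk_ne_zero_iff]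
    exact hne.to_subtype
  obtain ⟨Q, hQ, hQN, -⟩ := Pos.exists_lim s (fun j k => by
    rcases lt_trichotomy j k with h | rfl | h
    · exact Or.inr ((hs k).2.2.2 j h)
    · exact Or.inl le_rfl
    · exact Or.inl ((hs j).2.2.2 k h))
  refine ⟨Q, (hQ this.some).trans (hs _).1, mk_setOf_exists_lt hreg ?_ (fun i => (hs i).2.1)
    fun v => (hQN v).1, fun b hb => ?_⟩
  · rw [mk_ord_toType]; exact hp
  · obtain ⟨i, rfl⟩ := hg2 b hb
    exact (hs i).2.2.1.mono (hQ i)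

/-- Limits of descending `ℕ`-sequences. -/
theorem exists_lim_nat {p : ℕ → Pos Γ} (hp : ∀ n, p (n + 1) ≤ p n) :
    ∃ q : Pos Γ, (∀ n, q ≤ p n) ∧ (∀ v, v ∈ q.N ↔ ∃ n, v ∈ (p n).N) ∧
      (∀ v, v ∈ q.R ↔ (∃ i, v ∈ (p i).R) ∧ v ∉ q.N) ∧
      (∀ v, v ∈ q.D ↔ (∃ i, v ∈ (p i).D) ∧ v ∉ q.N) ∧
      ∀ r : Pos Γ, (∀ i, r ≤ p i) → r ≤ q := by
  have hanti : Antitone p := antitone_nat_of_succ_le hp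
  exact exists_lim p fun i j => (le_total i j).symm.imp (fun h => hanti h) fun h => hanti h

/-- Full positions are cofinal. -/
theorem exists_full {lam : Cardinal.{u}} (hreg : lam.IsRegular) (hlam : ℵ₀ < lam) (p : Pos Γ)
    (hp : #p.N < lam) {X : Set V} (hX : #X < lam) : ∃ q ≤ p, q.Full lam ∧ X ⊆ q.N := by
  have hst : ∀ p : {p : Pos Γ // #p.N < lam}, ∃ q : {p : Pos Γ // #p.N < lam}, q.1 ≤ p.1 ∧
      ∀ b ∈ p.1.N, Dec lam b q.1 := fun p => by
    obtain ⟨q, h1, h2, h3⟩ := exists_full_step hreg p.1 p.2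
    exact ⟨⟨q, h2⟩, h1, h3⟩
  choose F hF1 hF2 using hst
  let s : ℕ → {p : Pos Γ // #p.N < lam} := fun n => F^[n] ⟨p.absorb X, mk_absorb_lt p hlam hp hX⟩
  have hs : ∀ n, s (n + 1) = F (s n) := fun n => Function.iterate_succ_apply' _ _ _
  obtain ⟨Q, hQ, hQN, -⟩ := exists_lim_nat (p := fun n => (s n).1) (fun n => by
    rw [hs n]; exact hF1 _)
  refine ⟨Q, (hQ 0).trans (absorb_le p X), ⟨?_, fun b hb => ?_⟩, fun v hv =>
    (hQ 0).N v (subset_absorb p hv)⟩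
  · refine mk_setOf_exists_lt (ι := ULift ℕ) hreg ?_ (fun i => (s i.down).2) fun v hv => ?_
    · rw [mk_uLift, mk_nat, lift_aleph0]; exact hlam
    · obtain ⟨n, hn⟩ := (hQN v).1 hv
      exact ⟨⟨n⟩, hn⟩
  · obtain ⟨n, hn⟩ := (hQN b).1 hb
    refine Dec.mono ?_ (hQ (n + 1))
    show Dec lam b (s (n + 1)).1
    rw [hs n]
    exact hF2 _ b hn

end Pos
end Web

end

/-! ### Linked increments and lifting from the quotient -/

section

namespace Web
variable {V : Type u} {Γ : Web V}

theorem iter_congr {S : Set V} {f g : V → V} (cl : ∀ v ∈ S, f v ∈ S) (e : ∀ v ∈ S, g v = f v)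
    {v : V} (hv : v ∈ S) (n : ℕ) : g^[n] v = f^[n] v := by
  induction n generalizing v with
  | zero => rfl
  | succ n ih => rw [Function.iterate_succ_apply, Function.iterate_succ_apply, e v hv, ih (cl v hv)]

theorem reach_trans {f : V → V} {x y z : V} (h : ∃ n, f^[n] x = y) (h' : ∃ n, f^[n] y = z) :
    ∃ n, f^[n] x = z := by
  obtain ⟨n, rfl⟩ := h
  obtain ⟨m, rfl⟩ := h'
  exact ⟨m + n, Function.iterate_add_apply f m n x⟩

/-- A map agreeing with the predecessor map of a system off the sources leads back to the root. -/
theorem Sys.reach_congr {E : Set V} {ρ ρ' : V → V} (h : Sys Γ E ρ')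
    (e : ∀ v ∈ E, v ∉ Γ.A → ρ v = ρ' v) :
    ∀ v ∈ E, ∃ m, ρ^[m] v = root Γ.A ρ' v := by
  refine h.ind ?_ ?_
  · intro a _ haA; exact ⟨0, (root_of_mem haA).symm⟩
  · rintro v hv hvA ⟨m, hm⟩
    exact ⟨m + 1, by rw [Function.iterate_succ_apply, e v hv hvA, hm, h.root_pred hv]⟩

/-- Inside the vertex set `Z`, the path system `(E, ρ)` links all sources in `Z` to `B`. -/
structure Inc (Γ : Web V) (Z E : Set V) (ρ : V → V) : Prop where
  sub : E ⊆ Z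
  sys : Sys Γ E ρ
  link : ∀ a ∈ Γ.A, a ∈ Z → ∃ b ∈ E, b ∈ Γ.B ∧ ∃ n, ρ^[n] b = a

theorem Inc.empty : Inc Γ ∅ ∅ id where
  sub := fun _ h => h
  sys := ⟨fun _ h => h.elim, fun _ h => h.elim, fun _ h => h.elim, fun _ h => h.elim,
    fun _ h => h.elim⟩
  link := fun _ _ h => h.elim

/-- Linking systems on pairwise disjoint sets combine. -/
theorem Inc.iUnion {ι : Type*} {Z E : ι → Set V} {ρ : ι → V → V} (h : ∀ i, Inc Γ (Z i) (E i) (ρ i))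
    (hd : ∀ i j v, v ∈ Z i → v ∈ Z j → i = j) :
    ∃ E' ρ', Inc Γ (⋃ i, Z i) E' ρ' ∧ (∀ v, v ∈ E' ↔ ∃ i, v ∈ E i) ∧
      ∀ i, ∀ v ∈ E i, ρ' v = ρ i v := by
  classical
  set E' : Set V := {v | ∃ i, v ∈ E i} with hE'
  obtain ⟨ρ', hρ⟩ : ∃ ρ' : V → V, ∀ i, ∀ v ∈ E i, ρ' v = ρ i v := by
    refine ⟨fun v => if h : ∃ i, v ∈ E i then ρ h.choose v else v, fun i v hv => ?_⟩
    have h1 : ∃ i, v ∈ E i := ⟨i, hv⟩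
    have h2 := h1.choose_spec
    change dite _ _ _ = _
    rw [dif_pos h1, hd _ i v ((h _).sub h2) ((h i).sub hv)]
  refine ⟨E', ρ', ⟨?_, ⟨?_, ?_, ?_, ?_, ?_⟩, ?_⟩, fun v => Iff.rfl, hρ⟩
  · rintro v ⟨i, hi⟩; exact Set.mem_iUnion.2 ⟨i, (h i).sub hi⟩
  · rintro a ⟨i, hi⟩ ha; rw [hρ i a hi]; exact (h i).sys.src a hi ha
  · rintro a ⟨i, hi⟩ ha; rw [hρ i a hi]; exact ⟨i, (h i).sys.cl a hi ha⟩
  · rintro a ⟨i, hi⟩ ha; rw [hρ i a hi]; exact (h i).sys.adj a hi ha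
  · rintro v ⟨i, hi⟩ w ⟨j, hj⟩ hvA hwA e
    rw [hρ i v hi, hρ j w hj] at e
    have h1 := (h i).sys.cl v hi hvA
    have h2 := (h j).sys.cl w hj hwA
    obtain rfl : i = j := hd i j _ ((h i).sub h1) (e ▸ (h j).sub h2)
    exact (h i).sys.inj v hi w hj hvA hwA e
  · rintro v ⟨i, hi⟩
    obtain ⟨n, hn⟩ := (h i).sys.fin v hi
    refine ⟨n, ?_⟩
    rwa [iter_congr (fun v hv => (h i).sys.cl' hv) (hρ i) hi]
  · intro a ha haZ
    obtain ⟨i, hi⟩ := Set.mem_iUnion.1 haZ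
    obtain ⟨b, hb, hbB, n, hn⟩ := (h i).link a ha hi
    refine ⟨b, ⟨i, hb⟩, hbB, n, ?_⟩
    rwa [iter_congr (fun v hv => (h i).sys.cl' hv) (hρ i) hb]

theorem Inc.union {Z Z' E E' : Set V} {ρ ρ' : V → V} (h : Inc Γ Z E ρ) (h' : Inc Γ (Z' \ Z) E' ρ')
    (hZ : Z ⊆ Z') : ∃ E ρ, Inc Γ Z' E ρ := by
  obtain ⟨E'', ρ'', h1, -⟩ := Inc.iUnion (ι := Bool) (Z := fun b => cond b Z (Z' \ Z))
    (E := fun b => cond b E E') (ρ := fun b => cond b ρ ρ') (by rintro (_ | _); exacts [h', h])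
    (by
      rintro (_ | _) (_ | _) v h1 h2
      · rfl
      · exact absurd h2 h1.2
      · exact absurd h1 h2.2
      · rfl)
  refine ⟨E'', ρ'', ?_⟩
  convert h1 using 1
  ext v
  simp only [Set.mem_iUnion, Bool.exists_bool, cond]
  by_cases hv : v ∈ Z
  · simp [hv, hZ hv]
  · simp [hv]

theorem Iso.bd_quot {J : Set V} (hJ : Iso Γ J) (R U : Set V) :
    (Γ.quot R).bd U = Γ.bd ((U \ (J ∪ R)) ∪ R) := by
  ext v
  constructor
  · rintro ⟨h | ⟨w, hw, e⟩, hv⟩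
    · exact ⟨h.1.imp id fun ⟨w, hw, e⟩ => ⟨w, Or.inr hw, e⟩,
        fun h' => h'.elim (fun h' => hv h'.1) h.2⟩
    · refine ⟨Or.inr ⟨w, Or.inl ⟨hw, ?_⟩, e.1⟩, fun h' => h'.elim (fun h' => hv h'.1) e.2.2.1⟩
      rintro (h1 | h1)
      · exact (hJ w h1).2.2.2 v e.1
      · exact e.2.1 h1
  · rintro ⟨h, hv⟩
    have hR : v ∉ R := fun h => hv (Or.inr h)
    have hvJ : v ∉ J := by
      intro hJv
      rcases h with h | ⟨w, -, e⟩
      · exact (hJ v hJv).1 h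
      · exact (hJ v hJv).2.2.1 w e
    refine ⟨?_, fun h => hv (Or.inl ⟨h, by rintro (h' | h'); exacts [hvJ h', hR h']⟩)⟩
    by_cases hb : v ∈ Γ.bd R
    · exact Or.inl hb
    · rcases h with h | ⟨w, hw | hw, e⟩
      · exact absurd ⟨Or.inl h, hR⟩ hb
      · exact Or.inr ⟨w, hw.1, e, fun h => hw.2 (Or.inr h), hR, hb⟩
      · exact absurd ⟨Or.inr ⟨w, hw, e⟩, hR⟩ hb

/-- Successive quotients amount to one. -/
theorem Iso.quot_quot {J : Set V} (hJ : Iso Γ J) (R U : Set V) :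
    (Γ.quot R).quot U = Γ.quot ((U \ (J ∪ R)) ∪ R) := by
  have hb := hJ.bd_quot R U
  have key : ∀ v, v ∉ J → (v ∉ (U \ (J ∪ R)) ∪ R ↔ v ∉ R ∧ v ∉ U) := by
    intro v hv; simp only [Set.mem_union, Set.mem_sdiff]; tauto
  have e : ∀ Γ₁ Γ₂ : Web V, Γ₁.Adj = Γ₂.Adj → Γ₁.A = Γ₂.A → Γ₁.B = Γ₂.B → Γ₁ = Γ₂ := by
    rintro ⟨⟩ ⟨⟩ h1 h2 h3; cases h1; cases h2; cases h3; rfl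
  refine e _ _ ?_ hb ?_
  · funext w v
    apply propext
    constructor
    · rintro ⟨⟨h1, h2, h3, h4⟩, h5, h6, h7⟩
      have hw : w ∉ J := fun h => (hJ w h).2.2.2 v h1
      have hv : v ∉ J := fun h => (hJ v h).2.2.1 w h1
      exact ⟨h1, (key w hw).2 ⟨h2, h5⟩, (key v hv).2 ⟨h3, h6⟩, hb ▸ h7⟩
    · rintro ⟨h1, h2, h3, h4⟩
      have hw : w ∉ J := fun h => (hJ w h).2.2.2 v h1
      have hv : v ∉ J := fun h => (hJ v h).2.2.1 w h1
      rw [key w hw] at h2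
      rw [key v hv] at h3
      rw [← hb] at h4
      exact ⟨⟨h1, h2.1, h3.1, fun h => h4 ⟨Or.inl h, h3.2⟩⟩, h2.2, h3.2, h4⟩
  · ext v
    constructor
    · rintro ⟨⟨h1, h2⟩, h3⟩; exact ⟨h1, (key v fun h => (hJ v h).2.1 h1).2 ⟨h2, h3⟩⟩
    · rintro ⟨h1, h2⟩
      rw [key v fun h => (hJ v h).2.1 h1] at h2
      exact ⟨⟨h1, h2.1⟩, h2.2⟩

namespace Pos

/-- In a good position, the path from every remaining source leads to the boundary. -/
theorem Good.exists_ter {p : Pos Γ} (hp : p.Good) {a : V} (ha : a ∈ Γ.A) (haN : a ∉ p.N) :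
    ∃ t ∈ (Γ.delete p.N).bd p.R, root (Γ.delete p.N).A p.π t = a := by
  by_cases hR : a ∈ p.R
  · by_contra! h
    exact hp.1 a ⟨ha, hR, h⟩
  · exact ⟨a, ⟨Or.inl ⟨ha, haN⟩, hR⟩, root_of_mem ⟨ha, haN⟩⟩

theorem Good.mem_D {p : Pos Γ} (hp : p.Good) {a : V} (ha : a ∈ Γ.A) (haN : a ∉ p.N) : a ∈ p.D := by
  obtain ⟨t, ht, rfl⟩ := hp.exists_ter ha haN
  exact (p.lk.toSys.root_mem (p.lk.bdD t ht)).2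

theorem bd_remove (p : Pos Γ) (Z : Set V) (hZ : p.N ⊆ Z) (hc : ∀ v ∈ p.D, v ∈ Z ↔ p.π v ∈ Z) :
    (Γ.delete Z).bd (p.R \ Z) = (Γ.delete p.N).bd p.R \ Z := by
  ext v
  constructor
  · intro hv
    have hD : v ∈ p.D \ Z := (p.remove Z hZ hc).lk.bdD v hv
    refine ⟨?_, hD.2⟩
    rcases p.lk.sub v hD.1 with h | h
    · exact absurd ⟨h, hD.2⟩ hv.2
    · exact h
  · rintro ⟨hv, hvZ⟩
    rcases (p.remove Z hZ hc).lk.sub v ⟨p.lk.bdD v hv, hvZ⟩ with h | h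
    · exact absurd h.1 hv.2
    · exact h

theorem quot_remove (p : Pos Γ) (Z : Set V) (hZ : p.N ⊆ Z)
    (hc : ∀ v ∈ p.D, v ∈ Z ↔ p.π v ∈ Z) (N' : Set V)
    (hN' : ∀ v, v ∉ p.N → v ∉ p.R → (v ∈ Z ↔ v ∈ N')) :
    (Γ.delete Z).quot (p.R \ Z) = ((Γ.delete p.N).quot p.R).delete N' := by
  have hb := p.bd_remove Z hZ hc
  have key : ∀ v, (v ∉ Z ∧ v ∉ p.R \ Z) ↔ (v ∉ p.N ∧ v ∉ p.R ∧ v ∉ N') := by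
    intro v
    have h1 := hN' v
    have h2 := @hZ v
    simp only [Set.mem_sdiff]
    tauto
  have e : ∀ Γ₁ Γ₂ : Web V, Γ₁.Adj = Γ₂.Adj → Γ₁.A = Γ₂.A → Γ₁.B = Γ₂.B → Γ₁ = Γ₂ := by
    rintro ⟨⟩ ⟨⟩ h1 h2 h3; cases h1; cases h2; cases h3; rfl
  have hA : (Γ.delete p.N).bd p.R \ Z = (Γ.delete p.N).bd p.R \ N' := by
    ext v
    constructor
    · rintro ⟨h1, h2⟩; exact ⟨h1, fun h => h2 ((hN' v (p.notN (p.lk.bdD v h1)) h1.2).2 h)⟩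
    · rintro ⟨h1, h2⟩; exact ⟨h1, fun h => h2 ((hN' v (p.notN (p.lk.bdD v h1)) h1.2).1 h)⟩
  refine e _ _ ?_ (hb.trans hA) ?_
  · funext w v
    apply propext
    constructor
    · rintro ⟨⟨h1, h2, h3⟩, h4, h5, h6⟩
      have hw := (key w).1 ⟨h2, h4⟩
      have hv := (key v).1 ⟨h3, h5⟩
      rw [hb] at h6
      exact ⟨⟨⟨h1, hw.1, hv.1⟩, hw.2.1, hv.2.1, fun h => h6 ⟨h, h3⟩⟩, hw.2.2, hv.2.2⟩
    · rintro ⟨⟨⟨h1, h2, h3⟩, h4, h5, h6⟩, h7, h8⟩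
      have hw := (key w).2 ⟨h2, h4, h7⟩
      have hv := (key v).2 ⟨h3, h5, h8⟩
      refine ⟨⟨h1, hw.1, hv.1⟩, hw.2, hv.2, ?_⟩
      rw [hb]
      exact fun h => h6 h.1
  · ext v
    have := key v
    constructor
    · rintro ⟨⟨h1, h2⟩, h3⟩
      have hv := (key v).1 ⟨h2, h3⟩
      exact ⟨⟨⟨h1, hv.1⟩, hv.2.1⟩, hv.2.2⟩
    · rintro ⟨⟨⟨h1, h2⟩, h3⟩, h4⟩
      have hv := (key v).2 ⟨h2, h3, h4⟩
      exact ⟨⟨h1, hv.1⟩, hv.2⟩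

/-- A good position of the quotient web at a good position `p`, together with a linking system
for its removed set, lifts to a good refinement of `p` whose increment is linked. -/
theorem Good.lift {p : Pos Γ} (hp : p.Good) (p' : Pos ((Γ.delete p.N).quot p.R)) (hp' : p'.Good)
    {E' : Set V} {ρ' : V → V} (inc : Inc ((Γ.delete p.N).quot p.R) p'.N E' ρ') {Y : Set V}
    (hY : ∀ v ∈ Y, v ∈ p.R ∧ v ∉ p.D) :
    ∃ q ≤ p, q.Good ∧ q.N = p.N ∪ (p'.N \ p.R) ∪
      comp (Γ.delete p.N) p.D p.π (p'.N ∩ (Γ.delete p.N).bd p.R) ∪ Y ∧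
      ∃ E ρ, Inc Γ (q.N \ p.N) E ρ := by
  classical
  set C := comp (Γ.delete p.N) p.D p.π (p'.N ∩ (Γ.delete p.N).bd p.R) with hC
  set Z : Set V := p.N ∪ (p'.N \ p.R) ∪ C ∪ Y with hZdef
  have hZ : p.N ⊆ Z := fun v h => Or.inl (Or.inl (Or.inl h))
  have hDZ : ∀ v ∈ p.D, v ∈ Z ↔ v ∈ C := by
    intro v hv
    constructor
    · rintro (((h | h) | h) | h)
      · exact absurd h (p.notN hv)
      · rcases p.lk.sub v hv with h1 | h1
        · exact absurd h1 h.2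
        · exact subset_comp hv ⟨h.1, h1⟩
      · exact h
      · exact absurd hv (hY v h).2
    · exact fun h => Or.inl (Or.inr h)
  have hc : ∀ v ∈ p.D, v ∈ Z ↔ p.π v ∈ Z := by
    intro v hv
    rw [hDZ v hv, hDZ _ (p.lk.toSys.cl' hv)]
    exact p.lk.toSys.comp_iff hv
  have hN' : ∀ v, v ∉ p.N → v ∉ p.R → (v ∈ Z ↔ v ∈ p'.N) := by
    intro v hvN hvR
    constructor
    · rintro (((h | h) | ⟨h, x, hx, hxD, e⟩) | h)
      · exact absurd h hvN
      · exact h.1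
      · have : v ∈ (Γ.delete p.N).bd p.R := (p.lk.sub v h).resolve_left hvR
        rw [p.lk.bd_root_inj this hx.2 e]
        exact hx.1
      · exact absurd (hY v h).1 hvR
    · exact fun h => Or.inl (Or.inl (Or.inr ⟨h, hvR⟩))
  have hquot := p.quot_remove Z hZ hc p'.N hN'
  have hbd := p.bd_remove Z hZ hc
  set q0 := p.remove Z hZ hc with hq0
  have lk' : IsLk ((Γ.delete q0.N).quot q0.R) p'.R p'.D p'.π := by
    change IsLk ((Γ.delete Z).quot (p.R \ Z)) _ _ _
    rw [hquot]; exact p'.lk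
  obtain ⟨q, hq, hqN, hqR, hqD, hqπ⟩ := q0.compose lk'
  have hqp : q ≤ p := hq.trans (p.remove_le Z hZ hc)
  have hqN' : q.N = Z := hqN
  have hisoR : Iso ((Γ.delete p.N).quot p.R) p.R := iso_quot p.R
  have hisoN : Iso ((Γ.delete p.N).quot p.R) p.N := by
    intro v hv
    refine ⟨fun h => p.notN (p.lk.bdD v h) hv, fun h => h.1.2 hv,
      fun w e => e.1.2.2 hv, fun w e => e.1.2.1 hv⟩
  have hisoD : Iso (((Γ.delete p.N).quot p.R).delete p'.N) p.R := fun v hv =>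
    ⟨fun h => (hisoR v hv).1 h.1, fun h => (hisoR v hv).2.1 h.1,
      fun w e => (hisoR v hv).2.2.1 w e.1, fun w e => (hisoR v hv).2.2.2 w e.1⟩
  have hE'R : ∀ v ∈ E', v ∉ p.R := fun v hv => hisoR.notMem inc.sys hv
  have hE'N : ∀ v ∈ E', v ∉ p.N := fun v hv => hisoN.notMem inc.sys hv
  have hE'Z : ∀ v ∈ E', v ∈ Z := fun v hv => (hN' v (hE'N v hv) (hE'R v hv)).2 (inc.sub hv)
  have hqquot : (Γ.delete q.N).quot q.R = (((Γ.delete p.N).quot p.R).delete p'.N).quot p'.R := by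
    rw [← hquot, hqR, hqN]
    exact ((iso_delete Z).quot_quot (p.R \ Z) p'.R).symm
  have hqbd : (Γ.delete q.N).bd q.R = (((Γ.delete p.N).quot p.R).delete p'.N).bd p'.R :=
    congrArg Web.A hqquot
  refine ⟨q, hqp, ⟨?_, ?_⟩, hqN', ?_⟩
  · -- no source is missed
    rintro h ⟨hA, hR, hm⟩
    have hhN : h ∉ Z := fun h' => q.disj h hR (hqN' ▸ h')
    obtain ⟨t, ht, hth⟩ := hp.exists_ter hA (fun h' => hhN (hZ h'))
    have htD := p.lk.bdD t ht
    have hhD : h ∈ p.D := hp.mem_D hA (fun h' => hhN (hZ h'))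
    have hr : ∃ n, p.π^[n] t = h := (p.lk.toSys.root_eq_iff htD ⟨hA, fun h' => hhN (hZ h')⟩).1 hth
    have htN : t ∉ p'.N := by
      intro h1
      refine hhN ((hDZ h hhD).2 ⟨hhD, t, ⟨h1, ht⟩, htD, ?_⟩)
      rw [hth, root_of_mem (show h ∈ (Γ.delete p.N).A from ⟨hA, fun h' => hhN (hZ h')⟩)]
    have htZ : t ∉ Z := fun h1 => htN ((hN' t (p.notN htD) ht.2).1 h1)
    obtain ⟨s, hs, hst⟩ := hp'.exists_ter (a := t) ht htN
    have hsD : s ∈ p'.D := p'.lk.bdD s hs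
    have hsq : s ∈ (Γ.delete q.N).bd q.R := hqbd ▸ hs
    have r1 : ∃ m, q.π^[m] s = t := by
      rw [← hst]
      refine p'.lk.toSys.reach_congr ?_ s hsD
      intro v hv hvA
      rw [hqπ]
      refine if_neg ?_
      have hvN' : v ∉ p'.N := p'.notN hv
      rintro (h1 | h1)
      · exact (hisoD).notMem p'.lk.toSys hv h1.1
      · have h1 : v ∈ (Γ.delete p.N).bd p.R \ Z := hbd ▸ h1
        exact hvA ⟨h1.1, hvN'⟩
    have r2 : ∃ m, q.π^[m] t = h := by
      obtain ⟨n, hn⟩ := hr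
      refine ⟨n, ?_⟩
      rw [iter_congr (S := p.D \ Z) (f := p.π) ?_ ?_ ⟨htD, htZ⟩, hn]
      · exact fun v hv => ⟨p.lk.toSys.cl' hv.1, fun h => hv.2 ((hc v hv.1).2 h)⟩
      · exact fun v hv => hqp.π v hv.1 (hqN' ▸ hv.2)
    exact hm s hsq ((q.lk.toSys.root_eq_iff (q.lk.bdD s hsq) ⟨hA, hqN' ▸ hhN⟩).2
      (reach_trans r1 r2))
  · rw [hqquot]; exact hp'.2
  · rw [hqN']
    have hbdD := p.lk.bdD
    set ρ : V → V := fun v => if v ∈ p.D then p.π v else ρ' v with hρ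
    have ρD : ∀ v ∈ p.D, ρ v = p.π v := fun v hv => if_pos hv
    have ρE : ∀ v, v ∉ p.D → ρ v = ρ' v := fun v hv => if_neg hv
    have E'D : ∀ v ∈ E', v ∉ p.D → v ∉ (Γ.delete p.N).bd p.R := fun v _ h h' => h (hbdD v h')
    have DA : ∀ v ∈ p.D, v ∉ Γ.A → v ∉ (Γ.delete p.N).A := fun v _ h h' => h h'.1
    have finD : ∀ v ∈ p.D, v ∈ Z → ∃ n, ρ^[n] v ∈ Γ.A := by
      intro v hv hvZ
      obtain ⟨n, hn⟩ := p.lk.fin v hv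
      refine ⟨n, ?_⟩
      rw [iter_congr (S := p.D) (fun v hv => p.lk.toSys.cl' hv) ρD hv]
      exact hn.1
    refine ⟨E' ∪ (p.D ∩ Z), ρ, ⟨?_, ⟨?_, ?_, ?_, ?_, ?_⟩, ?_⟩⟩
    · rintro v (hv | hv)
      · exact ⟨hE'Z v hv, hE'N v hv⟩
      · exact ⟨hv.2, p.notN hv.1⟩
    · intro a ha haA
      have haD : a ∈ p.D := by
        rcases ha with ha | ha
        · exact hbdD a ⟨Or.inl ⟨haA, hE'N a ha⟩, hE'R a ha⟩
        · exact ha.1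
      rw [ρD a haD]
      exact p.lk.src a haD ⟨haA, p.notN haD⟩
    · intro v hv hvA
      by_cases hvD : v ∈ p.D
      · rw [ρD v hvD]
        have : v ∈ Z := by rcases hv with h | h; exacts [hE'Z v h, h.2]
        exact Or.inr ⟨p.lk.toSys.cl' hvD, (hc v hvD).1 this⟩
      · rw [ρE v hvD]
        have hv' : v ∈ E' := hv.resolve_right fun h => hvD h.1
        exact Or.inl (inc.sys.cl v hv' (E'D v hv' hvD))
    · intro v hv hvA
      by_cases hvD : v ∈ p.D
      · rw [ρD v hvD]; exact p.adjD hvD hvA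
      · rw [ρE v hvD]
        have hv' : v ∈ E' := hv.resolve_right fun h => hvD h.1
        exact (inc.sys.adj v hv' (E'D v hv' hvD)).1.1
    · have key : ∀ v w, v ∈ p.D → v ∉ Γ.A → w ∈ E' → w ∉ p.D → ρ v ≠ ρ w := by
        intro v w hv hvA hw hwD e
        rw [ρD v hv, ρE w hwD] at e
        exact hE'R _ (inc.sys.cl w hw (E'D w hw hwD)) (e ▸ p.lk.pred v hv (DA v hv hvA))
      intro v hv w hw hvA hwA e
      by_cases hvD : v ∈ p.D
      · by_cases hwD : w ∈ p.D
        · rw [ρD v hvD, ρD w hwD] at e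
          exact p.lk.inj v hvD w hwD (DA v hvD hvA) (DA w hwD hwA) e
        · exact absurd e (key v w hvD hvA (hw.resolve_right fun h => hwD h.1) hwD)
      · have hv' : v ∈ E' := hv.resolve_right fun h => hvD h.1
        by_cases hwD : w ∈ p.D
        · exact absurd e.symm (key w v hwD hwA hv' hvD)
        · have hw' : w ∈ E' := hw.resolve_right fun h => hwD h.1
          rw [ρE v hvD, ρE w hwD] at e
          exact inc.sys.inj v hv' w hw' (E'D v hv' hvD) (E'D w hw' hwD) e
    · rintro v (hv | hv)
      · revert v
        refine inc.sys.ind ?_ ?_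
        · intro a ha haA; exact finD a (hbdD a haA) (hE'Z a ha)
        · intro v hv hvA ih
          by_cases hvD : v ∈ p.D
          · exact finD v hvD (hE'Z v hv)
          · exact reach_step (by rw [ρE v hvD]; exact ih)
      · exact finD v hv.1 hv.2
    · rintro a haA ⟨haZ, haN⟩
      have haD := hp.mem_D haA haN
      obtain ⟨-, x, ⟨hx, hxb⟩, hxD, e⟩ := (hDZ a haD).1 haZ
      rw [root_of_mem (show a ∈ (Γ.delete p.N).A from ⟨haA, haN⟩)] at e
      obtain ⟨b, hb, hbB, n, hn⟩ := inc.link x hxb hx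
      refine ⟨b, Or.inl hb, hbB.1.1, reach_trans (y := x) ?_ ?_⟩
      · have := (inc.sys.root_eq_iff (a := x) hb hxb).2 ⟨n, hn⟩
        rw [← this]
        refine inc.sys.reach_congr ?_ b hb
        intro v hv hvA
        refine ρE v fun hvD => hvA ?_
        exact (p.lk.sub v hvD).resolve_left (hE'R v hv)
      · obtain ⟨m, hm⟩ := p.lk.toSys.exists_root hxD
        refine ⟨m, ?_⟩
        rw [iter_congr (S := p.D) (fun v hv => p.lk.toSys.cl' hv) ρD hxD, hm, e]

end Pos
end Web

end

/-! ### Covering finite sets -/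

section

namespace Web
variable {V : Type u} {Γ : Web V}

/-- The path of a wave ending in a boundary vertex is finite. -/
theorem IsLk.finite_comp {R D : Set V} {π : V → V} (h : IsLk Γ R D π) {T : Set V} (hT : T.Finite)
    (hTb : T ⊆ Γ.bd R) : (comp Γ D π T).Finite := by
  have key : ∀ t ∈ T, (Set.range fun n => π^[n] t).Finite := by
    intro t ht
    have htD := h.bdD t (hTb ht)
    obtain ⟨n, hn⟩ := h.fin t htD
    refine ((Set.finite_Iic n).image fun m => π^[m] t).subset ?_
    rintro _ ⟨m, rfl⟩
    rcases le_total m n with hmn | hmn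
    · exact ⟨m, hmn, rfl⟩
    · refine ⟨n, le_refl n, ?_⟩
      obtain ⟨k, rfl⟩ := Nat.exists_eq_add_of_le' hmn
      simp only [Function.iterate_add_apply]
      exact (h.toSys.iterA (h.toSys.iter htD n) hn k).symm
  refine (hT.biUnion key).subset ?_
  rintro v ⟨hv, t, ht, htD, e⟩
  rw [Set.mem_iUnion₂]
  refine ⟨t, ht, ?_⟩
  rcases h.toSys.comparable hv htD e with ⟨n, hn⟩ | ⟨n, hn⟩
  · rcases h.anc hv n with h1 | h1
    · exact ⟨0, by rw [← hn, h1]; rfl⟩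
    · exact absurd (hn ▸ h1) (hTb ht).2
  · exact ⟨n, hn⟩

theorem IsLk.mk_comp_lt {R D : Set V} {π : V → V} (h : IsLk Γ R D π) {T : Set V}
    (hTb : T ⊆ Γ.bd R) {κ : Cardinal.{u}} (hκ : ℵ₀ ≤ κ) (hT : #T < κ) : #(comp Γ D π T) < κ := by
  rcases hκ.eq_or_lt with rfl | hκ
  · rw [lt_aleph0_iff_set_finite] at hT ⊢
    exact h.finite_comp hT hTb
  · exact h.toSys.mk_comp_lt hT hκ

theorem mk_union_lt {S T : Set V} {κ : Cardinal.{u}} (hκ : ℵ₀ ≤ κ) (hS : #S < κ) (hT : #T < κ) :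
    #(S ∪ T : Set V) < κ :=
  (mk_union_le S T).trans_lt (add_lt_of_lt hκ hS hT)

theorem mk_lt_of_subset {S T : Set V} {κ : Cardinal.{u}} (h : S ⊆ T) (hT : #T < κ) : #S < κ :=
  (mk_le_mk_of_subset h).trans_lt hT

/-- The set `X` lies in the removed set of a good position with fewer than `κ` removed vertices,
whose sources can be linked to `B` inside the removed set. -/
def Cov (Γ : Web V) (κ : Cardinal.{u}) (X : Set V) : Prop :=
  ∃ p : Pos Γ, p.Good ∧ #p.N < κ ∧ X ⊆ p.N ∧ ∃ E ρ, Inc Γ p.N E ρ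

namespace Pos

/-- Refining a good position so as to remove a given set, by working in the quotient web. -/
theorem Good.step {p : Pos Γ} (hp : p.Good) {κ : Cardinal.{u}} (hκ : ℵ₀ ≤ κ) (hpN : #p.N < κ)
    {X : Set V} (hX : #X < κ)
    (H : ∀ X' : Set V, #X' ≤ #X → (∀ y ∈ X', y ∈ (Γ.delete p.N).bd p.R ∨
      y ∈ X ∧ y ∉ p.R ∧ y ∉ p.N) → Cov ((Γ.delete p.N).quot p.R) κ X') :
    ∃ q ≤ p, q.Good ∧ #q.N < κ ∧ X ⊆ q.N ∧ ∃ E ρ, Inc Γ (q.N \ p.N) E ρ := by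
  set X' : Set V := {y | ∃ x ∈ X, (x = y ∧ x ∉ p.R ∧ x ∉ p.N) ∨
    (x ∈ p.R ∧ x ∈ p.D ∧ y ∈ (Γ.delete p.N).bd p.R ∧
      root (Γ.delete p.N).A p.π y = root (Γ.delete p.N).A p.π x)} with hX'
  obtain ⟨p', hp', hN', hXp', E', ρ', inc⟩ := H X' (by
    have h : ∀ y : X', ∃ x : X, (x.1 = y.1 ∧ x.1 ∉ p.R ∧ x.1 ∉ p.N) ∨
      (x.1 ∈ p.R ∧ x.1 ∈ p.D ∧ y.1 ∈ (Γ.delete p.N).bd p.R ∧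
      root (Γ.delete p.N).A p.π y.1 = root (Γ.delete p.N).A p.π x.1) := by
      rintro ⟨y, x, hx, h⟩; exact ⟨⟨x, hx⟩, h⟩
    choose f hf using h
    refine mk_le_of_injective (f := f) fun y z e => ?_
    have h1 := hf y
    have h2 := hf z
    rw [← e] at h2
    apply Subtype.ext
    rcases h1 with h1 | h1 <;> rcases h2 with h2 | h2
    · exact h1.1.symm.trans h2.1
    · exact absurd h2.1 h1.2.1
    · exact absurd h1.1 h2.2.1
    · exact p.lk.bd_root_inj h1.2.2.1 h2.2.2.1 (h1.2.2.2.trans h2.2.2.2.symm)) (by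
    rintro y ⟨x, hx, ⟨rfl, h⟩ | h⟩
    · exact Or.inr ⟨hx, h⟩
    · exact Or.inl h.2.2.1)
  obtain ⟨q, hq, hqg, hqN, hinc⟩ := hp.lift p' hp' inc (Y := {v | v ∈ X ∧ v ∈ p.R ∧ v ∉ p.D})
    (fun v hv => hv.2)
  refine ⟨q, hq, hqg, ?_, ?_, hinc⟩
  · rw [hqN]
    refine mk_union_lt hκ (mk_union_lt hκ (mk_union_lt hκ hpN ?_) ?_) ?_
    · exact mk_lt_of_subset (fun v h => h.1) hN'
    · exact p.lk.mk_comp_lt (fun v h => h.2) hκ (mk_lt_of_subset (fun v h => h.1) hN')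
    · exact mk_lt_of_subset (fun v h => h.1) hX
  · intro x hx
    rw [hqN]
    by_cases hxN : x ∈ p.N
    · exact Or.inl (Or.inl (Or.inl hxN))
    by_cases hxR : x ∈ p.R
    · by_cases hxD : x ∈ p.D
      · have hr := (p.lk.toSys.root_mem hxD).1
        obtain ⟨t, ht, hroot⟩ := hp.exists_ter hr.1 hr.2
        exact Or.inl (Or.inr ⟨hxD, t, ⟨hXp' ⟨x, hx, Or.inr ⟨hxR, hxD, ht, hroot⟩⟩, ht⟩,
          p.lk.bdD t ht, hroot.symm⟩)
      · exact Or.inr ⟨hx, hxR, hxD⟩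
    · exact Or.inl (Or.inl (Or.inr ⟨hXp' ⟨x, hx, Or.inl ⟨rfl, hxR, hxN⟩⟩, hxR⟩))

/-- The position with vertex set `X` removed and trivial wave. -/
def del (Γ : Web V) (X : Set V) : Pos Γ where
  N := X
  R := ∅
  D := Γ.A \ X
  π := id
  lk := ⟨⟨fun _ _ _ => rfl, fun _ h h' => absurd h h', fun _ h h' => absurd h h',
      fun _ h _ _ h' => absurd h h', fun v h => ⟨0, h⟩⟩, fun _ h => h.elim, fun _ h h' => absurd h h',
      fun v hv => by simpa [bd, delete] using hv, fun v hv => Or.inr (by simpa [bd, delete] using hv)⟩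
  disj := fun _ h => h.elim

theorem del_good {X : Set V} (h : ¬ Hind (Γ.delete X)) : (del Γ X).Good :=
  ⟨fun _ h => h.2.1.elim, quot_unhind (del Γ X).lk h⟩

end Pos

theorem cov_empty (hΓ : ¬ Hind Γ) {κ : Cardinal.{u}} (hκ : ℵ₀ ≤ κ) : Cov Γ κ ∅ := by
  refine ⟨Pos.del Γ ∅, Pos.del_good (by rwa [delete_empty]), ?_, fun _ h => h, ∅, id, Inc.empty⟩
  change #(∅ : Set V) < κ
  rw [mk_eq_zero]
  exact aleph0_pos.trans_le hκ

/-- A single source is covered by the path of `exists_path_unhind`. -/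
theorem cov_source (hΓ : ¬ Hind Γ) {x : V} (hx : x ∈ Γ.A) : Cov Γ ℵ₀ {x} := by
  obtain ⟨P, ρ, b, hfin, hP, hb, hun⟩ := exists_path_unhind hΓ hx
  refine ⟨Pos.del Γ P, Pos.del_good hun, lt_aleph0_iff_set_finite.2 hfin, ?_, P, ρ, ?_⟩
  · rintro _ rfl; exact hP.start
  · refine ⟨fun _ h => h, hP.sys, fun a ha haP => ⟨b, hP.term, hb, ?_⟩⟩
    rw [hP.only a haP ha]
    exact hP.conn

theorem Pos.Good.step_one {p : Pos Γ} (hp : p.Good) (hpN : #p.N < ℵ₀) (x : V)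
    (H : ∀ y, y ∈ (Γ.delete p.N).bd p.R ∨ y = x ∧ y ∉ p.R ∧ y ∉ p.N →
      Cov ((Γ.delete p.N).quot p.R) ℵ₀ {y}) :
    ∃ q ≤ p, q.Good ∧ #q.N < ℵ₀ ∧ x ∈ q.N ∧ ∃ E ρ, Inc Γ (q.N \ p.N) E ρ := by
  obtain ⟨q, h1, h2, h3, h4, h5⟩ := hp.step le_rfl hpN (X := {x}) (by simp) (by
    intro X' hX' h
    rw [mk_singleton, mk_le_one_iff_set_subsingleton] at hX'
    rcases hX'.eq_empty_or_singleton with rfl | ⟨y, rfl⟩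
    · exact cov_empty hp.2 le_rfl
    · exact H y (h y rfl))
  exact ⟨q, h1, h2, h3, h4 rfl, h5⟩

/-- Any single vertex is covered: outside the closure of the largest wave it can simply be deleted,
and inside it the wave reduces the problem to sources of the quotient. -/
theorem cov_singleton (hΓ : ¬ Hind Γ) (x : V) : Cov Γ ℵ₀ {x} := by
  by_cases hx : x ∈ Γ.clo
  · obtain ⟨D, π, lk⟩ := exists_Rm Γ
    set p := Pos.ofLk lk with hpdef
    have hN : p.N = ∅ := rfl
    have hR : p.R = Γ.Rm := rfl
    have hbd : (Γ.delete p.N).bd p.R = Γ.bd Γ.Rm := by rw [hN, hR, delete_empty]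
    have hp : p.Good := by
      refine ⟨?_, ?_⟩
      · intro h hm
        have := p.hind_of_Miss hm
        rw [hN, delete_empty] at this
        exact hΓ this
      · rw [hN, hR, delete_empty]; exact quot_Rm_unhind Γ
    obtain ⟨q, h1, h2, h3, h4, E, ρ, h5⟩ := hp.step_one (by rw [hN]; simp [aleph0_pos]) x (by
      rintro y (hy | ⟨rfl, hy, -⟩)
      · exact cov_source hp.2 hy
      · refine cov_source hp.2 ?_
        change y ∈ (Γ.delete p.N).bd p.R
        rw [hbd]
        exact hx.resolve_left hy)
    refine ⟨q, h2, h3, by simpa using h4, E, ρ, ?_⟩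
    rwa [hN, Set.sdiff_empty] at h5
  · refine ⟨Pos.del Γ {x}, Pos.del_good (unhind_delete_of_notMem_clo hΓ hx), ?_, fun _ h => h, ∅, id,
      fun _ h => h.elim, Inc.empty.sys, ?_⟩
    · change #({x} : Set V) < ℵ₀
      simp
    · rintro a ha rfl
      exact absurd (A_sub_clo ha) hx

/-- All sets of size less than `κ` are covered, in all unhindered webs on `V`. -/
def CovLt (V : Type u) (κ : Cardinal.{u}) : Prop :=
  ∀ Γ : Web V, ¬ Hind Γ → ∀ X : Set V, #X < κ → Cov Γ κ X

theorem covLt_aleph0 : CovLt V ℵ₀ := by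
  intro Γ hΓ X hX
  rw [lt_aleph0_iff_set_finite] at hX
  induction X, hX using Set.Finite.induction_on with
  | empty => exact cov_empty hΓ le_rfl
  | @insert x X _ _ ih =>
    obtain ⟨p, hp, hpN, hXp, E, ρ, inc⟩ := ih
    obtain ⟨q, h1, h2, h3, h4, E', ρ', h5⟩ := hp.step_one hpN x (fun y _ => cov_singleton hp.2 y)
    exact ⟨q, h2, h3, Set.insert_subset h4 fun v hv => h1.N v (hXp hv), inc.union h5 h1.N⟩

/-- The covering property, applied in the quotient beyond a good position, refines that position so
as to remove a given small set, with the sources among the new removed vertices linked. -/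
theorem CovLt.step {κ : Cardinal.{u}} (hK : CovLt V κ) (hκ : ℵ₀ ≤ κ) {p : Pos Γ} (hp : p.Good)
    (hpN : #p.N < κ) {X : Set V} (hX : #X < κ) :
    ∃ q ≤ p, q.Good ∧ #q.N < κ ∧ X ⊆ q.N ∧ ∃ E ρ, Inc Γ (q.N \ p.N) E ρ :=
  hp.step hκ hpN hX fun X' h _ => hK _ hp.2 X' (h.trans_lt hX)

end Web

end

/-! ### Covering sets of regular size -/

section

namespace Web
variable {V : Type u} {Γ : Web V}

/-- Stage of the construction covering a set of regular size: a linked position `p`, a closing-off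
position `Q` with an enumeration `g` of its removed set, and the linking system of the increment. -/
structure RState (Γ : Web V) (I : Type u) where
  p : Pos Γ
  Q : Pos Γ
  g : I → V
  E : Set V
  ρ : V → V

/-- The requirements on a stage, given the earlier ones. -/
structure RStep {I : Type u} [LinearOrder I] (Cl : Pos Γ → Prop) (lam : Cardinal.{u}) (X : Set V)
    (φ : I → I × I) (i : I) (f : I → RState Γ I) (s : RState Γ I) : Prop where
  cls : Cl s.p
  full : s.Q.Full lam
  lep : ∀ j < i, s.p ≤ (f j).p
  leQ : ∀ j < i, s.Q ≤ (f j).Q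
  sub : X ⊆ s.Q.N
  pQ : s.p.N ⊆ s.Q.N
  inc : Inc Γ {v | v ∈ s.p.N ∧ ∀ j < i, v ∉ (f j).p.N} s.E s.ρ
  enum : ∀ v ∈ s.Q.N, ∃ k, s.g k = v
  catch_up : (φ i).1 < i → (f (φ i).1).g (φ i).2 ∈ s.p.N

/-- Covering sets of size at most `κ`, given a class `Cl` of positions closed under limits shorter
than `κ` and admitting linked one-vertex steps. A chain of length `κ` of positions in `Cl` is built
together with a chain of full positions for the successor of `κ`; by bookkeeping both have the same
union of removed sets, so that the limit is full, hence good, and linked. -/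
theorem cov_regular (hΓ : ¬ Hind Γ) {κ : Cardinal.{u}} (hκ : ℵ₀ ≤ κ) (Cl : Pos Γ → Prop)
    (top : Cl (Pos.top Γ))
    (lim : ∀ (i : κ.ord.ToType) (s : Set.Iio i → Pos Γ), (∀ j, Cl (s j)) →
      (∀ j k, j ≤ k → s k ≤ s j) → Nonempty (Set.Iio i) →
      ∃ q, Cl q ∧ (∀ j, q ≤ s j) ∧ ∀ v, v ∈ q.N ↔ ∃ j, v ∈ (s j).N)
    (stp : ∀ p x, Cl p → ∃ q ≤ p, Cl q ∧ x ∈ q.N ∧ ∃ E ρ, Inc Γ (q.N \ p.N) E ρ)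
    (sm : ∀ p, Cl p → #p.N ≤ κ) {X : Set V} (hX : #X ≤ κ) : Cov Γ (Order.succ κ) X := by
  have hreg : (Order.succ κ).IsRegular := isRegular_succ hκ
  have hlt : κ < Order.succ κ := Order.lt_succ κ
  have hlam : ℵ₀ < Order.succ κ := hκ.trans_lt hlt
  rcases X.eq_empty_or_nonempty with rfl | ⟨x₀, hx₀⟩
  · exact cov_empty hΓ hlam.le
  have hI : #κ.ord.ToType = κ := by rw [mk_toType, card_ord]
  have hne : Nonempty κ.ord.ToType := by
    rw [← mk_ne_zero_iff, hI]; exact (aleph0_pos.trans_le hκ).ne'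
  obtain ⟨φ, hφ⟩ := exists_bookkeeping hκ
  have : Nonempty (RState Γ κ.ord.ToType) := ⟨⟨Pos.top Γ, Pos.top Γ, fun _ => x₀, ∅, id⟩⟩
  obtain ⟨f, hf⟩ := exists_wf_seq (I := κ.ord.ToType) (α := RState Γ κ.ord.ToType)
    (fun i f s => RStep Cl (Order.succ κ) X φ i f s) (by
      intro i f g s hfg h
      refine ⟨h.cls, h.full, fun j hj => hfg j hj ▸ h.lep j hj, fun j hj => hfg j hj ▸ h.leQ j hj,
        h.sub, h.pQ, ?_, h.enum, fun hi => hfg _ hi ▸ h.catch_up hi⟩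
      have e : {v | v ∈ s.p.N ∧ ∀ j < i, v ∉ (g j).p.N} =
          {v | v ∈ s.p.N ∧ ∀ j < i, v ∉ (f j).p.N} := by
        ext v
        refine and_congr_right fun _ => forall₂_congr fun j hj => ?_
        rw [hfg j hj]
      rw [e]
      exact h.inc) (by
      intro i f hf
      obtain ⟨p, hpCl, hp, hpN⟩ : ∃ p, Cl p ∧ (∀ j < i, p ≤ (f j).p) ∧
          ∀ v, v ∈ p.N ↔ ∃ j < i, v ∈ (f j).p.N := by
        by_cases hi : Nonempty (Set.Iio i)
        · obtain ⟨q, h1, h2, h3⟩ := lim i (fun j => (f j.1).p) (fun j => (hf j.1 j.2).cls)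
            (fun j k hjk => by
              rcases hjk.eq_or_lt with rfl | h
              · exact le_rfl
              · exact (hf k.1 k.2).lep j.1 h) hi
          refine ⟨q, h1, fun j hj => h2 ⟨j, hj⟩, fun v => ?_⟩
          rw [h3]
          exact ⟨fun ⟨j, h⟩ => ⟨j.1, j.2, h⟩, fun ⟨j, hj, h⟩ => ⟨⟨j, hj⟩, h⟩⟩
        · have hi' : ∀ j, ¬ j < i := fun j hj => hi ⟨⟨j, hj⟩⟩
          exact ⟨Pos.top Γ, top, fun j hj => absurd hj (hi' j), fun v =>
            ⟨fun h => h.elim, fun ⟨j, hj, _⟩ => absurd hj (hi' j)⟩⟩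
      obtain ⟨Q, hQf, hQ⟩ : ∃ Q : Pos Γ, Q.Full (Order.succ κ) ∧ (∀ j < i, Q ≤ (f j).Q) := by
        by_cases hi : Nonempty (Set.Iio i)
        · obtain ⟨q, h1, h2, -⟩ := Pos.exists_lim (fun j : Set.Iio i => (f j.1).Q)
            (fun j k => by
              rcases lt_trichotomy j.1 k.1 with h | h | h
              · exact Or.inr ((hf k.1 k.2).leQ j.1 h)
              · exact Or.inl (by rw [h])
              · exact Or.inl ((hf j.1 j.2).leQ k.1 h))
          exact ⟨q, Pos.full_lim hreg ((mk_Iio_ord i).trans hlt) (fun j => (hf j.1 j.2).full) h1 h2,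
            fun j hj => h1 ⟨j, hj⟩⟩
        · exact ⟨Pos.top Γ, Pos.top_full hlam, fun j hj => absurd ⟨⟨j, hj⟩⟩ hi⟩
      obtain ⟨p', hp', hp'Cl, hx, E, ρ, inc⟩ := stp p ((f (φ i).1).g (φ i).2) hpCl
      obtain ⟨Q', hQ', hQ'f, hsub⟩ := Pos.exists_full hreg hlam Q hQf.1 (X := X ∪ p'.N)
        (mk_union_lt hlam.le (hX.trans_lt hlt) ((sm p' hp'Cl).trans_lt hlt))
      obtain ⟨g, -, hg⟩ := exists_enum (I := κ.ord.ToType) (X := Q'.N) ⟨x₀, hsub (Or.inl hx₀)⟩ (by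
        rw [hI]; exact Order.lt_succ_iff.1 hQ'f.1)
      refine ⟨⟨p', Q', g, E, ρ⟩, hp'Cl, hQ'f, fun j hj => hp'.trans (hp j hj),
        fun j hj => hQ'.trans (hQ j hj), fun v hv => hsub (Or.inl hv), fun v hv => hsub (Or.inr hv),
        ?_, hg, fun _ => hx⟩
      have e : {v | v ∈ p'.N ∧ ∀ j < i, v ∉ (f j).p.N} = p'.N \ p.N := by
        ext v
        simp only [Set.mem_ofPred_eq, Set.mem_sdiff, hpN]
        push Not
        rfl
      change Inc Γ {v | v ∈ p'.N ∧ ∀ j < i, v ∉ (f j).p.N} E ρ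
      rw [e]
      exact inc)
  obtain ⟨q, h1, h2, -⟩ := Pos.exists_lim (fun j => (f j).Q) (fun j k => by
    rcases lt_trichotomy j k with h | h | h
    · exact Or.inr ((hf k).leQ j h)
    · exact Or.inl (by rw [h])
    · exact Or.inl ((hf j).leQ k h))
  have hqf := Pos.full_lim hreg (by rw [hI]; exact hlt) (fun j => (hf j).full) h1 h2
  obtain ⟨E, ρ, inc, -⟩ := Inc.iUnion (fun i => (hf i).inc) (by
    intro i j v hi hj
    rcases lt_trichotomy i j with h | h | h
    · exact absurd hi.1 (hj.2 i h)
    · exact h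
    · exact absurd hj.1 (hi.2 j h))
  refine ⟨q, hqf.good hΓ hreg hlam, hqf.1, fun v hv => (h2 v).2 ⟨Classical.arbitrary _, (hf _).sub hv⟩,
    E, ρ, ?_⟩
  convert inc using 1
  ext v
  rw [h2, Set.mem_iUnion]
  constructor
  · rintro ⟨j, hj⟩
    obtain ⟨k, rfl⟩ := (hf j).enum v hj
    obtain ⟨i, hi, hφi⟩ := hφ j j k
    have h3 := (hf i).catch_up (by rw [hφi]; exact hi)
    rw [hφi] at h3
    obtain ⟨m, hm, hmin⟩ := WellFounded.has_min (wellFounded_lt (α := κ.ord.ToType))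
      {m | (f j).g k ∈ (f m).p.N} ⟨i, h3⟩
    exact ⟨m, hm, fun l hl h => hmin l h hl⟩
  · rintro ⟨i, hi, -⟩
    exact ⟨i, (hf i).pQ hi⟩

/-- The countable case, where `Cl` consists of the good positions with finite removed set. -/
theorem cov_aleph0 (hΓ : ¬ Hind Γ) {X : Set V} (hX : #X ≤ ℵ₀) : Cov Γ (Order.succ ℵ₀) X := by
  refine cov_regular hΓ le_rfl (fun p => p.Good ∧ #p.N < ℵ₀) ⟨⟨fun _ h => h.2.1.elim, ?_⟩, ?_⟩ ?_ ?_
    (fun p hp => hp.2.le) hX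
  · refine quot_unhind (Pos.top Γ).lk ?_
    change ¬ Hind (Γ.delete ∅)
    rwa [delete_empty]
  · change #(∅ : Set V) < ℵ₀
    simp [aleph0_pos]
  · intro i s hs hmono hne
    have hfin : Finite (Set.Iio i) := lt_aleph0_iff_finite.1 (mk_Iio_ord i)
    obtain ⟨m, hm⟩ := Finite.exists_max (id : Set.Iio i → Set.Iio i)
    refine ⟨s m, hs m, fun j => hmono j m (hm j), fun v => ⟨fun h => ⟨m, h⟩, ?_⟩⟩
    rintro ⟨j, hj⟩
    exact (hmono j m (hm j)).N v hj
  · rintro p x ⟨hp, hpN⟩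
    obtain ⟨q, h1, h2, h3, h4, h5⟩ := covLt_aleph0.step le_rfl hp hpN (X := {x}) (by simp)
    exact ⟨q, h1, ⟨h2, h3⟩, h4 rfl, h5⟩

/-- Full positions can be refined to full positions with linked increments. -/
theorem full_step (hΓ : ¬ Hind Γ) {κ : Cardinal.{u}} (hκ : κ.IsRegular) (hκ' : ℵ₀ < κ)
    (hK : CovLt V κ) (p : Pos Γ) (x : V) (hp : p.Full κ) :
    ∃ q ≤ p, q.Full κ ∧ x ∈ q.N ∧ ∃ E ρ, Inc Γ (q.N \ p.N) E ρ := by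
  have nxt : ∀ s : {s : Pos Γ × Pos Γ // (s.1.Good ∧ #s.1.N < κ) ∧ s.2.Full κ},
      ∃ t : {s : Pos Γ × Pos Γ // (s.1.Good ∧ #s.1.N < κ) ∧ s.2.Full κ},
        t.1.2 ≤ s.1.2 ∧ x ∈ t.1.1.N ∧ s.1.1.N ⊆ t.1.1.N ∧ s.1.2.N ⊆ t.1.1.N ∧ t.1.1.N ⊆ t.1.2.N ∧
        ∃ E ρ, Inc Γ (t.1.1.N \ s.1.1.N) E ρ := by
    rintro ⟨⟨a, r⟩, ⟨ha, haN⟩, hr⟩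
    obtain ⟨b, hb, hbg, hbN, hsub, hinc⟩ := hK.step hκ'.le ha haN (X := {x} ∪ r.N)
      (mk_union_lt hκ'.le (by simpa using one_lt_aleph0.trans hκ') hr.1)
    obtain ⟨r', hr', hrf, hsub'⟩ := Pos.exists_full hκ hκ' r hr.1 hbN
    exact ⟨⟨⟨b, r'⟩, ⟨hbg, hbN⟩, hrf⟩, hr', hsub (Or.inl rfl), hb.N, fun v hv => hsub (Or.inr hv),
      hsub', hinc⟩
  choose F hF using nxt
  set s : ℕ → {s : Pos Γ × Pos Γ // (s.1.Good ∧ #s.1.N < κ) ∧ s.2.Full κ} :=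
    fun n => F^[n] ⟨⟨p, p⟩, ⟨hp.good hΓ hκ hκ', hp.1⟩, hp⟩ with hs
  have hsucc : ∀ n, s (n + 1) = F (s n) := fun n => Function.iterate_succ_apply' F n _
  obtain ⟨q, h1, h2, -⟩ := Pos.exists_lim_nat (p := fun n => (s n).1.2) (fun n => by
    simp only [hsucc]; exact (hF (s n)).1)
  have hNq : ∀ v, v ∈ q.N ↔ ∃ n, v ∈ (s n).1.1.N := by
    intro v
    rw [h2]
    constructor
    · rintro ⟨n, hn⟩
      exact ⟨n + 1, by rw [hsucc]; exact (hF (s n)).2.2.2.1 hn⟩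
    · rintro ⟨n, hn⟩
      cases n with
      | zero => exact ⟨0, hn⟩
      | succ n =>
        refine ⟨n + 1, ?_⟩
        simp only [hsucc] at hn ⊢
        exact (hF (s n)).2.2.2.2.1 hn
  have hmono : Monotone fun n => (s n).1.1.N :=
    monotone_nat_of_le_succ fun n => by simp only [hsucc]; exact (hF (s n)).2.2.1
  choose E ρ hE using fun n => (hF (s n)).2.2.2.2.2
  obtain ⟨E', ρ', inc, -⟩ := Inc.iUnion hE (by
    intro i j v hi hj
    rw [← hsucc] at hi hj
    rcases lt_trichotomy i j with h | h | h
    · exact absurd (hmono h hi.1) hj.2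
    · exact h
    · exact absurd (hmono h hj.1) hi.2)
  refine ⟨q, h1 0, Pos.full_lim (ι := ULift.{u} ℕ) hκ (by simpa using hκ') (p := fun n => (s n.down).1.2)
    (fun n => (s n.down).2.2) (fun n => h1 n.down) (fun v => ?_), ?_, E', ρ', ?_⟩
  · rw [h2]; exact ⟨fun ⟨n, h⟩ => ⟨⟨n⟩, h⟩, fun ⟨n, h⟩ => ⟨n.down, h⟩⟩
  · exact (hNq x).2 ⟨1, by rw [hsucc]; exact (hF (s 0)).2.1⟩
  · convert inc using 1
    ext v
    simp only [Set.mem_iUnion, ← hsucc, Set.mem_sdiff, hNq]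
    constructor
    · rintro ⟨hv, hvp⟩
      classical
      have h0 : Nat.find hv ≠ 0 := fun h0 => hvp (by
        have := Nat.find_spec hv
        rw [h0] at this
        exact this)
      obtain ⟨n, hn⟩ := Nat.exists_eq_succ_of_ne_zero h0
      refine ⟨n, ?_, ?_⟩
      · have := Nat.find_spec hv
        rwa [hn] at this
      · exact Nat.find_min hv (by omega)
    · rintro ⟨n, hn, hn'⟩
      exact ⟨⟨_, hn⟩, fun h => hn' (hmono (Nat.zero_le n) h)⟩

/-- The uncountable regular case, where `Cl` consists of the full positions for `κ`. -/
theorem cov_uncountable_regular (hΓ : ¬ Hind Γ) {κ : Cardinal.{u}} (hκ : κ.IsRegular) (hκ' : ℵ₀ < κ)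
    (hK : CovLt V κ) {X : Set V} (hX : #X ≤ κ) : Cov Γ (Order.succ κ) X := by
  refine cov_regular hΓ hκ'.le (fun p => p.Full κ) (Pos.top_full hκ') ?_
    (fun p x hp => full_step hΓ hκ hκ' hK p x hp) (fun p hp => hp.1.le) hX
  intro i s hs hmono hne
  obtain ⟨q, h1, h2, -⟩ := Pos.exists_lim s (fun j k =>
    (le_total j k).symm.imp (hmono k j) (hmono j k))
  exact ⟨q, Pos.full_lim hκ (mk_Iio_ord i) hs h1 h2, h1, h2⟩

end Web

end

/-! ### Covering sets of singular size -/

section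

namespace Web
variable {V : Type u} {Γ : Web V}

theorem mk_exists_nat_lt {κ : Cardinal.{u}} (hκ : κ.IsRegular) {n : ℕ} {S : ℕ → Set V}
    (hS : ∀ m < n, #(S m) < κ) : #{v | ∃ m < n, v ∈ S m} < κ := by
  refine mk_setOf_exists_lt (ι := ULift.{u} (Fin n)) (S := fun m => S m.down) hκ ?_
    (fun m => hS _ m.down.2) ?_
  · exact (lt_aleph0_iff_finite.2 inferInstance).trans_le hκ.aleph0_le
  · rintro v ⟨m, hm, hv⟩
    exact ⟨⟨⟨m, hm⟩⟩, hv⟩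

/-- A singular cardinal `κ` has an index set `C` of size less than `κ`, with sizes `k c < κ` for
`c ∈ C`, such that every set of size at most `κ` is a union of pieces of sizes `k c`. -/
theorem exists_pieces {κ : Cardinal.{u}} (hκ : ℵ₀ < κ) (hs : ¬ κ.IsRegular) :
    ∃ (C : Type u) (_ : LinearOrder C) (_ : WellFoundedLT C) (k : C → Cardinal.{u}),
      (∀ c, #C ≤ k c ∧ ℵ₀ ≤ k c ∧ k c < κ) ∧ ∀ S : Set V, #S ≤ κ →
        ∃ W : C → Set V, (∀ c, #(W c) ≤ k c) ∧ ∀ x ∈ S, ∃ c, x ∈ W c := by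
  have hcof : κ.ord.cof < κ := by
    by_contra h
    exact hs ⟨hκ.le, not_lt.1 h⟩
  obtain ⟨C, hC, hcard⟩ := Order.exists_cof_eq κ.ord.ToType
  rw [Ordinal.cof_toType] at hcard
  refine ⟨C, inferInstance, inferInstance, fun c => max (#(Set.Iic c.1)) (max (#C) ℵ₀),
    fun c => ⟨(le_max_left _ _).trans (le_max_right _ _),
      (le_max_right _ _).trans (le_max_right _ _),
      max_lt ?_ (max_lt (hcard ▸ hcof) hκ)⟩, fun S hS => ?_⟩
  · have e : Set.Iic c.1 = Set.Iio c.1 ∪ {c.1} := by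
      ext x; simp [le_iff_lt_or_eq]
    rw [e]
    refine mk_union_lt hκ.le (mk_Iio_ord _) ?_
    simpa using one_lt_aleph0.trans hκ
  · have hI : #κ.ord.ToType = κ := by rw [mk_toType, card_ord]
    rw [← hI] at hS
    obtain ⟨e⟩ := hS
    refine ⟨fun c => {x | ∃ h : x ∈ S, e ⟨x, h⟩ ≤ c.1}, fun c => le_max_of_le_left ?_, fun x hx => ?_⟩
    · refine mk_le_of_injective (f := fun x => (⟨e ⟨x.1, x.2.1⟩, x.2.2⟩ : Set.Iic c.1)) ?_
      intro x y h
      have := e.injective (congrArg Subtype.val h)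
      exact Subtype.ext (Subtype.mk.inj this)
    · obtain ⟨c, hc, hle⟩ := hC (e ⟨x, hx⟩)
      exact ⟨⟨c, hc⟩, hx, hle⟩

/-- A linked increment can be restricted to a set which is a union of paths. -/
theorem Inc.restrict {Z E : Set V} {ρ : V → V} (h : Inc Γ Z E ρ) {M : Set V}
    (hM : ∀ v ∈ E, v ∈ M ↔ ρ v ∈ M) : Inc Γ (Z ∩ M) (E ∩ M) ρ where
  sub := fun v hv => ⟨h.sub hv.1, hv.2⟩
  sys :=
    { src := fun a ha => h.sys.src a ha.1
      cl := fun v hv hvA => ⟨h.sys.cl v hv.1 hvA, (hM v hv.1).1 hv.2⟩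
      adj := fun v hv => h.sys.adj v hv.1
      inj := fun v hv w hw => h.sys.inj v hv.1 w hw.1
      fin := fun v hv => h.sys.fin v hv.1 }
  link := by
    intro a ha haZ
    obtain ⟨b, hb, hbB, n, hn⟩ := h.link a ha haZ.1
    refine ⟨b, ⟨hb, ?_⟩, hbB, n, hn⟩
    have : ∀ n, ∀ v ∈ E, ρ^[n] v ∈ M → v ∈ M := by
      intro n
      induction n with
      | zero => exact fun v _ h => h
      | succ n ih =>
        intro v hv h1
        rw [Function.iterate_succ_apply] at h1
        exact (hM v hv).2 (ih _ (h.sys.cl' hv) h1)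
    exact this n b hb (hn ▸ haZ.2)

/-- Overlapping linked increments whose paths respect each other's zones can be merged, each
vertex following the first increment whose zone contains it. -/
theorem Inc.merge {C : Type*} [LinearOrder C] [WellFoundedLT C] {Z E : C → Set V} {ρ : C → V → V}
    (h : ∀ c, Inc Γ (Z c) (E c) (ρ c))
    (hcl : ∀ c c', ∀ v ∈ E c, v ∈ Z c' ↔ ρ c v ∈ Z c') :
    ∃ E' ρ', Inc Γ (⋃ c, Z c) E' ρ' := by
  have h1 : ∀ c, Inc Γ (Z c ∩ {v | ∀ c' < c, v ∉ Z c'}) (E c ∩ {v | ∀ c' < c, v ∉ Z c'}) (ρ c) :=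
    fun c => (h c).restrict fun v hv => forall₂_congr fun c' _ => not_congr (hcl c c' v hv)
  obtain ⟨E', ρ', h2, -⟩ := Inc.iUnion h1 (by
    intro i j v hi hj
    rcases lt_trichotomy i j with h | h | h
    · exact absurd hi.1 (hj.2 i h)
    · exact h
    · exact absurd hj.1 (hi.2 j h))
  refine ⟨E', ρ', ?_⟩
  convert h2 using 1
  ext v
  simp only [Set.mem_iUnion]
  constructor
  · intro hv
    obtain ⟨m, hm, hmin⟩ := WellFounded.has_min (wellFounded_lt (α := C)) {m | v ∈ Z m} hv
    exact ⟨m, hm, fun l hl h => hmin l h hl⟩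
  · rintro ⟨c, hc, -⟩
    exact ⟨c, hc⟩

/-- Stage of the construction covering a set of singular size: a linked position `p c` with the
linking system of its increment for each `c`, a closing-off position `Q`, and a decomposition `W`
of its removed set. -/
structure SState (Γ : Web V) (C : Type u) where
  p : C → Pos Γ
  E : C → Set V
  ρ : C → V → V
  Q : Pos Γ
  W : C → Set V

/-- The requirements on a stage, given the earlier ones. -/
structure SStep {C : Type u} (k : C → Cardinal.{u}) (lam : Cardinal.{u}) (X : Set V)
    (n : ℕ) (f : ℕ → SState Γ C) (s : SState Γ C) : Prop where
  good : ∀ c, (s.p c).Good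
  small : ∀ c, #(s.p c).N < Order.succ (k c)
  lep : ∀ c, ∀ m < n, s.p c ≤ (f m).p c
  inc : ∀ c, Inc Γ {v | v ∈ (s.p c).N ∧ ∀ m < n, v ∉ ((f m).p c).N} (s.E c) (s.ρ c)
  catch_up : ∀ c, ∀ m < n, (f m).W c ⊆ (s.p c).N
  closed : ∀ c, ∀ m < n, ∀ m' < n, ∀ c',
    comp Γ ((f m).E c') ((f m).ρ c') ((f m').p c).N ⊆ (s.p c).N
  full : s.Q.Full lam
  leQ : ∀ m < n, s.Q ≤ (f m).Q
  sub : X ⊆ s.Q.N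
  pQ : ∀ c, (s.p c).N ⊆ s.Q.N
  mkW : ∀ c, #(s.W c) ≤ k c
  covW : ∀ v ∈ s.Q.N, ∃ c, v ∈ s.W c

/-- The singular case. The set is exhausted by pieces of sizes `k c < κ`; in each of countably many
rounds the positions `p c` are refined so as to remove the next piece and to be closed under the
linking paths found so far, while the positions `Q` stay full for the successor of `κ`. The limit of
the `Q` is good, and the linking systems of the different `c` combine. -/
theorem cov_singular (hΓ : ¬ Hind Γ) {κ : Cardinal.{u}} (hκ : ℵ₀ < κ) (hs : ¬ κ.IsRegular)
    (hK : ∀ μ, ℵ₀ ≤ μ → μ < κ → CovLt V (Order.succ μ)) {X : Set V} (hX : #X ≤ κ) :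
    Cov Γ (Order.succ κ) X := by
  have hreg : (Order.succ κ).IsRegular := isRegular_succ hκ.le
  have hlt : κ < Order.succ κ := Order.lt_succ κ
  have hlam : ℵ₀ < Order.succ κ := hκ.trans hlt
  obtain ⟨C, _, _, k, hk, hpieces⟩ := exists_pieces (V := V) hκ hs
  have hkreg : ∀ c, (Order.succ (k c)).IsRegular := fun c => isRegular_succ (hk c).2.1
  have hklt : ∀ c, k c < Order.succ (k c) := fun c => Order.lt_succ _
  have : Nonempty (SState Γ C) :=
    ⟨⟨fun _ => Pos.top Γ, fun _ => ∅, fun _ => id, Pos.top Γ, fun _ => ∅⟩⟩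
  obtain ⟨f, hf⟩ := exists_wf_seq (I := ℕ) (α := SState Γ C)
    (fun n f s => SStep k (Order.succ κ) X n f s) (by
      intro i f g s hfg h
      refine ⟨h.good, h.small, fun c j hj => hfg j hj ▸ h.lep c j hj, fun c => ?_,
        fun c j hj => hfg j hj ▸ h.catch_up c j hj, fun c m hm m' hm' c' => ?_, h.full,
        fun j hj => hfg j hj ▸ h.leQ j hj, h.sub, h.pQ, h.mkW, h.covW⟩
      · have e : {v | v ∈ (s.p c).N ∧ ∀ j < i, v ∉ ((g j).p c).N} =
            {v | v ∈ (s.p c).N ∧ ∀ j < i, v ∉ ((f j).p c).N} := by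
          ext v
          refine and_congr_right fun _ => forall₂_congr fun j hj => ?_
          rw [hfg j hj]
        rw [e]
        exact h.inc c
      · rw [← hfg m hm, ← hfg m' hm']
        exact h.closed c m hm m' hm' c') (by
      intro n f hf
      obtain ⟨p, E, ρ, hp⟩ : ∃ (p : C → Pos Γ) (E : C → Set V) (ρ : C → V → V), ∀ c,
          (p c).Good ∧ #(p c).N < Order.succ (k c) ∧ (∀ m < n, p c ≤ (f m).p c) ∧
          Inc Γ {v | v ∈ (p c).N ∧ ∀ m < n, v ∉ ((f m).p c).N} (E c) (ρ c) ∧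
          (∀ m < n, (f m).W c ⊆ (p c).N) ∧ ∀ m < n, ∀ m' < n, ∀ c',
            comp Γ ((f m).E c') ((f m).ρ c') ((f m').p c).N ⊆ (p c).N := by
        suffices H : ∀ c, ∃ (p : Pos Γ) (E : Set V) (ρ : V → V),
            p.Good ∧ #p.N < Order.succ (k c) ∧ (∀ m < n, p ≤ (f m).p c) ∧
            Inc Γ {v | v ∈ p.N ∧ ∀ m < n, v ∉ ((f m).p c).N} E ρ ∧
            (∀ m < n, (f m).W c ⊆ p.N) ∧ ∀ m < n, ∀ m' < n, ∀ c',
              comp Γ ((f m).E c') ((f m).ρ c') ((f m').p c).N ⊆ p.N by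
          choose p E ρ h using H
          exact ⟨p, E, ρ, h⟩
        intro c
        cases n with
        | zero =>
          have h0 : #(Pos.top Γ).N < Order.succ (k c) := by
            change #(∅ : Set V) < _
            rw [mk_eq_zero]
            exact aleph0_pos.trans_le ((hk c).2.1.trans (hklt c).le)
          refine ⟨Pos.top Γ, ∅, id, (Pos.top_full hlam).good hΓ hreg hlam, h0,
            fun m hm => absurd hm (Nat.not_lt_zero m), ?_, fun m hm => absurd hm (Nat.not_lt_zero m),
            fun m hm => absurd hm (Nat.not_lt_zero m)⟩
          convert Inc.empty (Γ := Γ) using 1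
          ext v
          exact ⟨fun h => h.1, fun h => h.elim⟩
        | succ n =>
          obtain ⟨q, h1, h2, h3, h4, E, ρ, h5⟩ := (hK (k c) (hk c).2.1 (hk c).2.2).step
            (hkreg c).aleph0_le ((hf n n.lt_succ_self).good c) ((hf n n.lt_succ_self).small c)
            (X := {v | ∃ m < n + 1, v ∈ (f m).W c} ∪ {v | ∃ m < n + 1, v ∈ {v | ∃ m' < n + 1,
              v ∈ ⋃ c', comp Γ ((f m).E c') ((f m).ρ c') ((f m').p c).N}})
            (mk_union_lt (hkreg c).aleph0_le
              (mk_exists_nat_lt (hkreg c) fun m hm => ((hf m hm).mkW c).trans_lt (hklt c))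
              (mk_exists_nat_lt (hkreg c) fun m hm => mk_exists_nat_lt (hkreg c) fun m' hm' =>
                mk_setOf_exists_lt (hkreg c) ((hk c).1.trans_lt (hklt c))
                  (fun c' => ((hf m hm).inc c').sys.mk_comp_lt ((hf m' hm').small c)
                    ((hk c).2.1.trans_lt (hklt c)))
                  (fun v hv => Set.mem_iUnion.1 hv)))
          have hle : ∀ m < n + 1, (f n).p c ≤ (f m).p c := by
            intro m hm
            rcases (Nat.lt_succ_iff.1 hm).eq_or_lt with rfl | h
            · exact le_rfl
            · exact (hf n n.lt_succ_self).lep c m h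
          refine ⟨q, E, ρ, h2, h3, fun m hm => h1.trans (hle m hm), ?_,
            fun m hm v hv => h4 (Or.inl ⟨m, hm, hv⟩), fun m hm m' hm' c' v hv =>
              h4 (Or.inr ⟨m, hm, m', hm', Set.mem_iUnion.2 ⟨c', hv⟩⟩)⟩
          convert h5 using 1
          ext v
          exact and_congr_right fun _ => ⟨fun h => h n n.lt_succ_self,
            fun h m hm h' => h ((hle m hm).N v h')⟩
      obtain ⟨Q, hQf, hQ⟩ : ∃ Q : Pos Γ, Q.Full (Order.succ κ) ∧ (∀ j < n, Q ≤ (f j).Q) := by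
        cases n with
        | zero => exact ⟨Pos.top Γ, Pos.top_full hlam, fun j hj => absurd hj (Nat.not_lt_zero j)⟩
        | succ n =>
          refine ⟨(f n).Q, (hf n n.lt_succ_self).full, fun m hm => ?_⟩
          rcases (Nat.lt_succ_iff.1 hm).eq_or_lt with rfl | h
          · exact le_rfl
          · exact (hf n n.lt_succ_self).leQ m h
      have hC : ∀ c, #(⋃ c, (p c).N) < Order.succ κ := fun c =>
        mk_setOf_exists_lt hreg (((hk c).1.trans_lt (hk c).2.2).trans hlt)
          (fun c => (hp c).2.1.trans_le (Order.succ_le_succ (hk c).2.2.le))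
          (fun v hv => Set.mem_iUnion.1 hv)
      have hC' : #(⋃ c, (p c).N) < Order.succ κ := by
        rcases isEmpty_or_nonempty C with h | ⟨⟨c⟩⟩
        · rw [Set.iUnion_of_empty, mk_eq_zero]
          exact aleph0_pos.trans hlam
        · exact hC c
      obtain ⟨Q', hQ', hQ'f, hsub⟩ := Pos.exists_full hreg hlam Q hQf.1
        (mk_union_lt hlam.le (hX.trans_lt hlt) hC')
      obtain ⟨W, hW, hW'⟩ := hpieces Q'.N (Order.lt_succ_iff.1 hQ'f.1)
      exact ⟨⟨p, E, ρ, Q', W⟩, fun c => (hp c).1, fun c => (hp c).2.1, fun c => (hp c).2.2.1,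
        fun c => (hp c).2.2.2.1, fun c => (hp c).2.2.2.2.1, fun c => (hp c).2.2.2.2.2, hQ'f,
        fun m hm => hQ'.trans (hQ m hm), fun v hv => hsub (Or.inl hv),
        fun c v hv => hsub (Or.inr (Set.mem_iUnion.2 ⟨c, hv⟩)), hW, hW'⟩)
  obtain ⟨q, h1, h2, -⟩ := Pos.exists_lim_nat (p := fun n => (f n).Q)
    (fun n => (hf (n + 1)).leQ n n.lt_succ_self)
  have hqf : q.Full (Order.succ κ) := Pos.full_lim (ι := ULift.{u} ℕ) hreg (by simpa using hlam)
    (p := fun n => (f n.down).Q) (fun n => (hf n.down).full) (fun n => h1 n.down) (fun v => by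
      rw [h2]; exact ⟨fun ⟨n, h⟩ => ⟨⟨n⟩, h⟩, fun ⟨n, h⟩ => ⟨n.down, h⟩⟩)
  have hN : ∀ c, ∃ E ρ, Inc Γ {v | ∃ n, v ∈ ((f n).p c).N} E ρ ∧
      (∀ v, v ∈ E ↔ ∃ n, v ∈ (f n).E c) ∧ ∀ n, ∀ v ∈ (f n).E c, ρ v = (f n).ρ c v := by
    intro c
    obtain ⟨E, ρ, h3, h4⟩ := Inc.iUnion (fun n => (hf n).inc c) (by
      intro i j v hi hj
      rcases lt_trichotomy i j with h | h | h
      · exact absurd hi.1 (hj.2 i h)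
      · exact h
      · exact absurd hj.1 (hi.2 j h))
    refine ⟨E, ρ, ?_, h4⟩
    convert h3 using 1
    ext v
    simp only [Set.mem_iUnion]
    constructor
    · intro hv
      obtain ⟨m, hm, hmin⟩ := WellFounded.has_min (wellFounded_lt (α := ℕ))
        {m | v ∈ ((f m).p c).N} hv
      exact ⟨m, hm, fun l hl h => hmin l h hl⟩
    · rintro ⟨n, hn, -⟩
      exact ⟨n, hn⟩
  choose E ρ hE hEm hρ using hN
  obtain ⟨E', ρ', inc⟩ := Inc.merge hE (by
    intro c c' v hv
    obtain ⟨m, hm⟩ := (hEm c v).1 hv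
    rw [hρ c m v hm]
    have hsys := ((hf m).inc c).sys
    constructor
    · rintro ⟨m', hm'⟩
      exact ⟨max m m' + 1, (hf _).closed c' m (by omega) m' (by omega) c
        ((hsys.comp_iff hm).1 (subset_comp hm hm'))⟩
    · rintro ⟨m', hm'⟩
      exact ⟨max m m' + 1, (hf _).closed c' m (by omega) m' (by omega) c
        ((hsys.comp_iff hm).2 (subset_comp (hsys.cl' hm) hm'))⟩)
  refine ⟨q, hqf.good hΓ hreg hlam, hqf.1, fun v hv => (h2 v).2 ⟨0, (hf 0).sub hv⟩, E', ρ', ?_⟩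
  convert inc using 1
  ext v
  rw [h2, Set.mem_iUnion]
  constructor
  · rintro ⟨n, hn⟩
    obtain ⟨c, hc⟩ := (hf n).covW v hn
    exact ⟨c, n + 1, (hf (n + 1)).catch_up c n n.lt_succ_self hc⟩
  · rintro ⟨c, n, hn⟩
    exact ⟨n, (hf n).pQ c hn⟩

/-- Every set of size at most an infinite cardinal is covered, by induction on the cardinal. -/
theorem covLt_succ (κ : Cardinal.{u}) (hκ : ℵ₀ ≤ κ) : CovLt V (Order.succ κ) := by
  induction κ using WellFoundedLT.induction with
  | ind κ ih =>
    intro Γ hΓ X hX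
    rw [Order.lt_succ_iff] at hX
    rcases hκ.eq_or_lt with rfl | hκ'
    · exact cov_aleph0 hΓ hX
    have hK : ∀ μ, ℵ₀ ≤ μ → μ < κ → CovLt V (Order.succ μ) := fun μ h1 h2 => ih μ h2 h1
    by_cases hreg : κ.IsRegular
    · refine cov_uncountable_regular hΓ hreg hκ' ?_ hX
      intro Γ hΓ X hX
      obtain ⟨p, h1, h2, h3⟩ := hK (max #X ℵ₀) (le_max_right _ _) (max_lt hX hκ') Γ hΓ X
        (Order.lt_succ_iff.2 (le_max_left _ _))
      exact ⟨p, h1, h2.trans_le (Order.succ_le_of_lt (max_lt hX hκ')), h3⟩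
    · exact cov_singular hΓ hκ' hreg hK hX

/-- In an unhindered web the sources can be linked to the targets. -/
theorem exists_link (hΓ : ¬ Hind Γ) : ∃ E ρ, Sys Γ E ρ ∧
    ∀ a ∈ Γ.A, ∃ b ∈ E, b ∈ Γ.B ∧ ∃ n, ρ^[n] b = a := by
  obtain ⟨p, -, -, hX, E, ρ, inc⟩ := covLt_succ (V := V) (max #V ℵ₀) (le_max_right _ _) Γ hΓ Set.univ
    (by rw [mk_univ, Order.lt_succ_iff]; exact le_max_left _ _)
  exact ⟨E, ρ, inc.sys, fun a ha => inc.link a ha (hX trivial)⟩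

end Web

end

/-! ### The orthogonal path system and strong maximality -/

section

namespace Web
variable {V : Type u} {Γ : Web V}

/-- A wave followed by a path system of the quotient web is a path system. -/
theorem IsLk.extend {R D : Set V} {π : V → V} (h : IsLk Γ R D π) {E : Set V} {ρ : V → V}
    (hE : Sys (Γ.quot R) E ρ) :
    ∃ σ : V → V, Sys Γ (D ∪ E) σ ∧ IsLk Γ R D σ ∧
      ∀ b ∈ E, ∀ s ∈ Γ.bd R, (∃ n, ρ^[n] b = s) → ∃ n, σ^[n] b = s := by
  classical
  have hER : ∀ v ∈ E, v ∉ R := by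
    intro v hv hR
    by_cases hb : v ∈ Γ.bd R
    · exact hb.2 hR
    · exact (hE.adj v hv hb).2.2.1 hR
  have hDE : ∀ v ∈ E, v ∉ Γ.bd R → v ∉ D := fun v hv hb hD =>
    (h.sub v hD).elim (hER v hv) hb
  set σ : V → V := fun v => if v ∈ D then π v else ρ v with hσ
  have σD : ∀ v ∈ D, σ v = π v := fun v hv => if_pos hv
  have σE : ∀ v, v ∉ D → σ v = ρ v := fun v hv => if_neg hv
  have hbE : ∀ v, v ∈ D ∪ E → v ∉ D → v ∈ E ∧ v ∉ Γ.bd R := fun v hv hD =>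
    ⟨hv.resolve_left hD, fun hb => hD (h.bdD v hb)⟩
  have finD : ∀ v ∈ D, ∃ n, σ^[n] v ∈ Γ.A := by
    intro v hv
    obtain ⟨n, hn⟩ := h.fin v hv
    exact ⟨n, by rwa [iter_congr (fun w hw => h.toSys.cl' hw) σD hv n]⟩
  refine ⟨σ, ⟨?_, ?_, ?_, ?_, ?_⟩, ⟨⟨?_, ?_, ?_, ?_, finD⟩, h.avoid, ?_, h.bdD, h.sub⟩, ?_⟩
  · intro a ha haA
    by_cases haD : a ∈ D
    · rw [σD a haD, h.src a haD haA]
    · obtain ⟨h1, h2⟩ := hbE a ha haD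
      exact absurd (A_sub Γ R haA) fun h3 => h3.elim (hER a h1) h2
  · intro v hv hvA
    by_cases hD : v ∈ D
    · rw [σD v hD]; exact Or.inl (h.cl v hD hvA)
    · rw [σE v hD]; exact Or.inr (hE.cl' (hbE v hv hD).1)
  · intro v hv hvA
    by_cases hD : v ∈ D
    · rw [σD v hD]; exact h.adj v hD hvA
    · rw [σE v hD]; exact (hE.adj v (hbE v hv hD).1 (hbE v hv hD).2).1
  · have key : ∀ v ∈ D, v ∉ Γ.A → ∀ w ∈ D ∪ E, w ∉ D → σ v ≠ σ w := by
      intro v hv hvA w hw hwD e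
      rw [σD v hv, σE w hwD] at e
      exact hER (ρ w) (hE.cl' (hbE w hw hwD).1) (e ▸ h.pred v hv hvA)
    intro v hv w hw hvA hwA e
    by_cases hvD : v ∈ D <;> by_cases hwD : w ∈ D
    · rw [σD v hvD, σD w hwD] at e; exact h.inj v hvD w hwD hvA hwA e
    · exact absurd e (key v hvD hvA w hw hwD)
    · exact absurd e.symm (key w hwD hwA v hv hvD)
    · rw [σE v hvD, σE w hwD] at e
      exact hE.inj v (hbE v hv hvD).1 w (hbE w hw hwD).1 (hbE v hv hvD).2 (hbE w hw hwD).2 e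
  · have finE : ∀ v ∈ E, ∃ n, σ^[n] v ∈ Γ.A := by
      refine hE.ind (fun a _ ha => finD a (h.bdD a ha)) ?_
      intro v hv hb ih
      rw [← σE v (hDE v hv hb)] at ih
      exact reach_step ih
    exact fun v hv => hv.elim (finD v) (finE v)
  · intro a ha haA; rw [σD a ha]; exact h.src a ha haA
  · intro v hv hvA; rw [σD v hv]; exact h.cl v hv hvA
  · intro v hv hvA; rw [σD v hv]; exact h.adj v hv hvA
  · intro v hv w hw hvA hwA e
    rw [σD v hv, σD w hw] at e; exact h.inj v hv w hw hvA hwA e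
  · intro v hv hvA; rw [σD v hv]; exact h.pred v hv hvA
  · rintro b hb s hs ⟨n, hn⟩
    induction n generalizing b with
    | zero => exact ⟨0, hn⟩
    | succ n ih =>
      by_cases hbb : b ∈ Γ.bd R
      · rw [hE.iterA hb hbb] at hn
        exact ⟨0, hn⟩
      · rw [Function.iterate_succ_apply] at hn
        obtain ⟨m, hm⟩ := ih (ρ b) (hE.cl' hb) hn
        exact ⟨m + 1, by rw [Function.iterate_succ_apply, σE b (hDE b hb hbb), hm]⟩

/-- Path systems contain no directed cycles. -/
theorem Sys.acyclic {D : Set V} {π : V → V} (h : Sys Γ D π) {v : V} (hv : v ∈ D) (hvA : v ∉ Γ.A)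
    (n : ℕ) : π^[n] (π v) ≠ v := by
  intro e
  obtain ⟨k, hk⟩ := h.fin v hv
  have h1 : π^[(n + 1) * k] v = v := by
    rw [Function.iterate_mul]
    have : π^[n + 1] v = v := by rw [Function.iterate_succ_apply, e]
    exact Function.iterate_fixed this k
  have h2 : (n + 1) * k = n * k + k := by ring
  rw [h2, Function.iterate_add_apply, h.iterA (h.iter hv k) hk] at h1
  exact hvA (h1 ▸ hk)

/-- The list of vertices on the path of a system leading to a given vertex. -/
theorem Sys.exists_list {D : Set V} {π : V → V} (h : Sys Γ D π) :
    ∀ v ∈ D, ∃ p : List V, IsFinPath Γ.Adj p ∧ (∃ a ∈ Γ.A, p.head? = some a) ∧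
      p.getLast? = some v ∧ ∀ w, w ∈ p ↔ ∃ n, π^[n] v = w := by
  refine h.ind ?_ ?_
  · intro a ha haA
    refine ⟨[a], ⟨by simp, by simp, List.isChain_singleton a⟩, ⟨a, haA, rfl⟩, rfl, fun w => ?_⟩
    simp only [h.iterA ha haA, List.mem_singleton, exists_const]
    exact eq_comm
  · rintro v hv hvA ⟨p, ⟨hne, hnd, hch⟩, ⟨a, ha, hhd⟩, hlast, hmem⟩
    refine ⟨p ++ [v], ⟨by simp, ?_, ?_⟩, ⟨a, ha, ?_⟩, by simp, fun w => ?_⟩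
    · refine List.nodup_append.2 ⟨hnd, by simp, ?_⟩
      intro x hx y hy e
      rw [List.mem_singleton] at hy
      subst hy; subst e
      obtain ⟨n, hn⟩ := (hmem x).1 hx
      exact h.acyclic hv hvA n hn
    · refine List.isChain_append.2 ⟨hch, List.isChain_singleton v, ?_⟩
      intro x hx y hy
      rw [hlast] at hx
      simp only [Option.mem_some_iff, List.head?_cons] at hx hy
      subst hx; subst hy
      exact h.adj v hv hvA
    · rw [List.head?_append, hhd]; rfl
    · rw [List.mem_append, List.mem_singleton, hmem]
      constructor
      · rintro (⟨n, hn⟩ | rfl)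
        · exact ⟨n + 1, by rw [Function.iterate_succ_apply, hn]⟩
        · exact ⟨0, rfl⟩
      · rintro ⟨n, hn⟩
        cases n with
        | zero => exact Or.inr hn.symm
        | succ n => exact Or.inl ⟨n, by rwa [Function.iterate_succ_apply] at hn⟩

theorem head_or_pred {r : V → V → Prop} : ∀ {p : List V}, p.IsChain r → ∀ v ∈ p,
    p.head? = some v ∨ ∃ u, r u v
  | [], _, v, hv => by simp at hv
  | [x], _, v, hv => by
    rw [List.mem_singleton] at hv
    subst hv; exact Or.inl rfl
  | x :: y :: t, hc, v, hv => by
    rw [List.isChain_cons_cons] at hc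
    rcases List.mem_cons.1 hv with rfl | hv
    · exact Or.inl rfl
    · rcases head_or_pred hc.2 v hv with h | h
      · simp only [List.head?_cons, Option.some.injEq] at h
        subst h
        exact Or.inr ⟨x, hc.1⟩
      · exact Or.inr h

theorem last_or_succ {r : V → V → Prop} : ∀ {p : List V}, p.IsChain r → ∀ v ∈ p,
    p.getLast? = some v ∨ ∃ u, r v u
  | [], _, v, hv => by simp at hv
  | [x], _, v, hv => by
    rw [List.mem_singleton] at hv
    subst hv; exact Or.inl rfl
  | x :: y :: t, hc, v, hv => by
    rw [List.isChain_cons_cons] at hc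
    rcases List.mem_cons.1 hv with rfl | hv
    · exact Or.inr ⟨y, hc.1⟩
    · rw [List.getLast?_cons_cons]
      exact last_or_succ hc.2 v hv

/-- A path leaving a region meets its boundary. -/
theorem exists_mem_bd (Γ : Web V) (R : Set V) {y : V} (hy : y ∉ R) : ∀ {p : List V},
    p.IsChain Γ.Adj → ∀ x ∈ R ∪ Γ.bd R, p.head? = some x → p.getLast? = some y → ∃ s ∈ Γ.bd R, s ∈ p
  | [], _, x, _, h, _ => by simp at h
  | [z], _, x, hx, h, h' => by
    simp only [List.head?_cons, List.getLast?_singleton, Option.some.injEq] at h h'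
    subst h; subst h'
    exact ⟨z, hx.resolve_left hy, by simp⟩
  | z :: w :: t, hc, x, hx, h, h' => by
    rw [List.isChain_cons_cons] at hc
    simp only [List.head?_cons, Option.some.injEq] at h
    subst h
    rcases hx with hx | hx
    · obtain ⟨s, hs, hs'⟩ := exists_mem_bd Γ R hy hc.2 w (adj_sub Γ R hx hc.1) rfl
        (by rwa [List.getLast?_cons_cons] at h')
      exact ⟨s, hs, List.mem_cons_of_mem _ hs'⟩
    · exact ⟨z, hx, by simp⟩

/-- The Erdős–Menger property: there are disjoint `A`–`B` paths and a separating set (the boundary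
of `Rm Γ`) met by each of them in exactly one vertex, with every vertex of the separating set on
one of the paths. -/
theorem exists_orthogonal (Γ : Web V) : ∃ (S : Set V) (P : V → List V),
    (∀ s ∈ S, IsXYPath Γ.Adj Γ.A Γ.B (P s) ∧ s ∈ P s) ∧
    (∀ s ∈ S, ∀ t ∈ S, ∀ v, v ∈ P s → v ∈ P t → s = t) ∧
    ∀ p, IsXYPath Γ.Adj Γ.A Γ.B p → ∃ s ∈ S, s ∈ p := by
  classical
  obtain ⟨D, π, h⟩ := exists_Rm Γ
  obtain ⟨E, ρ, hE, hlink⟩ := exists_link (quot_Rm_unhind Γ)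
  obtain ⟨σ, hsys, hlk, hσ⟩ := h.extend hE
  have hP : ∀ s : V, ∃ p : List V, s ∈ Γ.bd Γ.Rm → (IsXYPath Γ.Adj Γ.A Γ.B p ∧ s ∈ p) ∧
      ∀ w ∈ p, root Γ.A σ w = root Γ.A σ s := by
    intro s
    by_cases hs : s ∈ Γ.bd Γ.Rm
    · obtain ⟨b, hb, hbB, hbs⟩ := hlink s hs
      obtain ⟨m, hm⟩ := hσ b hb s hs hbs
      obtain ⟨p, h1, h2, h3, h4⟩ := hsys.exists_list b (Or.inr hb)
      refine ⟨p, fun _ => ⟨⟨⟨h1, h2, b, hbB.1, h3⟩, (h4 s).2 ⟨m, hm⟩⟩, fun w hw => ?_⟩⟩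
      obtain ⟨n, rfl⟩ := (h4 w).1 hw
      rw [hsys.root_iter (Or.inr hb), ← hm, hsys.root_iter (Or.inr hb)]
    · exact ⟨[], fun h => absurd h hs⟩
  choose P hP using hP
  refine ⟨Γ.bd Γ.Rm, P, fun s hs => (hP s hs).1, fun s hs t ht v hvs hvt => ?_, ?_⟩
  · refine hlk.bd_root_inj hs ht ?_
    rw [← (hP s hs).2 v hvs, (hP t ht).2 v hvt]
  · rintro p ⟨⟨-, -, hc⟩, ⟨a, ha, hhd⟩, b, hb, hlast⟩
    exact exists_mem_bd Γ Γ.Rm (fun hR => h.avoid b hR hb) hc a (A_sub Γ Γ.Rm ha) hhd hlast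

/-- The paths of an orthogonal path system form a strongly maximal warp: a path of `U` outside it is
mapped to the path of the system through a vertex of `S` on it. -/
theorem exists_strongly_maximal (Γ : Web V) : ∃ Y : Set (List V), Γ.IsABWarp Y ∧
    ∀ U : Set (List V), Γ.IsABWarp U → #↥(U \ Y) ≤ #↥(Y \ U) := by
  obtain ⟨S, P, hP, hdisj, hsep⟩ := exists_orthogonal Γ
  refine ⟨P '' S, ⟨?_, ?_, ?_⟩, ?_⟩
  · rintro _ ⟨s, hs, rfl⟩
    exact (hP s hs).1
  · rintro _ ⟨s, hs, rfl⟩ v hv (hA | hB)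
    · refine (head_or_pred (hP s hs).1.1.2.2 v hv).imp id ?_
      rintro ⟨u, hu⟩
      exact absurd hA (Γ.not_into_A u v hu)
    · refine Or.inr ((last_or_succ (hP s hs).1.1.2.2 v hv).resolve_right ?_)
      rintro ⟨u, hu⟩
      exact Γ.not_from_B v u hu hB
  · rintro _ ⟨s, hs, rfl⟩ _ ⟨t, ht, rfl⟩ hne v hvs hvt
    exact hne (congrArg P (hdisj s hs t ht v hvs hvt))
  · intro U hU
    have hex : ∀ p : ↥(U \ P '' S), ∃ s ∈ S, s ∈ p.1 := fun p => hsep p.1 (hU.1 p.1 p.2.1)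
    choose s hs hsp using hex
    -- The path of `Y` through `s p ∈ p` is not in `U`, since `p` is the only path of `U` through
    -- `s p` and does not belong to `Y`.
    have hnot : ∀ p, P (s p) ∉ U := by
      intro p hmem
      have hne : P (s p) ≠ p.1 := fun e => p.2.2 ⟨s p, hs p, e⟩
      exact hU.2.2 _ hmem _ p.2.1 hne (s p) (hP _ (hs p)).2 (hsp p)
    refine mk_le_of_injective (f := fun p => (⟨P (s p), ⟨s p, hs p, rfl⟩, hnot p⟩ : ↥(P '' S \ U))) ?_
    intro p q e
    have e' : P (s p) = P (s q) := congrArg Subtype.val e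
    have hsq := (hP _ (hs q)).2
    have hst : s p = s q := hdisj _ (hs p) _ (hs q) (s q) (e' ▸ hsq) hsq
    by_contra hne
    exact hU.2.2 p.1 p.2.1 q.1 q.2.1 (fun h => hne (Subtype.ext h)) (s p) (hsp p) (hst ▸ hsp q)

end Web

end

end

/-- In every web there exists a strongly maximal `A`–`B`-warp. -/
theorem strongly_maximal_warp (V : Type*) (Γ : Web V) :
    ∃ Y : Set (List V), Γ.IsABWarp Y ∧
      ∀ U : Set (List V), Γ.IsABWarp U →
        Cardinal.mk ↥(U \ Y) ≤ Cardinal.mk ↥(Y \ U) := by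
  exact Γ.exists_strongly_maximal

end ErdosMenger
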